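/- arXiv:1911.04777 — 2 statements merged into one kernel-verified Lean document; each statement's English description precedes it below -/
import Mathlib

section
/- Let p ≡ −1 (mod 16) be a prime, K = ℚ(⁴√p), and L = K(√2) = ℚ(⁴√p, √2). Then 4 divides the class number h_K of K if and only if 2 divides the class number h_L of L. -/
open NumberField IntermediateField

/-!
Let `s(F)` be the order of the group of `x ∈ Fˣ` generating the square of an ideal, modulo squares;
it equals `2 ^ (rank of the units + 1) · |Cl(F)[2]|`. In each step `M / F` of the tower
`ℚ ⊂ ℚ(√p) ⊂ K` only the prime above `2` and the new square root ramify, so an element of this group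
for `M` whose norm is a square comes, up to squares, from the group for `F` enlarged by one
generator, while `-1` is not a norm up to squares. Hence `s(M) ∣ s(F)²`, so `s(K) ∣ 2⁴`, and as the
units of `K` have rank two, `|Cl(K)[2]| ∣ 2`.

Because `p ≡ -1 (mod 16)`, the extension `L / K` is unramified at all places. Hence every invariant
ideal of `L` comes from `K`, and the classes of `K` dying in `L`, being killed by squaring, lie in
`Cl(K)[2]`. If `Cl(L)` has odd order, it follows that `4 ∤ h_K`. Conversely, by the Herbrand
quotient of the units of `L`, the number of classes of `K` dying in `L` is twice the index of the
norms in the units of `K`. If all units are norms, every invariant class of `L` contains an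
invariant ideal, so an invariant class of order two comes from `K`; otherwise this number, a power
of two, is already divisible by `4`.
-/

section FiniteIndex

open AddSubgroup

variable {B : Type*} [AddCommGroup B] {n : ℕ}

theorem nsmul_mem_torsion_iff (hn : n ≠ 0) {x : B} :
    n • x ∈ Submodule.torsion ℤ B ↔ x ∈ Submodule.torsion ℤ B := by
  have hn' : (n : ℤ) ∈ nonZeroDivisors ℤ := by simpa using hn
  refine ⟨fun ⟨a, ha⟩ => ⟨a * ⟨n, hn'⟩, ?_⟩, fun h => nsmul_mem h n⟩
  rw [mul_smul]
  simpa [Submonoid.smul_def] using ha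

theorem card_ker_nsmulAddMonoidHom_addSubgroup (H : AddSubgroup B) :
    Nat.card (nsmulAddMonoidHom n : H →+ H).ker =
      Nat.card (H ⊓ (nsmulAddMonoidHom n).ker : AddSubgroup B) := by
  have hmap : (nsmulAddMonoidHom n : H →+ H).ker.map H.subtype = H ⊓ (nsmulAddMonoidHom n).ker := by
    ext x
    constructor
    · rintro ⟨y, hy, rfl⟩
      exact ⟨y.2, congrArg Subtype.val hy⟩
    · rintro ⟨hxH, hx⟩
      exact ⟨⟨x, hxH⟩, Subtype.ext hx, rfl⟩
  rw [← hmap]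
  exact Nat.card_congr
    ((nsmulAddMonoidHom n : H →+ H).ker.equivMapOfInjective _ H.subtype_injective).toEquiv

variable [Module.Finite ℤ B]

theorem index_range_nsmul_sup_torsion :
    ((nsmulAddMonoidHom n : B →+ B).range ⊔ (Submodule.torsion ℤ B).toAddSubgroup).index =
      n ^ Module.finrank ℤ B := by
  let q := (Submodule.torsion ℤ B).mkQ.toAddMonoidHom
  have hq : Function.Surjective q := Submodule.mkQ_surjective _
  have hker : q.ker = (Submodule.torsion ℤ B).toAddSubgroup := by
    ext x; simp [q, AddMonoidHom.mem_ker]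
  have hmap : (nsmulAddMonoidHom n : B →+ B).range.map q = (nsmulAddMonoidHom n).range := by
    rw [AddMonoidHom.map_range, show q.comp (nsmulAddMonoidHom n) = (nsmulAddMonoidHom n).comp q by
      ext; simp, AddMonoidHom.range_comp, AddMonoidHom.range_eq_top.2 hq,
      AddMonoidHom.range_eq_map]
  have h := (nsmulAddMonoidHom n : B →+ B).range.index_map q
  rw [hker, hmap, AddMonoidHom.range_eq_top.2 hq, index_top, mul_one, index_range_nsmul,
    finrank_quotient_eq_of_le_torsion le_rfl] at h
  exact h.symm

theorem relIndex_range_nsmul_torsion (hn : n ≠ 0) :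
    (nsmulAddMonoidHom n : B →+ B).range.relIndex (Submodule.torsion ℤ B).toAddSubgroup =
      Nat.card (nsmulAddMonoidHom n : B →+ B).ker := by
  set T := (Submodule.torsion ℤ B).toAddSubgroup
  have : Finite T := Module.finite_of_fg_torsion (Submodule.torsion ℤ B) Submodule.torsion_isTorsion
  have hrange : (nsmulAddMonoidHom n : B →+ B).range ⊓ T = T.map (nsmulAddMonoidHom n) := by
    ext x
    constructor
    · rintro ⟨⟨y, rfl⟩, hy⟩
      exact ⟨y, (nsmul_mem_torsion_iff hn).1 hy, rfl⟩
    · rintro ⟨y, hy, rfl⟩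
      exact ⟨⟨y, rfl⟩, (nsmul_mem_torsion_iff hn).2 hy⟩
  have hker : (nsmulAddMonoidHom n : B →+ B).ker ≤ T := fun x (hx : n • x = 0) =>
    (nsmul_mem_torsion_iff hn).1 (hx ▸ zero_mem _)
  rw [← inf_relIndex_right, hrange, relIndex, addSubgroupOf_map_nsmulAddMonoidHom_eq_range,
    index_range, card_ker_nsmulAddMonoidHom_addSubgroup, inf_eq_right.2 hker]

theorem index_range_nsmul_of_finite (hn : n ≠ 0) :
    (nsmulAddMonoidHom n : B →+ B).range.index =
      n ^ Module.finrank ℤ B * Nat.card (nsmulAddMonoidHom n : B →+ B).ker := by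
  rw [← relIndex_mul_index le_sup_left, index_range_nsmul_sup_torsion, sup_comm, relIndex_sup_right,
    relIndex_range_nsmul_torsion hn, mul_comm]

theorem finrank_eq_finrank_ker_add_of_smul_mem_range {C : Type*} [AddCommGroup C]
    [Module.Finite ℤ C] (g : B →ₗ[ℤ] C) {a : ℤ} (ha : a ≠ 0) (hg : ∀ c, a • c ∈ LinearMap.range g) :
    Module.finrank ℤ B = Module.finrank ℤ (LinearMap.ker g) + Module.finrank ℤ C := by
  have hcoker : Module.finrank ℤ (C ⧸ LinearMap.range g) = 0 := by
    refine Module.finrank_eq_zero_iff.2 fun x => ⟨a, ha, ?_⟩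
    obtain ⟨c, rfl⟩ := Submodule.Quotient.mk_surjective _ x
    rw [← Submodule.Quotient.mk_smul, Submodule.Quotient.mk_eq_zero]
    exact hg c
  have h := (LinearMap.range g).finrank_quotient_add_finrank
  rw [hcoker, zero_add] at h
  rw [← h, ← g.quotKerEquivRange.finrank_eq, add_comm,
    Submodule.finrank_quotient_add_finrank]

theorem relIndex_map_powMonoidHom {X : Type*} [CommGroup X] (H : Subgroup X)
    [Module.Finite ℤ (Additive H)] {n : ℕ} (hn : n ≠ 0) :
    (H.map (powMonoidHom n)).relIndex H =
      n ^ Module.finrank ℤ (Additive H) * Nat.card (H ⊓ (powMonoidHom n).ker : Subgroup X) := by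
  rw [Subgroup.relIndex, Subgroup.subgroupOf_map_powMonoidHom_eq_range]
  exact (index_range_nsmul_of_finite (B := Additive H) hn).trans
    (congrArg _ (card_ker_nsmulAddMonoidHom_addSubgroup (Subgroup.toAddSubgroup H)))

end FiniteIndex

section Involution

variable {X : Type*} [CommGroup X]

/-- The norm `x ↦ x * s x` of an endomorphism `s`, thought of as an involution. -/
def mulConj (s : X →* X) : X →* X := MonoidHom.id X * s

/-- The map `x ↦ x / s x`; by Hilbert 90 its image is the kernel of the norm in the
multiplicative group of a quadratic extension with conjugation `s`. -/
def divConj (s : X →* X) : X →* X := MonoidHom.id X / s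

variable {s : X →* X} {E : Subgroup X}

theorem mulConj_apply (x : X) : mulConj s x = x * s x := rfl

theorem divConj_apply (x : X) : divConj s x = x / s x := rfl

theorem mem_ker_mulConj {x : X} : x ∈ (mulConj s).ker ↔ s x = x⁻¹ := by
  rw [MonoidHom.mem_ker, mulConj_apply, mul_eq_one_iff_inv_eq, eq_comm]

theorem mem_ker_divConj {x : X} : x ∈ (divConj s).ker ↔ s x = x := by
  rw [MonoidHom.mem_ker, divConj_apply, div_eq_one, eq_comm]

theorem map_mulConj_of_le_ker_divConj {H : Subgroup X} (hH : H ≤ (divConj s).ker) :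
    H.map (mulConj s) = H.map (powMonoidHom 2) :=
  SetLike.coe_injective <| Set.image_congr fun x hx => by
    rw [mulConj_apply, mem_ker_divConj.1 (hH hx), powMonoidHom_apply, pow_two]

theorem map_divConj_of_le_ker_mulConj {H : Subgroup X} (hH : H ≤ (mulConj s).ker) :
    H.map (divConj s) = H.map (powMonoidHom 2) :=
  SetLike.coe_injective <| Set.image_congr fun x hx => by
    rw [divConj_apply, mem_ker_mulConj.1 (hH hx), powMonoidHom_apply, pow_two, div_inv_eq_mul]

theorem inf_ker_mulConj_inf_ker_powMonoidHom_two :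
    E ⊓ (mulConj s).ker ⊓ (powMonoidHom 2).ker = E ⊓ (divConj s).ker ⊓ (powMonoidHom 2).ker := by
  ext x
  simp only [Subgroup.mem_inf, mem_ker_mulConj, mem_ker_divConj]
  refine and_congr_left fun hx => and_congr_right fun _ => ?_
  have hx : x * x = 1 := (pow_two x).symm.trans hx
  rw [inv_eq_of_mul_eq_one_left hx]

theorem mulConj_mem_ker_divConj (hs : Function.Involutive s) (x : X) :
    mulConj s x ∈ (divConj s).ker := by
  rw [mem_ker_divConj, mulConj_apply, map_mul, hs, mul_comm]

theorem divConj_mem_ker_mulConj (hs : Function.Involutive s) (x : X) :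
    divConj s x ∈ (mulConj s).ker := by
  rw [mem_ker_mulConj, divConj_apply, map_div, hs, inv_div]

theorem map_mulConj_le (hs : Function.Involutive s) (hE : ∀ x ∈ E, s x ∈ E) :
    E.map (mulConj s) ≤ E ⊓ (divConj s).ker := by
  rintro _ ⟨x, hx, rfl⟩
  exact ⟨E.mul_mem hx (hE x hx), mulConj_mem_ker_divConj hs x⟩

theorem map_divConj_le (hs : Function.Involutive s) (hE : ∀ x ∈ E, s x ∈ E) :
    E.map (divConj s) ≤ E ⊓ (mulConj s).ker := by
  rintro _ ⟨x, hx, rfl⟩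
  exact ⟨E.div_mem hx (hE x hx), divConj_mem_ker_mulConj hs x⟩

theorem relIndex_map_map_of_le {f : X →* X} {H : Subgroup X} (hH : H ≤ E) :
    (H.map f).relIndex (E.map f) = (H ⊔ E ⊓ f.ker).relIndex E := by
  rw [Subgroup.relIndex_map_map, ← sup_eq_left.2 hH, sup_assoc, Subgroup.relIndex_sup_right,
    sup_eq_left.2 hH, ← Subgroup.inf_relIndex_right, sup_inf_assoc_of_le _ hH, inf_comm]

theorem finite_additive_of_le [Module.Finite ℤ (Additive E)] {H : Subgroup X} (hH : H ≤ E) :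
    Module.Finite ℤ (Additive H) :=
  Module.Finite.of_injective (MonoidHom.toAdditive (Subgroup.inclusion hH)).toIntLinearMap
    (Subgroup.inclusion_injective hH)

theorem finite_inf_ker_powMonoidHom (H : Subgroup X) [Module.Finite ℤ (Additive H)] {n : ℕ}
    (hn : n ≠ 0) : Finite (H ⊓ (powMonoidHom n).ker : Subgroup X) := by
  have := finite_additive_of_le (inf_le_left : H ⊓ (powMonoidHom n).ker ≤ H)
  have : Group.FG (H ⊓ (powMonoidHom n).ker : Subgroup X) :=
    GroupFG.iff_add_fg.2 (Module.Finite.iff_addGroup_fg.1 inferInstance)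
  exact CommGroup.finite_of_fg_isMulTorsion _ fun x => isOfFinOrder_iff_pow_eq_one.2
    ⟨n, hn.bot_lt, Subtype.ext x.2.2⟩

variable [Module.Finite ℤ (Additive E)]

theorem relIndex_sup_mul_relIndex_map_mulConj (hs : Function.Involutive s) (hE : ∀ x ∈ E, s x ∈ E) :
    (E ⊓ (divConj s).ker ⊔ E ⊓ (mulConj s).ker).relIndex E *
        (E.map (mulConj s)).relIndex (E ⊓ (divConj s).ker) =
      2 ^ Module.finrank ℤ (Additive (E ⊓ (divConj s).ker : Subgroup X)) *
        Nat.card (E ⊓ (divConj s).ker ⊓ (powMonoidHom 2).ker : Subgroup X) := by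
  have := finite_additive_of_le (inf_le_left : E ⊓ (divConj s).ker ≤ E)
  rw [← relIndex_map_map_of_le inf_le_left,
    Subgroup.relIndex_mul_relIndex _ _ _ (Subgroup.map_mono inf_le_left) (map_mulConj_le hs hE),
    map_mulConj_of_le_ker_divConj inf_le_right, relIndex_map_powMonoidHom _ two_ne_zero]

theorem relIndex_sup_mul_relIndex_map_divConj (hs : Function.Involutive s) (hE : ∀ x ∈ E, s x ∈ E) :
    (E ⊓ (mulConj s).ker ⊔ E ⊓ (divConj s).ker).relIndex E *
        (E.map (divConj s)).relIndex (E ⊓ (mulConj s).ker) =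
      2 ^ Module.finrank ℤ (Additive (E ⊓ (mulConj s).ker : Subgroup X)) *
        Nat.card (E ⊓ (mulConj s).ker ⊓ (powMonoidHom 2).ker : Subgroup X) := by
  have := finite_additive_of_le (inf_le_left : E ⊓ (mulConj s).ker ≤ E)
  rw [← relIndex_map_map_of_le inf_le_left,
    Subgroup.relIndex_mul_relIndex _ _ _ (Subgroup.map_mono inf_le_left) (map_divConj_le hs hE),
    map_divConj_of_le_ker_mulConj inf_le_right, relIndex_map_powMonoidHom _ two_ne_zero]

theorem finrank_eq_finrank_inf_ker_mulConj_add (hs : Function.Involutive s)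
    (hE : ∀ x ∈ E, s x ∈ E) :
    Module.finrank ℤ (Additive E) =
      Module.finrank ℤ (Additive (E ⊓ (mulConj s).ker : Subgroup X)) +
        Module.finrank ℤ (Additive (E ⊓ (divConj s).ker : Subgroup X)) := by
  have := finite_additive_of_le (inf_le_left : E ⊓ (divConj s).ker ≤ E)
  let g : E →* (E ⊓ (divConj s).ker : Subgroup X) :=
    ((mulConj s).comp E.subtype).codRestrict _ fun x => map_mulConj_le hs hE ⟨x, x.2, rfl⟩
  have hg : g.ker.map E.subtype = E ⊓ (mulConj s).ker := by
    ext x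
    constructor
    · rintro ⟨y, hy, rfl⟩
      exact ⟨y.2, congrArg Subtype.val hy⟩
    · rintro ⟨hxE, hx⟩
      exact ⟨⟨x, hxE⟩, Subtype.ext hx, rfl⟩
  have h := finrank_eq_finrank_ker_add_of_smul_mem_range (MonoidHom.toAdditive g).toIntLinearMap
    two_ne_zero fun c => ⟨Additive.ofMul ⟨c.toMul.1, c.toMul.2.1⟩, Additive.toMul.injective <|
      Subtype.ext <| (congrArg (c.toMul.1 * ·) (mem_ker_divConj.1 c.toMul.2.2)).trans
        (zpow_two c.toMul.1).symm⟩
  rw [h, ← hg]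
  congr 1
  exact LinearEquiv.finrank_eq (AddEquiv.toIntLinearEquiv (MulEquiv.toAdditive
    (g.ker.equivMapOfInjective _ E.subtype_injective)))

theorem relIndex_map_mulConj_mul_two_pow_finrank (hs : Function.Involutive s)
    (hE : ∀ x ∈ E, s x ∈ E) :
    (E.map (mulConj s)).relIndex (E ⊓ (divConj s).ker) *
        2 ^ Module.finrank ℤ (Additive (E ⊓ (mulConj s).ker : Subgroup X)) =
      (E.map (divConj s)).relIndex (E ⊓ (mulConj s).ker) *
        2 ^ Module.finrank ℤ (Additive (E ⊓ (divConj s).ker : Subgroup X)) := by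
  have := finite_additive_of_le (inf_le_left : E ⊓ (divConj s).ker ≤ E)
  have := finite_inf_ker_powMonoidHom (E ⊓ (divConj s).ker) two_ne_zero
  have hinv := relIndex_sup_mul_relIndex_map_mulConj hs hE
  have hanti := relIndex_sup_mul_relIndex_map_divConj hs hE
  rw [inf_ker_mulConj_inf_ker_powMonoidHom_two, sup_comm] at hanti
  set W := E ⊓ (divConj s).ker ⊔ E ⊓ (mulConj s).ker
  set t := Nat.card (E ⊓ (divConj s).ker ⊓ (powMonoidHom 2).ker : Subgroup X)
  have ht : t ≠ 0 := Nat.card_pos.ne'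
  have hW : W.relIndex E ≠ 0 := left_ne_zero_of_mul (hinv ▸ mul_ne_zero (by positivity) ht)
  apply mul_left_cancel₀ hW
  apply mul_left_cancel₀ ht
  linear_combination
    t * 2 ^ Module.finrank ℤ (Additive (E ⊓ (mulConj s).ker : Subgroup X)) * hinv -
      t * 2 ^ Module.finrank ℤ (Additive (E ⊓ (divConj s).ker : Subgroup X)) * hanti

end Involution

section Selmer

variable {X I : Type*} [CommGroup X] [CommGroup I] (f : X →* I) (n : ℕ)

/-- The `n`-Selmer group of `f`: the elements whose image is an `n`-th power. For the divisor map
of a number field these are the elements generating the `n`-th power of an ideal. -/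
def selmer : Subgroup X := (powMonoidHom n).range.comap f

variable {f n}

theorem mem_selmer {x : X} : x ∈ selmer f n ↔ ∃ a, a ^ n = f x := Iff.rfl

theorem range_powMonoidHom_le_selmer : (powMonoidHom n).range ≤ selmer f n := by
  rintro _ ⟨x, rfl⟩
  exact ⟨f x, (map_pow f x n).symm⟩

theorem ker_le_selmer : f.ker ≤ selmer f n :=
  fun _ hx => ⟨1, (one_pow n).trans (MonoidHom.mem_ker.1 hx).symm⟩

theorem card_ker_powMonoidHom_quotient (J : Subgroup I) :
    Nat.card (powMonoidHom n : I ⧸ J →* I ⧸ J).ker =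
      J.relIndex (J.comap (powMonoidHom n)) := by
  have hmap : (J.comap (powMonoidHom n)).map (QuotientGroup.mk' J) = (powMonoidHom n).ker := by
    ext c
    constructor
    · rintro ⟨a, ha, rfl⟩
      exact (QuotientGroup.eq_one_iff (a ^ n)).2 ha
    · obtain ⟨a, rfl⟩ := QuotientGroup.mk'_surjective J c
      exact fun ha => ⟨a, (QuotientGroup.eq_one_iff (a ^ n)).1 ha, rfl⟩
  rw [← hmap, ← Subgroup.relIndex_ker, QuotientGroup.ker_mk']

theorem relIndex_range_powMonoidHom_ker (hn : Function.Injective (powMonoidHom n : I →* I)) :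
    (powMonoidHom n).range.relIndex f.ker = (f.ker.map (powMonoidHom n)).relIndex f.ker := by
  rw [← Subgroup.inf_relIndex_right]
  congr 1
  ext x
  constructor
  · rintro ⟨⟨y, rfl⟩, hy⟩
    have hy : f y ^ n = 1 := (map_pow f y n).symm.trans hy
    exact ⟨y, hn (hy.trans (one_pow n).symm), rfl⟩
  · rintro ⟨y, hy, rfl⟩
    exact ⟨⟨y, rfl⟩, f.ker.pow_mem hy n⟩

theorem relIndex_range_powMonoidHom_sup_ker_selmer
    (hn : Function.Injective (powMonoidHom n : I →* I)) :
    ((powMonoidHom n).range ⊔ f.ker).relIndex (selmer f n) =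
      Nat.card (powMonoidHom n : I ⧸ f.range →* I ⧸ f.range).ker := by
  have hmap : (powMonoidHom n : X →* X).range.map f = f.range.map (powMonoidHom n) := by
    simp only [MonoidHom.map_range]
    congr 1
    ext
    simp
  calc
    _ = ((powMonoidHom n).range.map f).relIndex ((selmer f n).map f) := by
      rw [Subgroup.relIndex_map_map, sup_eq_left.2 ker_le_selmer]
    _ = (f.range.map (powMonoidHom n)).relIndex
          ((f.range.comap (powMonoidHom n)).map (powMonoidHom n)) := by
      rw [hmap, selmer, Subgroup.map_comap_eq, Subgroup.map_comap_eq, inf_comm]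
    _ = _ := by
      rw [Subgroup.relIndex_map_map_of_injective _ _ hn, card_ker_powMonoidHom_quotient]

theorem relIndex_range_powMonoidHom_selmer [Module.Finite ℤ (Additive f.ker)] (hn0 : n ≠ 0)
    (hn : Function.Injective (powMonoidHom n : I →* I)) :
    (powMonoidHom n).range.relIndex (selmer f n) =
      n ^ Module.finrank ℤ (Additive f.ker) * Nat.card (f.ker ⊓ (powMonoidHom n).ker : Subgroup X) *
        Nat.card (powMonoidHom n : I ⧸ f.range →* I ⧸ f.range).ker := by
  rw [← Subgroup.relIndex_mul_relIndex _ _ _ le_sup_left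
    (sup_le range_powMonoidHom_le_selmer ker_le_selmer), Subgroup.relIndex_sup_left,
    relIndex_range_powMonoidHom_ker hn, relIndex_map_powMonoidHom _ hn0,
    relIndex_range_powMonoidHom_sup_ker_selmer hn]

theorem relIndex_dvd_of_le_right (H : Subgroup X) {K L : Subgroup X} (h : K ≤ L) :
    H.relIndex K ∣ H.relIndex L := by
  rw [← Subgroup.relIndex_sup_left K H, ← Subgroup.relIndex_sup_left L H]
  exact Dvd.intro _ (Subgroup.relIndex_mul_relIndex _ _ _ le_sup_left (sup_le_sup_left h H))

theorem relIndex_sup_zpowers_dvd (H : Subgroup X) {x : X} (hx : x ^ n ∈ H) :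
    H.relIndex (H ⊔ Subgroup.zpowers x) ∣ n := by
  rw [Subgroup.relIndex_sup_left, ← QuotientGroup.ker_mk' H, Subgroup.relIndex_ker,
    MonoidHom.map_zpowers, Nat.card_zpowers]
  exact orderOf_dvd_of_pow_eq_one ((QuotientGroup.eq_one_iff (x ^ n)).2 hx)

end Selmer

section Datum

theorem zpow_pow_comm {G : Type*} [Group G] (x : G) (k : ℤ) (n : ℕ) :
    (x ^ k) ^ n = (x ^ n) ^ k := by
  rw [← zpow_natCast, ← zpow_natCast, zpow_comm]

theorem two_dvd_card_ker_divConj {G : Type*} [CommGroup G] [Finite G] {s : G →* G}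
    (hs : Function.Involutive s) (h : 2 ∣ Nat.card G) : 2 ∣ Nat.card (divConj s).ker := by
  have : Fact (Nat.Prime 2) := ⟨Nat.prime_two⟩
  obtain ⟨c, hc⟩ := exists_prime_orderOf_dvd_card' 2 h
  have hcc : c ^ 2 = 1 := (orderOf_eq_prime_iff.1 hc).1
  suffices ∃ d ∈ (divConj s).ker, orderOf d = 2 by
    obtain ⟨d, hd, hd2⟩ := this
    exact hd2 ▸ Subgroup.orderOf_dvd_natCard _ hd
  by_cases hsc : s c = c
  · exact ⟨c, mem_ker_divConj.2 hsc, hc⟩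
  · refine ⟨mulConj s c, mulConj_mem_ker_divConj hs c, orderOf_eq_prime ?_ fun h => hsc ?_⟩
    · rw [← map_pow, hcc, map_one]
    · rw [mem_ker_mulConj.1 h, inv_eq_of_mul_eq_one_left ((pow_two c).symm.trans hcc)]

/-- The formal properties of elements and ideals in a quadratic extension `M / F`: `f` and `g` are
the maps sending an element of `Fˣ`, resp. `Mˣ`, to the ideal it generates, so that the class groups
are `I ⧸ f.range` and `J ⧸ g.range` and the unit groups are `f.ker` and `g.ker`. -/
structure QuadraticIdealDatum {X I Y J : Type*} [CommGroup X] [CommGroup I] [CommGroup Y]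
    [CommGroup J] (f : X →* I) (g : Y →* J) where
  /-- The inclusion of elements. -/
  incl : X →* Y
  /-- The extension of ideals. -/
  extend : I →* J
  /-- The conjugation of elements. -/
  conj : Y →* Y
  /-- The conjugation of ideals. -/
  conjIdeal : J →* J
  /-- The norm of elements. -/
  norm : Y →* X
  map_incl (x : X) : g (incl x) = extend (f x)
  map_conj (y : Y) : g (conj y) = conjIdeal (g y)
  incl_norm (y : Y) : incl (norm y) = mulConj conj y
  incl_injective : Function.Injective incl
  extend_injective : Function.Injective extend
  conj_involutive : Function.Involutive conj
  conjIdeal_involutive : Function.Involutive conjIdeal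
  ker_divConj : (divConj conj).ker = incl.range
  hilbert90 : (mulConj conj).ker ≤ (divConj conj).range
  conjIdeal_extend (a : I) : conjIdeal (extend a) = extend a
  range_mulConj_conjIdeal_le : (mulConj conjIdeal).range ≤ extend.range
  pow_two_injective : Function.Injective (powMonoidHom 2 : J →* J)

namespace QuadraticIdealDatum

variable {X I Y J : Type*} [CommGroup X] [CommGroup I] [CommGroup Y] [CommGroup J]
  {f : X →* I} {g : Y →* J} (D : QuadraticIdealDatum f g)

theorem conj_incl (x : X) : D.conj (D.incl x) = D.incl x :=
  mem_ker_divConj.1 (D.ker_divConj ▸ ⟨x, rfl⟩)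

theorem map_mulConj (y : Y) : g (mulConj D.conj y) = mulConj D.conjIdeal (g y) := by
  simp only [mulConj_apply, map_mul, D.map_conj]

theorem map_divConj (y : Y) : g (divConj D.conj y) = divConj D.conjIdeal (g y) := by
  simp only [divConj_apply, map_div, D.map_conj]

theorem norm_mem_selmer {y : Y} (hy : y ∈ selmer g 2) : D.norm y ∈ selmer f 2 := by
  obtain ⟨a, ha⟩ := mem_selmer.1 hy
  obtain ⟨b, hb⟩ := D.range_mulConj_conjIdeal_le ⟨a, rfl⟩
  refine mem_selmer.2 ⟨b, D.extend_injective ?_⟩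
  rw [map_pow, hb, ← map_pow, ha, ← D.map_incl, D.incl_norm, D.map_mulConj]

/-- A Selmer element whose norm is a square descends to the base field modulo squares, at the price
of an ideal that is invariant but need not come from the base. -/
theorem exists_eq_pow_two_mul_incl {y : Y} (hy : y ∈ selmer g 2) {c : X}
    (hc : D.norm y = c ^ 2) :
    ∃ z x, y = z ^ 2 * D.incl x ∧ ∃ a, D.conjIdeal a = a ∧ a ^ 2 = D.extend (f x) := by
  obtain ⟨z, hz⟩ : y / D.incl c ∈ (divConj D.conj).range := D.hilbert90 <| by
    rw [MonoidHom.mem_ker, map_div, ← D.incl_norm, hc, mulConj_apply, D.conj_incl, map_pow, pow_two,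
      div_self']
  have hyz : y = z ^ 2 * D.incl (c / D.norm z) := by
    rw [eq_mul_of_div_eq hz.symm, divConj_apply, map_div, D.incl_norm, mulConj_apply,
      pow_two, ← mul_div_assoc, mul_assoc, mul_div_mul_left_eq_div, div_mul_eq_mul_div]
  obtain ⟨b, hb⟩ := mem_selmer.1 hy
  have hsq : (b / g z) ^ 2 = D.extend (f (c / D.norm z)) := by
    rw [← D.map_incl, div_pow, hb, hyz, map_mul, map_pow, mul_div_cancel_left]
  refine ⟨z, c / D.norm z, hyz, b / g z, D.pow_two_injective ?_, hsq⟩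
  simp only [powMonoidHom_apply]
  rw [← map_pow, hsq, D.conjIdeal_extend]

theorem mem_sup_map_incl {P : J} {θ : Y} {r τ : X}
    (hinv : (divConj D.conjIdeal).ker ≤
      D.extend.range ⊔ Subgroup.zpowers P ⊔ Subgroup.zpowers (g θ))
    (hP : P ^ 2 = D.extend (f τ)) (hθ : θ ^ 2 = D.incl r) {y : Y} (hy : y ∈ selmer g 2)
    (hnorm : D.norm y ∈ (powMonoidHom 2).range) :
    y ∈ (powMonoidHom 2).range ⊔ (selmer f 2 ⊔ Subgroup.zpowers τ).map D.incl := by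
  obtain ⟨c, hc⟩ := hnorm
  obtain ⟨z, x, rfl, a, ha, hax⟩ := D.exists_eq_pow_two_mul_incl hy hc.symm
  obtain ⟨_, ⟨_, ⟨b, rfl⟩, _, ⟨k, rfl⟩, rfl⟩, _, ⟨l, rfl⟩, rfl⟩ := by
    simpa only [Subgroup.mem_sup] using hinv (mem_ker_divConj.2 ha)
  have hgθ : g θ ^ 2 = D.extend (f r) := by rw [← map_pow, hθ, D.map_incl]
  have hx : f x = b ^ 2 * (f τ ^ k * f r ^ l) := D.extend_injective <| by
    rw [← hax, mul_pow, mul_pow, zpow_pow_comm, zpow_pow_comm, hP, hgθ]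
    simp only [map_mul, map_pow, map_zpow, mul_assoc]
  have hx' : x / (τ ^ k * r ^ l) ∈ selmer f 2 := mem_selmer.2 ⟨b, by
    rw [map_div, hx, map_mul, map_zpow, map_zpow, mul_div_cancel_right]⟩
  have hy : z ^ 2 * D.incl x = (z * θ ^ l) ^ 2 * D.incl (x / (τ ^ k * r ^ l) * τ ^ k) := by
    rw [mul_pow, zpow_pow_comm, hθ, ← map_zpow, mul_assoc, ← map_mul, div_mul_eq_mul_div,
      mul_comm (τ ^ k), mul_div_mul_right_eq_div, mul_div_cancel]
  exact hy ▸ Subgroup.mul_mem_sup ⟨_, rfl⟩ ⟨_, Subgroup.mul_mem_sup hx' ⟨k, rfl⟩, rfl⟩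

theorem two_mul_relIndex_map_norm_dvd {u : X} (hu : u ∈ selmer f 2)
    (hnorm : ∀ y c, D.norm y ≠ u * c ^ 2) :
    2 * (powMonoidHom 2).range.relIndex ((selmer g 2).map D.norm) ∣
      (powMonoidHom 2).range.relIndex (selmer f 2) := by
  set H := (powMonoidHom 2).range ⊔ (selmer g 2).map D.norm
  have hle : H ≤ selmer f 2 := sup_le range_powMonoidHom_le_selmer <|
    Subgroup.map_le_iff_le_comap.2 fun _ => D.norm_mem_selmer
  have huH : u ∉ H := fun h => by
    obtain ⟨_, ⟨c, rfl⟩, _, ⟨y, -, rfl⟩, h⟩ := Subgroup.mem_sup.1 h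
    refine hnorm y c⁻¹ ?_
    rw [← h, powMonoidHom_apply, inv_pow, mul_right_comm, mul_inv_cancel, one_mul]
  have hindex : H.relIndex (H ⊔ Subgroup.zpowers u) = 2 := by
    refine ((Nat.dvd_prime Nat.prime_two).1 <| relIndex_sup_zpowers_dvd H <|
      Subgroup.mem_sup_left ⟨u, rfl⟩).resolve_left fun h => huH ?_
    exact Subgroup.relIndex_eq_one.1 h (Subgroup.mem_sup_right (Subgroup.mem_zpowers u))
  calc
    _ = (powMonoidHom 2).range.relIndex H * H.relIndex (H ⊔ Subgroup.zpowers u) := by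
      rw [Subgroup.relIndex_sup_left, hindex, mul_comm]
    _ = (powMonoidHom 2).range.relIndex (H ⊔ Subgroup.zpowers u) :=
      Subgroup.relIndex_mul_relIndex _ _ _ le_sup_left le_sup_left
    _ ∣ _ := relIndex_dvd_of_le_right _ (sup_le hle (Subgroup.zpowers_le.2 hu))

theorem relIndex_map_incl_dvd (H : Subgroup X) :
    (powMonoidHom 2).range.relIndex (H.map D.incl) ∣ (powMonoidHom 2).range.relIndex H := by
  rw [← Subgroup.relIndex_comap]
  refine Subgroup.relIndex_dvd_of_le_left _ ?_
  rintro _ ⟨x, rfl⟩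
  exact ⟨D.incl x, (map_pow D.incl x 2).symm⟩

/-- If invariant ideals are extended up to one ramified prime `P` and principal ideals, and `u` is
not a norm modulo squares, then passing to the quadratic extension at most squares the index. -/
theorem relIndex_selmer_dvd_pow_two {P : J} {θ : Y} {r τ u : X}
    (hinv : (divConj D.conjIdeal).ker ≤
      D.extend.range ⊔ Subgroup.zpowers P ⊔ Subgroup.zpowers (g θ))
    (hP : P ^ 2 = D.extend (f τ)) (hθ : θ ^ 2 = D.incl r) (hu : u ∈ selmer f 2)
    (hnorm : ∀ y c, D.norm y ≠ u * c ^ 2) :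
    (powMonoidHom 2).range.relIndex (selmer g 2) ∣
      (powMonoidHom 2).range.relIndex (selmer f 2) ^ 2 := by
  -- `A` consists of the Selmer elements whose norm is a square
  set A := selmer g 2 ⊓ (powMonoidHom 2).range.comap D.norm
  have hsq : (powMonoidHom 2).range ≤ A := le_inf range_powMonoidHom_le_selmer <| by
    rintro _ ⟨y, rfl⟩
    exact ⟨D.norm y, (map_pow D.norm y 2).symm⟩
  have hA : A ≤ (powMonoidHom 2).range ⊔ (selmer f 2 ⊔ Subgroup.zpowers τ).map D.incl :=
    fun y hy => D.mem_sup_map_incl hinv hP hθ hy.1 hy.2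
  have hτ : τ ^ 2 ∈ selmer f 2 := mem_selmer.2 ⟨f τ, (map_pow f τ 2).symm⟩
  have hAg : A.relIndex (selmer g 2) =
      (powMonoidHom 2).range.relIndex ((selmer g 2).map D.norm) := by
    rw [Subgroup.inf_relIndex_left, Subgroup.relIndex_comap]
  calc
    _ = (powMonoidHom 2).range.relIndex A *
          (powMonoidHom 2).range.relIndex ((selmer g 2).map D.norm) := by
      rw [← hAg, Subgroup.relIndex_mul_relIndex _ _ _ hsq inf_le_left]
    _ ∣ (powMonoidHom 2).range.relIndex (selmer f 2) * 2 *
          (powMonoidHom 2).range.relIndex ((selmer g 2).map D.norm) := by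
      refine mul_dvd_mul_right ((relIndex_dvd_of_le_right _ hA).trans ?_) _
      rw [Subgroup.relIndex_sup_left]
      refine (D.relIndex_map_incl_dvd _).trans ?_
      rw [← Subgroup.relIndex_mul_relIndex _ _ _ range_powMonoidHom_le_selmer le_sup_left]
      exact mul_dvd_mul_left _ (relIndex_sup_zpowers_dvd _ hτ)
    _ ∣ _ := by
      rw [mul_assoc, pow_two]
      exact mul_dvd_mul_left _ (D.two_mul_relIndex_map_norm_dvd hu hnorm)

/-- The map of class groups induced by the extension of ideals. -/
def extendClass : I ⧸ f.range →* J ⧸ g.range :=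
  QuotientGroup.map _ _ D.extend <| by
    rintro _ ⟨x, rfl⟩
    exact ⟨D.incl x, D.map_incl x⟩

/-- The conjugation of ideal classes. -/
def conjClass : J ⧸ g.range →* J ⧸ g.range :=
  QuotientGroup.map _ _ D.conjIdeal <| by
    rintro _ ⟨y, rfl⟩
    exact ⟨D.conj y, D.map_conj y⟩

theorem conjClass_involutive : Function.Involutive D.conjClass := by
  rintro ⟨a⟩
  exact congrArg (QuotientGroup.mk' g.range) (D.conjIdeal_involutive a)

theorem pow_two_eq_one_of_mem_ker_extendClass {c : I ⧸ f.range} (hc : c ∈ D.extendClass.ker) :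
    c ^ 2 = 1 := by
  obtain ⟨a, rfl⟩ := QuotientGroup.mk'_surjective _ c
  obtain ⟨y, hy⟩ := (QuotientGroup.eq_one_iff (D.extend a)).1 hc
  refine (QuotientGroup.eq_one_iff (a ^ 2)).2 ⟨D.norm y, D.extend_injective ?_⟩
  rw [← D.map_incl, D.incl_norm, D.map_mulConj, hy, mulConj_apply, D.conjIdeal_extend, map_pow,
    pow_two]

theorem not_four_dvd_card_quotient_range (D : QuadraticIdealDatum f g) [Finite (I ⧸ f.range)]
    (hJ : ¬ 2 ∣ Nat.card (J ⧸ g.range))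
    (hI : Nat.card (powMonoidHom 2 : I ⧸ f.range →* I ⧸ f.range).ker ∣ 2) :
    ¬ 4 ∣ Nat.card (I ⧸ f.range) := by
  have hker : Nat.card D.extendClass.ker ∣ 2 :=
    (Subgroup.card_dvd_of_le fun _ => D.pow_two_eq_one_of_mem_ker_extendClass).trans hI
  have hrange : Nat.Coprime (2 ^ 2) (Nat.card D.extendClass.range) :=
    (Nat.prime_two.coprime_iff_not_dvd.2 fun h =>
      hJ (h.trans (Subgroup.card_subgroup_dvd_card _))).pow_left 2
  intro h
  rw [← Subgroup.card_mul_index D.extendClass.ker, Subgroup.index_ker] at h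
  exact absurd ((hrange.dvd_of_dvd_mul_right h).trans hker) (by norm_num)

theorem card_ker_extendClass (hinv : (divConj D.conjIdeal).ker ≤ D.extend.range) :
    Nat.card D.extendClass.ker =
      (g.ker.map (divConj D.conj)).relIndex (g.ker ⊓ (mulConj D.conj).ker) := by
  -- `G` consists of the elements generating an ideal that comes from the base
  set G := D.extend.range.comap g
  have hinclG : D.incl.range ≤ G := by
    rintro _ ⟨x, rfl⟩
    exact ⟨f x, (D.map_incl x).symm⟩
  have hkerG : g.ker ≤ G := fun y hy => ⟨1, by rw [map_one, hy]⟩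
  have hcapitulation : f.range.relIndex (g.range.comap D.extend) =
      (D.incl.range ⊔ g.ker).relIndex G := by
    rw [← Subgroup.relIndex_map_map_of_injective _ _ D.extend_injective, Subgroup.map_comap_eq,
      inf_comm, ← Subgroup.map_comap_eq, MonoidHom.map_range]
    rw [← sup_eq_left.2 hkerG, ← Subgroup.relIndex_map_map, MonoidHom.map_range]
    congr 2
    ext
    simp [D.map_incl]
  have hH1 : G.map (divConj D.conj) = g.ker ⊓ (mulConj D.conj).ker := by
    apply le_antisymm
    · rintro _ ⟨y, ⟨a, ha⟩, rfl⟩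
      refine ⟨?_, divConj_mem_ker_mulConj D.conj_involutive y⟩
      change g _ = 1
      rw [D.map_divConj, ← ha, divConj_apply, D.conjIdeal_extend, div_self']
    · rintro u ⟨hu, hnorm⟩
      obtain ⟨y, rfl⟩ := D.hilbert90 hnorm
      refine ⟨y, hinv ?_, rfl⟩
      rw [MonoidHom.mem_ker, ← D.map_divConj, hu]
  rw [extendClass, QuotientGroup.ker_map, ← Subgroup.relIndex_ker, QuotientGroup.ker_mk',
    hcapitulation, ← hH1, Subgroup.relIndex_map_map, D.ker_divConj, sup_eq_left.2 hinclG, sup_comm]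

theorem ker_divConj_conjClass_le (hinv : (divConj D.conjIdeal).ker ≤ D.extend.range)
    (hnorm : g.ker ⊓ (divConj D.conj).ker ≤ g.ker.map (mulConj D.conj)) :
    (divConj D.conjClass).ker ≤ D.extendClass.range := by
  intro c hc
  obtain ⟨a, rfl⟩ := QuotientGroup.mk'_surjective _ c
  obtain ⟨y, hy⟩ : divConj D.conjIdeal a ∈ g.range := (QuotientGroup.eq_one_iff _).1 hc
  have hunit : mulConj D.conj y ∈ g.ker := by
    rw [MonoidHom.mem_ker, D.map_mulConj, hy]
    exact divConj_mem_ker_mulConj D.conjIdeal_involutive a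
  -- after multiplication by a unit, `y` has norm one
  obtain ⟨v, hv, hvy⟩ := hnorm ⟨hunit, mulConj_mem_ker_divConj D.conj_involutive y⟩
  obtain ⟨z, hz⟩ : y / v ∈ (divConj D.conj).range :=
    D.hilbert90 <| by rw [MonoidHom.mem_ker, map_div, hvy, div_self']
  obtain ⟨b, hb⟩ : a / g z ∈ D.extend.range := hinv <| by
    rw [MonoidHom.mem_ker, map_div, ← D.map_divConj, hz, map_div, hy, hv, div_one, div_self']
  refine ⟨QuotientGroup.mk' _ b, (QuotientGroup.eq_iff_div_mem).2 ?_⟩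
  rw [hb, div_div_cancel_left]
  exact g.range.inv_mem ⟨z, rfl⟩

theorem finrank_ker_inf_ker_divConj :
    Module.finrank ℤ (Additive (g.ker ⊓ (divConj D.conj).ker : Subgroup Y)) =
      Module.finrank ℤ (Additive f.ker) := by
  have hmap : f.ker.map D.incl = g.ker ⊓ (divConj D.conj).ker := by
    have hcomap : g.ker.comap D.incl = f.ker := by
      ext x
      rw [Subgroup.mem_comap, MonoidHom.mem_ker, D.map_incl, map_eq_one_iff _ D.extend_injective,
        MonoidHom.mem_ker]
    rw [← hcomap, Subgroup.map_comap_eq, D.ker_divConj, inf_comm]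
  rw [← hmap]
  let e := (f.ker.equivMapOfInjective D.incl D.incl_injective).toAdditive
  exact e.toIntLinearEquiv.finrank_eq.symm

variable [Module.Finite ℤ (Additive g.ker)]

theorem two_mul_relIndex_map_mulConj
    (hrank : Module.finrank ℤ (Additive g.ker) = 2 * Module.finrank ℤ (Additive f.ker) + 1) :
    2 * (g.ker.map (mulConj D.conj)).relIndex (g.ker ⊓ (divConj D.conj).ker) =
      (g.ker.map (divConj D.conj)).relIndex (g.ker ⊓ (mulConj D.conj).ker) := by
  have hstable : ∀ y ∈ g.ker, D.conj y ∈ g.ker := fun y hy => by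
    rw [MonoidHom.mem_ker, D.map_conj, hy, map_one]
  have hsum := finrank_eq_finrank_inf_ker_mulConj_add D.conj_involutive hstable
  have hherbrand := relIndex_map_mulConj_mul_two_pow_finrank D.conj_involutive hstable
  rw [D.finrank_ker_inf_ker_divConj] at hsum hherbrand
  rw [show Module.finrank ℤ (Additive (g.ker ⊓ (mulConj D.conj).ker : Subgroup Y)) =
    Module.finrank ℤ (Additive f.ker) + 1 by omega, pow_succ', ← mul_assoc] at hherbrand
  rw [mul_comm, Nat.eq_of_mul_eq_mul_right (by positivity) hherbrand]

theorem four_dvd_card_quotient_range [Finite (I ⧸ f.range)] [Finite (J ⧸ g.range)]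
    (hrank : Module.finrank ℤ (Additive g.ker) = 2 * Module.finrank ℤ (Additive f.ker) + 1)
    (hinv : (divConj D.conjIdeal).ker ≤ D.extend.range) (hJ : 2 ∣ Nat.card (J ⧸ g.range)) :
    4 ∣ Nat.card (I ⧸ f.range) := by
  have hker := (D.card_ker_extendClass hinv).trans (D.two_mul_relIndex_map_mulConj hrank).symm
  rw [← Subgroup.card_mul_index D.extendClass.ker, Subgroup.index_ker]
  by_cases hnorm : g.ker ⊓ (divConj D.conj).ker ≤ g.ker.map (mulConj D.conj)
  · have hrange := (two_dvd_card_ker_divConj D.conjClass_involutive hJ).trans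
      (Subgroup.card_dvd_of_le (D.ker_divConj_conjClass_le hinv hnorm))
    exact mul_dvd_mul (Dvd.intro _ hker.symm) hrange
  · have hp : IsPGroup 2 D.extendClass.ker := fun c =>
      ⟨1, Subtype.ext (by simpa using D.pow_two_eq_one_of_mem_ker_extendClass c.2)⟩
    have : Fact (Nat.Prime 2) := ⟨Nat.prime_two⟩
    obtain ⟨n, hn⟩ := IsPGroup.iff_card.1 hp
    have hn2 : 2 ≤ n := by
      by_contra! hn2
      refine hnorm (Subgroup.relIndex_eq_one.1 ?_)
      interval_cases n <;> omega
    exact hn ▸ Dvd.dvd.mul_right (pow_dvd_pow 2 hn2) _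

end QuadraticIdealDatum

end Datum

section QuadraticConj

variable (F M : Type*) [Field F] [Field M] [Algebra F M] [Algebra.IsQuadraticExtension F M]
  [Algebra.IsSeparable F M]

theorem card_gal_eq_two : Nat.card Gal(M/F) = 2 := by
  rw [IsGalois.card_aut_eq_finrank, Algebra.IsQuadraticExtension.finrank_eq_two]

theorem existsUnique_gal_ne_one : ∃! σ : Gal(M/F), σ ≠ 1 :=
  (Nat.card_eq_two_iff' 1).1 (card_gal_eq_two F M)

/-- The nontrivial automorphism of a separable quadratic extension. -/
noncomputable def quadraticConj : Gal(M/F) :=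
  (existsUnique_gal_ne_one F M).choose

variable {F M}

theorem quadraticConj_ne_one : quadraticConj F M ≠ 1 :=
  (existsUnique_gal_ne_one F M).choose_spec.1

theorem eq_one_or_eq_quadraticConj (τ : Gal(M/F)) : τ = 1 ∨ τ = quadraticConj F M :=
  or_iff_not_imp_left.2 ((existsUnique_gal_ne_one F M).choose_spec.2 τ)

theorem quadraticConj_involutive : Function.Involutive (quadraticConj F M) := fun x => by
  rcases eq_one_or_eq_quadraticConj (quadraticConj F M * quadraticConj F M) with h | h
  · exact DFunLike.congr_fun h x
  · exact absurd (mul_eq_left.1 h) quadraticConj_ne_one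

theorem exists_algebraMap_eq_of_quadraticConj_eq {x : M} (hx : quadraticConj F M x = x) :
    ∃ y, algebraMap F M y = x := by
  refine (IsGalois.mem_range_algebraMap_iff_fixed x).2 fun τ => ?_
  rcases eq_one_or_eq_quadraticConj τ with rfl | rfl
  exacts [rfl, hx]

theorem comp_quadraticConj_self :
    (quadraticConj F M : M →+* M).comp (quadraticConj F M : M →+* M) = RingHom.id M :=
  RingHom.ext quadraticConj_involutive

theorem quadraticConj_comp_algebraMap :
    (quadraticConj F M : M →+* M).comp (algebraMap F M) = algebraMap F M :=
  RingHom.ext (quadraticConj F M).commutes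

theorem quadraticConj_eq_neg {δ : M} {d : F} (hδ : δ ^ 2 = algebraMap F M d)
    (hd : ∀ y, algebraMap F M y ≠ δ) : quadraticConj F M δ = -δ := by
  have hsq : quadraticConj F M δ ^ 2 = δ ^ 2 := by rw [← map_pow, hδ, AlgEquiv.commutes]
  refine (sq_eq_sq_iff_eq_or_eq_neg.1 hsq).resolve_left fun h => ?_
  obtain ⟨y, hy⟩ := exists_algebraMap_eq_of_quadraticConj_eq h
  exact hd y hy

/-- `u² - r v²` is the norm of `u + v√r`, so a square root of `r` in `F` would make `-c²` a norm. -/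
theorem quadraticConj_eq_neg_of_ne_neg_sq {δ : M} {r : F} (hδ : δ ^ 2 = algebraMap F M r)
    (hδ0 : δ ≠ 0) (hneg : ∀ u v c : F, c ≠ 0 → u ^ 2 - r * v ^ 2 ≠ -c ^ 2) :
    quadraticConj F M δ = -δ := by
  refine quadraticConj_eq_neg hδ fun y hy => hneg 0 1 y ?_ ?_
  · rintro rfl
    exact hδ0 (by rw [← hy, map_zero])
  · rw [show y ^ 2 = r from (algebraMap F M).injective (by rw [map_pow, hy, hδ])]
    ring

theorem isSquare_or_isSquare_mul_of_isSquare_algebraMap {δ : M} {d e : F}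
    (hδ : δ ^ 2 = algebraMap F M d) (hconj : quadraticConj F M δ = -δ)
    (he : IsSquare (algebraMap F M e)) : IsSquare e ∨ IsSquare (e * d) := by
  obtain ⟨x, hx⟩ := he
  by_cases h : ∃ y, algebraMap F M y = x
  · obtain ⟨y, rfl⟩ := h
    exact .inl ⟨y, (algebraMap F M).injective (hx.trans (map_mul _ y y).symm)⟩
  · have hxconj := quadraticConj_eq_neg ((pow_two x).trans hx.symm) (not_exists.1 h)
    obtain ⟨y, hy⟩ := exists_algebraMap_eq_of_quadraticConj_eq (F := F) (x := x * δ) <| by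
      rw [map_mul, hxconj, hconj, neg_mul_neg]
    refine .inr ⟨y, (algebraMap F M).injective ?_⟩
    rw [map_mul, map_mul, hy, hx, ← hδ]
    ring

theorem algebraMap_norm_eq_mul_quadraticConj (x : M) :
    algebraMap F M (Algebra.norm F x) = x * quadraticConj F M x := by
  classical
  have huniv : (Finset.univ : Finset Gal(M/F)) = {1, quadraticConj F M} := by
    ext τ
    simpa using eq_one_or_eq_quadraticConj τ
  rw [Algebra.norm_eq_prod_automorphisms, huniv, Finset.prod_pair quadraticConj_ne_one.symm,
    AlgEquiv.one_apply]

theorem exists_eq_add_mul_of_quadraticConj_eq_neg [NeZero (2 : F)] {δ : M}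
    (hconj : quadraticConj F M δ = -δ) (hδ0 : δ ≠ 0) (x : M) :
    ∃ u v, x = algebraMap F M u + algebraMap F M v * δ := by
  have h2 : (2 : M) ≠ 0 := by
    rw [← map_ofNat (algebraMap F M) 2]
    exact (map_ne_zero _).2 two_ne_zero
  obtain ⟨u, hu⟩ := exists_algebraMap_eq_of_quadraticConj_eq
    (x := (x + quadraticConj F M x) / 2) <| by
      rw [map_div₀, map_add, quadraticConj_involutive, map_ofNat, add_comm]
  obtain ⟨v, hv⟩ := exists_algebraMap_eq_of_quadraticConj_eq
    (x := (x - quadraticConj F M x) / (2 * δ)) <| by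
      rw [map_div₀, map_sub, quadraticConj_involutive, map_mul, hconj, map_ofNat, mul_neg, div_neg,
        ← neg_div, neg_sub]
  refine ⟨u, v, ?_⟩
  rw [hu, hv]
  field_simp
  ring

theorem exists_norm_eq_sq_sub_mul_sq [NeZero (2 : F)] {δ : M} {d : F}
    (hδ : δ ^ 2 = algebraMap F M d) (hconj : quadraticConj F M δ = -δ) (hδ0 : δ ≠ 0) (x : M) :
    ∃ u v, Algebra.norm F x = u ^ 2 - d * v ^ 2 := by
  obtain ⟨u, v, rfl⟩ := exists_eq_add_mul_of_quadraticConj_eq_neg hconj hδ0 x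
  refine ⟨u, v, (algebraMap F M).injective ?_⟩
  simp only [algebraMap_norm_eq_mul_quadraticConj, map_add, map_sub, map_mul, map_pow,
    AlgEquiv.commutes, hconj, ← hδ]
  ring

theorem exists_eq_div_quadraticConj {x : M} (hx : x * quadraticConj F M x = 1) :
    ∃ y : Mˣ, x = y / quadraticConj F M y := by
  by_cases h : 1 + x = 0
  · obtain ⟨t, ht⟩ : ∃ t, quadraticConj F M t ≠ t := by
      simpa using DFunLike.ne_iff.1 (quadraticConj_ne_one (F := F) (M := M))
    have hy : t - quadraticConj F M t ≠ 0 := sub_ne_zero.2 ht.symm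
    refine ⟨Units.mk0 _ hy, ?_⟩
    rw [Units.val_mk0, map_sub, quadraticConj_involutive, ← neg_sub t, div_neg, div_self hy]
    linear_combination h
  · refine ⟨Units.mk0 _ h, (eq_div_iff ((map_ne_zero _).2 h)).2 ?_⟩
    rw [Units.val_mk0, map_add, map_one]
    linear_combination hx

end QuadraticConj

section Ideals

open scoped nonZeroDivisors

/-- The group of fractional ideals of a number field. -/
abbrev IdealGroup (F : Type*) [Field F] [NumberField F] := (FractionalIdeal (𝓞 F)⁰ F)ˣ

variable {F M N : Type*} [Field F] [Field M] [Field N]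

theorem mapRingHom_injective (φ : F →+* M) :
    Function.Injective (RingOfIntegers.mapRingHom φ) := fun _ _ h =>
  RingOfIntegers.ext (φ.injective (congrArg (fun z : 𝓞 M => (z : M)) h))

theorem nonZeroDivisors_le_comap_mapRingHom (φ : F →+* M) :
    (𝓞 F)⁰ ≤ (𝓞 M)⁰.comap (RingOfIntegers.mapRingHom φ) :=
  nonZeroDivisors_le_comap_nonZeroDivisors_of_injective _ (mapRingHom_injective φ)

theorem map_mapRingHom_mem_nonZeroDivisors (φ : F →+* M) (I : (Ideal (𝓞 F))⁰) :
    I.1.map (RingOfIntegers.mapRingHom φ) ∈ (Ideal (𝓞 M))⁰ :=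
  mem_nonZeroDivisors_of_ne_zero <|
    (Ideal.map_eq_bot_iff_of_injective (mapRingHom_injective φ)).not.2
      (nonZeroDivisors.coe_ne_zero I)

variable [NumberField F] [NumberField M] [NumberField N]

/-- The extension of fractional ideals along a homomorphism of number fields. -/
noncomputable def extendIdeal (φ : F →+* M) : IdealGroup F →* IdealGroup M :=
  Units.map (FractionalIdeal.extendedHom' M (nonZeroDivisors_le_comap_mapRingHom φ)).toMonoidHom

theorem coe_extendIdeal (φ : F →+* M) (a : IdealGroup F) :
    (extendIdeal φ a : FractionalIdeal (𝓞 M)⁰ M) =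
      FractionalIdeal.extended M (nonZeroDivisors_le_comap_mapRingHom φ)
        (a : FractionalIdeal (𝓞 F)⁰ F) := rfl

theorem extendIdeal_injective (φ : F →+* M) : Function.Injective (extendIdeal φ) := by
  let := φ.toAlgebra
  exact Units.map_injective (FractionalIdeal.extendedHom_injective (𝓞 F) F M (𝓞 M))

theorem localization_map_mapRingHom (φ : F →+* M) :
    IsLocalization.map M (RingOfIntegers.mapRingHom φ) (nonZeroDivisors_le_comap_mapRingHom φ) =
      φ := by
  refine IsLocalization.ringHom_ext (𝓞 F)⁰ (RingHom.ext fun x => ?_)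
  simp

theorem extendIdeal_toPrincipalIdeal (φ : F →+* M) (x : Fˣ) :
    extendIdeal φ (toPrincipalIdeal (𝓞 F) F x) = toPrincipalIdeal (𝓞 M) M (Units.map φ x) := by
  apply Units.ext
  rw [coe_extendIdeal, coe_toPrincipalIdeal, FractionalIdeal.extended_spanSingleton,
    localization_map_mapRingHom, coe_toPrincipalIdeal]
  rfl

theorem extendIdeal_extendIdeal (φ : F →+* M) (ψ : M →+* N) (a : IdealGroup F) :
    extendIdeal ψ (extendIdeal φ a) = extendIdeal (ψ.comp φ) a :=
  Units.ext (FractionalIdeal.extended_extended M _ _ _)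

theorem extendIdeal_id (a : IdealGroup F) : extendIdeal (RingHom.id F) a = a :=
  extendIdeal_injective (RingHom.id F) (extendIdeal_extendIdeal _ _ a)

theorem extendIdeal_mk0 (φ : F →+* M) {I : (Ideal (𝓞 F))⁰} {J : (Ideal (𝓞 M))⁰}
    (h : I.1.map (RingOfIntegers.mapRingHom φ) = J) :
    extendIdeal φ (FractionalIdeal.mk0 F I) = FractionalIdeal.mk0 M J :=
  Units.ext ((FractionalIdeal.extended_coeIdeal_eq_map M _ _).trans (congrArg _ h))

theorem mk0_injective :
    Function.Injective (FractionalIdeal.mk0 F : (Ideal (𝓞 F))⁰ → IdealGroup F) :=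
  fun _ _ h => Subtype.ext (FractionalIdeal.coeIdeal_injective (congrArg Units.val h))

theorem mk0_eq_toPrincipalIdeal {I : (Ideal (𝓞 F))⁰} {x : 𝓞 F} (hI : I.1 = Ideal.span {x}) {y : Fˣ}
    (hy : (y : F) = x) : FractionalIdeal.mk0 F I = toPrincipalIdeal (𝓞 F) F y := by
  refine Units.ext ?_
  rw [FractionalIdeal.coe_mk0, hI, coe_toPrincipalIdeal, hy]
  exact FractionalIdeal.coeIdeal_span_singleton x

theorem pow_two_injective_idealGroup :
    Function.Injective (powMonoidHom 2 : IdealGroup F →* IdealGroup F) := by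
  refine (injective_iff_map_eq_one _).2 fun a ha => ?_
  have hle (b : IdealGroup F) (hb : b ^ 2 = 1) : (b : FractionalIdeal (𝓞 F)⁰ F) ≤ 1 := by
    intro x hx
    have hxx := FractionalIdeal.mul_mem_mul hx hx
    rw [← Units.val_mul, ← pow_two, hb, Units.val_one, ← pow_two,
      FractionalIdeal.mem_one_iff] at hxx
    obtain ⟨y, hy⟩ := hxx
    exact (FractionalIdeal.mem_one_iff _).2
      ⟨⟨x, .of_pow two_pos (hy ▸ RingOfIntegers.isIntegral_coe y)⟩, rfl⟩
  refine Units.ext (le_antisymm (hle a ha) ?_)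
  calc ((1 : IdealGroup F) : FractionalIdeal (𝓞 F)⁰ F)
    _ = a * a⁻¹ := by rw [← Units.val_mul, mul_inv_cancel]
    _ ≤ a * 1 := by gcongr; exact hle a⁻¹ (by rw [inv_pow, show a ^ 2 = 1 from ha, inv_one])
    _ = a := mul_one _

theorem extendIdeal_toPrincipalIdeal_rat (φ : F →+* M) (u : ℚˣ) :
    extendIdeal φ (toPrincipalIdeal (𝓞 F) F (Units.map (algebraMap ℚ F) u)) =
      toPrincipalIdeal (𝓞 M) M (Units.map (algebraMap ℚ M) u) := by
  rw [extendIdeal_toPrincipalIdeal]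
  congr 1
  exact Units.ext (map_ratCast φ _ |>.trans <| by simp)

theorem exists_mk0_eq_mul_toPrincipalIdeal_rat (a : IdealGroup F) :
    ∃ (I : (Ideal (𝓞 F))⁰) (u : ℚˣ), FractionalIdeal.mk0 F I =
      a * toPrincipalIdeal (𝓞 F) F (Units.map (algebraMap ℚ F) u) := by
  obtain ⟨x, I, hx, ha⟩ := FractionalIdeal.exists_eq_spanSingleton_mul
    (a : FractionalIdeal (𝓞 F)⁰ F)
  obtain ⟨z, hz⟩ := Ideal.mem_span_singleton'.1 (Ideal.absNorm_mem (Ideal.span {x}))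
  set n := Ideal.absNorm (Ideal.span {x})
  have hx0 : (x : F) ≠ 0 := by simpa using hx
  have hn : (n : ℚ) ≠ 0 := by simpa [n] using hx
  have hzx : (z * x : F) = n := by exact_mod_cast congrArg (algebraMap (𝓞 F) F) hz
  have key : ((I * Ideal.span {z} : Ideal (𝓞 F)) : FractionalIdeal (𝓞 F)⁰ F) =
      a * toPrincipalIdeal (𝓞 F) F (Units.map (algebraMap ℚ F) (Units.mk0 (n : ℚ) hn)) := by
    rw [FractionalIdeal.coeIdeal_mul, FractionalIdeal.coeIdeal_span_singleton, ha,
      coe_toPrincipalIdeal, mul_right_comm, FractionalIdeal.spanSingleton_mul_spanSingleton,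
      mul_comm]
    congr 2
    rw [eq_inv_mul_iff_mul_eq₀ hx0, mul_comm]
    simpa using hzx
  refine ⟨⟨I * Ideal.span {z}, mem_nonZeroDivisors_of_ne_zero fun h => ?_⟩, Units.mk0 (n : ℚ) hn,
    Units.ext key⟩
  rw [h, Ideal.zero_eq_bot, FractionalIdeal.coeIdeal_bot] at key
  exact Units.ne_zero _ ((Units.val_mul _ _).trans key.symm)

end Ideals

section QuadraticIdeals

open scoped nonZeroDivisors

theorem eq_of_le_of_relNorm_eq {R S : Type*} [CommRing R] [CommRing S] [IsDedekindDomain R]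
    [IsDedekindDomain S] [Algebra R S] [Module.Finite R S] [Module.IsTorsionFree R S]
    {I J : Ideal S} (hle : I ≤ J) (h : Ideal.relNorm R I = Ideal.relNorm R J) : I = J := by
  obtain rfl | hJ := eq_or_ne J ⊥
  · exact le_bot_iff.1 hle
  obtain ⟨C, rfl⟩ := Ideal.dvd_iff_le.2 hle
  have hC : Ideal.relNorm R C = 1 :=
    mul_left_cancel₀ (mt Ideal.relNorm_eq_bot_iff.1 hJ) (by rw [← map_mul, h, mul_one])
  have h1 : (1 : S) ∈ C := by
    simpa using Ideal.relNorm_le_comap R C (hC ▸ Ideal.one_eq_top (R := R) ▸ Submodule.mem_top :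
      (1 : R) ∈ Ideal.relNorm R C)
  rw [(Ideal.eq_top_iff_one C).2 h1, Ideal.mul_top]

variable {F M : Type*} [Field F] [NumberField F] [Field M] [Algebra F M]
  [Algebra.IsQuadraticExtension F M]

variable (F M) in
/-- The restriction of `quadraticConj F M` to the rings of integers. -/
noncomputable abbrev integerConj : 𝓞 M →+* 𝓞 M :=
  RingOfIntegers.mapRingHom (quadraticConj F M : M →+* M)

theorem exists_algebraMap_eq_of_integerConj_eq {x : 𝓞 M} (hx : integerConj F M x = x) :
    ∃ y, algebraMap (𝓞 F) (𝓞 M) y = x := by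
  obtain ⟨y, hy⟩ := exists_algebraMap_eq_of_quadraticConj_eq
    (congrArg (fun z : 𝓞 M => (z : M)) hx)
  have hint : IsIntegral ℤ y :=
    (isIntegral_algHom_iff (algebraMap F M).toIntAlgHom (algebraMap F M).injective).1
      (hy ▸ RingOfIntegers.isIntegral_coe x : IsIntegral ℤ (algebraMap F M y))
  exact ⟨⟨y, hint⟩, RingOfIntegers.ext hy⟩

theorem integerConj_involutive : Function.Involutive (integerConj F M) := fun _ =>
  RingOfIntegers.ext (quadraticConj_involutive _)

theorem mul_sub_integerConj_mem {I : Ideal (𝓞 M)} (hI : I.map (integerConj F M) ≤ I) {x : 𝓞 M}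
    (hx : x ∈ I) (y : 𝓞 M) :
    x * (y - integerConj F M y) ∈
      (I.comap (algebraMap (𝓞 F) (𝓞 M))).map (algebraMap (𝓞 F) (𝓞 M)) := by
  have trace_mem {z : 𝓞 M} (hz : z ∈ I) : z + integerConj F M z ∈
      (I.comap (algebraMap (𝓞 F) (𝓞 M))).map (algebraMap (𝓞 F) (𝓞 M)) := by
    obtain ⟨b, hb⟩ := exists_algebraMap_eq_of_integerConj_eq (x := z + integerConj F M z) <| by
      rw [map_add, integerConj_involutive, add_comm]
    rw [← hb]
    refine Ideal.mem_map_of_mem _ (Ideal.mem_comap.2 ?_)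
    rw [hb]
    exact I.add_mem hz (hI (Ideal.mem_map_of_mem _ hz))
  have key : x * (y - integerConj F M y) =
      (x * y + integerConj F M (x * y)) - integerConj F M y * (x + integerConj F M x) := by
    rw [map_mul]
    ring
  exact key ▸ Ideal.sub_mem _ (trace_mem (I.mul_mem_right y hx))
    (Ideal.mul_mem_left _ _ (trace_mem hx))

variable [NumberField M]

theorem relNorm_map_integerConj [Module.Finite (𝓞 F) (𝓞 M)] (I : Ideal (𝓞 M)) :
    Ideal.relNorm (𝓞 F) (I.map (integerConj F M)) = Ideal.relNorm (𝓞 F) I := by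
  rw [← Ideal.relNorm_map_algEquiv (galRestrict (𝓞 F) F M (𝓞 M) (quadraticConj F M)) I]
  refine congrArg _ (congrArg Ideal.span (Set.image_congr fun x _ => RingOfIntegers.ext ?_))
  exact (algebraMap_galRestrict_apply (𝓞 F) (quadraticConj F M) x).symm

/-- `𝔞 · σ𝔞` is the extension of the relative norm of `𝔞`. -/
theorem mul_map_integerConj [Module.Finite (𝓞 F) (𝓞 M)] (I : Ideal (𝓞 M)) :
    I * I.map (integerConj F M) =
      (Ideal.relNorm (𝓞 F) I).map (algebraMap (𝓞 F) (𝓞 M)) := by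
  symm
  apply eq_of_le_of_relNorm_eq (R := 𝓞 F)
  · rw [Ideal.relNorm_apply, Ideal.map_span, Ideal.span_le]
    rintro _ ⟨_, ⟨x, hx, rfl⟩, rfl⟩
    have hnorm : algebraMap (𝓞 F) (𝓞 M) (Algebra.intNorm (𝓞 F) (𝓞 M) x) =
        x * integerConj F M x :=
      RingOfIntegers.ext <|
        (congrArg (algebraMap F M) (Algebra.algebraMap_intNorm (L := M) x)).trans
          (algebraMap_norm_eq_mul_quadraticConj (x : M))
    exact hnorm ▸ Ideal.mul_mem_mul hx (Ideal.mem_map_of_mem _ hx)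
  · rw [Ideal.relNorm_algebraMap, map_mul, relNorm_map_integerConj, ← pow_two,
      ← IsFractionRing.finrank_eq (𝓞 F) F (𝓞 M) M, Algebra.IsQuadraticExtension.finrank_eq_two]

theorem exists_extendIdeal_eq_mulConj (a : IdealGroup M) :
    ∃ b, extendIdeal (algebraMap F M) b =
      mulConj (extendIdeal (quadraticConj F M : M →+* M)) a := by
  have : Module.Finite (𝓞 F) (𝓞 M) := IsIntegralClosure.finite (𝓞 F) F M (𝓞 M)
  set s := extendIdeal (quadraticConj F M : M →+* M)
  obtain ⟨I, u, hI⟩ := exists_mk0_eq_mul_toPrincipalIdeal_rat a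
  set c := toPrincipalIdeal (𝓞 F) F (Units.map (algebraMap ℚ F) u)
  have hc : extendIdeal (algebraMap F M) c =
      toPrincipalIdeal (𝓞 M) M (Units.map (algebraMap ℚ M) u) :=
    extendIdeal_toPrincipalIdeal_rat _ u
  have hN : Ideal.relNorm (𝓞 F) I.1 ∈ (Ideal (𝓞 F))⁰ :=
    mem_nonZeroDivisors_of_ne_zero (mt Ideal.relNorm_eq_bot_iff.1 (nonZeroDivisors.coe_ne_zero I))
  have hmk : extendIdeal (algebraMap F M) (FractionalIdeal.mk0 F ⟨_, hN⟩) =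
      mulConj s (FractionalIdeal.mk0 M I) := by
    rw [mulConj_apply, extendIdeal_mk0 (J := ⟨_, map_mapRingHom_mem_nonZeroDivisors _ I⟩) _ rfl,
      ← map_mul]
    exact extendIdeal_mk0 _ (mul_map_integerConj I.1).symm
  refine ⟨FractionalIdeal.mk0 F ⟨_, hN⟩ / c ^ 2, ?_⟩
  rw [map_div, hmk, hI, map_pow, hc, map_mul, div_eq_iff_eq_mul]
  congr 1
  rw [mulConj_apply, extendIdeal_toPrincipalIdeal_rat, pow_two]

/-- Elements and ideals of a quadratic extension of number fields. -/
noncomputable def quadraticIdealDatum (F M : Type*) [Field F] [NumberField F] [Field M]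
    [NumberField M] [Algebra F M] [Algebra.IsQuadraticExtension F M] :
    QuadraticIdealDatum (toPrincipalIdeal (𝓞 F) F) (toPrincipalIdeal (𝓞 M) M) where
  incl := Units.map (algebraMap F M)
  extend := extendIdeal (algebraMap F M)
  conj := Units.map (quadraticConj F M : M →+* M)
  conjIdeal := extendIdeal (quadraticConj F M : M →+* M)
  norm := Units.map (Algebra.norm F)
  map_incl x := (extendIdeal_toPrincipalIdeal _ x).symm
  map_conj x := (extendIdeal_toPrincipalIdeal _ x).symm
  incl_norm x := Units.ext (algebraMap_norm_eq_mul_quadraticConj (x : M))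
  incl_injective := Units.map_injective (algebraMap F M).injective
  extend_injective := extendIdeal_injective _
  conj_involutive x := Units.ext (quadraticConj_involutive _)
  conjIdeal_involutive a := by
    rw [extendIdeal_extendIdeal, comp_quadraticConj_self, extendIdeal_id]
  ker_divConj := by
    ext x
    rw [mem_ker_divConj]
    refine ⟨fun h => ?_, ?_⟩
    · obtain ⟨y, hy⟩ := exists_algebraMap_eq_of_quadraticConj_eq (congrArg Units.val h)
      exact ⟨Units.mk0 y fun h0 => x.ne_zero (by rw [← hy, h0, map_zero]), Units.ext hy⟩
    · rintro ⟨y, rfl⟩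
      exact Units.ext ((quadraticConj F M).commutes _)
  hilbert90 x hx := by
    obtain ⟨y, hy⟩ := exists_eq_div_quadraticConj (congrArg Units.val (MonoidHom.mem_ker.1 hx))
    exact ⟨y, Units.ext <| by simpa [divConj_apply] using hy.symm⟩
  conjIdeal_extend a := by rw [extendIdeal_extendIdeal, quadraticConj_comp_algebraMap]
  range_mulConj_conjIdeal_le := by
    rintro _ ⟨a, rfl⟩
    exact exists_extendIdeal_eq_mulConj a
  pow_two_injective := pow_two_injective_idealGroup

/-- The defect of an invariant ideal from being an extended ideal divides the ideal generated by
all `y - σy`, which is supported at the ramified primes. -/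
theorem exists_extendIdeal_eq_mul_mk0 {a : IdealGroup M}
    (ha : extendIdeal (quadraticConj F M : M →+* M) a = a) :
    ∃ (b : IdealGroup F) (B : (Ideal (𝓞 M))⁰),
      B.1 ∣ Ideal.span (Set.range fun y => y - integerConj F M y) ∧
        extendIdeal (algebraMap F M) b = a * FractionalIdeal.mk0 M B := by
  obtain ⟨I, u, hI⟩ := exists_mk0_eq_mul_toPrincipalIdeal_rat a
  have hinv : I.1.map (integerConj F M) = I := congrArg Subtype.val <| mk0_injective <|
    (extendIdeal_mk0 (J := ⟨_, map_mapRingHom_mem_nonZeroDivisors _ I⟩) _ rfl).symm.trans <| by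
      rw [hI, map_mul, ha, extendIdeal_toPrincipalIdeal_rat]
  obtain ⟨B, hB⟩ : I.1 ∣ (I.1.comap (algebraMap (𝓞 F) (𝓞 M))).map (algebraMap (𝓞 F) (𝓞 M)) :=
    Ideal.dvd_iff_le.2 Ideal.map_comap_le
  let I₀ : (Ideal (𝓞 F))⁰ := ⟨I.1.comap (algebraMap (𝓞 F) (𝓞 M)), mem_nonZeroDivisors_of_ne_zero
    (Ideal.under_ne_bot (𝓞 F) (nonZeroDivisors.coe_ne_zero I))⟩
  have hB0 : B ∈ (Ideal (𝓞 M))⁰ := mem_nonZeroDivisors_of_ne_zero <| right_ne_zero_of_mul <|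
    hB ▸ nonZeroDivisors.ne_zero (map_mapRingHom_mem_nonZeroDivisors (algebraMap F M) I₀)
  refine ⟨FractionalIdeal.mk0 F I₀ / toPrincipalIdeal (𝓞 F) F (Units.map (algebraMap ℚ F) u),
    ⟨B, hB0⟩, ?_, ?_⟩
  · rw [← mul_dvd_mul_iff_left (nonZeroDivisors.coe_ne_zero I), ← hB, Ideal.dvd_iff_le,
      Ideal.mul_le]
    intro x hx y hy
    induction hy using Submodule.span_induction with
    | mem y hy =>
      obtain ⟨y, rfl⟩ := hy
      exact mul_sub_integerConj_mem hinv.le hx y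
    | zero => simp
    | add y z _ _ hy hz => exact mul_add x y z ▸ Ideal.add_mem _ hy hz
    | smul c y _ hy => exact mul_left_comm x c y ▸ Ideal.mul_mem_left _ c hy
  · rw [map_div, extendIdeal_toPrincipalIdeal_rat, div_eq_iff_eq_mul, mul_right_comm, ← hI,
      ← map_mul]
    exact extendIdeal_mk0 _ hB

/-- If the `y - σy` generate the unit ideal, i.e. `M / F` is unramified at all finite places, then
invariant ideals are extended. -/
theorem ker_divConj_conjIdeal_le_range_extend
    (h : Ideal.span (Set.range fun y => y - integerConj F M y) = ⊤) :
    (divConj (quadraticIdealDatum F M).conjIdeal).ker ≤ (quadraticIdealDatum F M).extend.range := by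
  intro a ha
  obtain ⟨b, B, hB, hb⟩ := exists_extendIdeal_eq_mul_mk0 (mem_ker_divConj.1 ha)
  have hB1 : B = 1 := Subtype.ext <| isUnit_iff_eq_one.1 <| isUnit_of_dvd_one <|
    Ideal.one_eq_top (R := 𝓞 M) ▸ h ▸ hB
  exact ⟨b, by rw [hB1, map_one, mul_one] at hb; exact hb⟩

end QuadraticIdeals

section ClassGroupAndUnits

variable (F : Type*) [Field F] [NumberField F]

/-- The class group as the group of fractional ideals modulo principal ones, which is the form in
which it occurs in `QuadraticIdealDatum`. -/
abbrev IdealClassGroup := IdealGroup F ⧸ (toPrincipalIdeal (𝓞 F) F).range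

theorem card_idealClassGroup : Nat.card (IdealClassGroup F) = classNumber F := by
  rw [classNumber, ← Nat.card_eq_fintype_card]
  exact (Nat.card_congr (ClassGroup.equiv F).toEquiv).symm

instance finite_idealClassGroup : Finite (IdealClassGroup F) :=
  Finite.of_equiv _ (ClassGroup.equiv (R := 𝓞 F) F).toEquiv

theorem ker_toPrincipalIdeal :
    (toPrincipalIdeal (𝓞 F) F).ker = (Units.map (algebraMap (𝓞 F) F : 𝓞 F →* F)).range := by
  have integral {x : Fˣ} (hx : toPrincipalIdeal (𝓞 F) F x = 1) : ∃ y : 𝓞 F, (y : F) = x := by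
    have hmem := FractionalIdeal.mem_spanSingleton_self (nonZeroDivisors (𝓞 F)) (x : F)
    rwa [← coe_toPrincipalIdeal, hx, Units.val_one, FractionalIdeal.mem_one_iff] at hmem
  ext x
  refine ⟨fun hx => ?_, ?_⟩
  · obtain ⟨y, hy⟩ := integral hx
    obtain ⟨z, hz⟩ := integral (x := x⁻¹) (by rw [map_inv, hx, inv_one])
    have hyz : y * z = 1 := RingOfIntegers.ext (by simp [hy, hz])
    exact ⟨Units.mkOfMulEqOne y z hyz, Units.ext hy⟩
  · rintro ⟨u, rfl⟩
    have hspan := FractionalIdeal.coeIdeal_span_singleton (S := nonZeroDivisors (𝓞 F)) (P := F)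
      (u : 𝓞 F)
    rw [Ideal.span_singleton_eq_top.2 u.isUnit, FractionalIdeal.coeIdeal_top] at hspan
    exact Units.ext ((coe_toPrincipalIdeal _).trans hspan.symm)

/-- The units of the ring of integers are the elements generating the unit ideal. -/
noncomputable def unitsEquivKer : (𝓞 F)ˣ ≃* (toPrincipalIdeal (𝓞 F) F).ker :=
  (MonoidHom.ofInjective (Units.map_injective RingOfIntegers.coe_injective)).trans
    (MulEquiv.subgroupCongr (ker_toPrincipalIdeal F).symm)

/-- `unitsEquivKer` as a `ℤ`-linear equivalence. -/
noncomputable def unitsLinearEquivKer :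
    Additive (𝓞 F)ˣ ≃ₗ[ℤ] Additive (toPrincipalIdeal (𝓞 F) F).ker :=
  (unitsEquivKer F).toAdditive.toIntLinearEquiv

instance finite_ker_toPrincipalIdeal :
    Module.Finite ℤ (Additive (toPrincipalIdeal (𝓞 F) F).ker) :=
  Module.Finite.equiv (unitsLinearEquivKer F)

theorem finrank_ker_toPrincipalIdeal :
    Module.finrank ℤ (Additive (toPrincipalIdeal (𝓞 F) F).ker) = Units.rank F := by
  rw [← Units.finrank_eq, (unitsLinearEquivKer F).finrank_eq]

theorem toPrincipalIdeal_neg_one : toPrincipalIdeal (𝓞 F) F (-1) = 1 := by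
  refine pow_two_injective_idealGroup ?_
  simp only [powMonoidHom_apply, ← map_pow, neg_one_sq, map_one]

theorem ker_inf_ker_pow_two :
    (toPrincipalIdeal (𝓞 F) F).ker ⊓ (powMonoidHom 2).ker = Subgroup.zpowers (-1) := by
  refine le_antisymm (fun x hx => ?_) ?_
  · have hx2 : (x : F) ^ 2 = 1 := congrArg Units.val (MonoidHom.mem_ker.1 hx.2)
    rcases sq_eq_one_iff.1 hx2 with h | h
    · rw [show x = 1 from Units.ext h]
      exact one_mem _
    · rw [show x = -1 from Units.ext h]
      exact Subgroup.mem_zpowers _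
  · rw [Subgroup.zpowers_le]
    exact ⟨toPrincipalIdeal_neg_one F, neg_one_sq⟩

/-- The order of the group, modulo squares, of elements of `Fˣ` generating the square of an
ideal. -/
noncomputable def selmerIndex : ℕ :=
  (powMonoidHom 2).range.relIndex (selmer (toPrincipalIdeal (𝓞 F) F) 2)

theorem selmerIndex_eq :
    selmerIndex F =
      2 ^ (Units.rank F + 1) * Nat.card (powMonoidHom (α := IdealClassGroup F) 2).ker := by
  have horder : orderOf (-1 : Fˣ) = 2 := by
    rw [← orderOf_units, Units.val_neg, Units.val_one, orderOf_neg_one, ringChar.eq_zero,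
      if_neg two_ne_zero.symm]
  rw [selmerIndex, relIndex_range_powMonoidHom_selmer two_ne_zero pow_two_injective_idealGroup,
    finrank_ker_toPrincipalIdeal, ker_inf_ker_pow_two, Nat.card_zpowers, horder, pow_succ]

end ClassGroupAndUnits

section RamifiedQuadratic

open scoped nonZeroDivisors

theorem prime_of_pow_finrank_eq_span {F : Type*} [Field F] [NumberField F] {P : Ideal (𝓞 F)}
    {q : ℕ} (hq : q.Prime) (h : P ^ Module.finrank ℚ F = Ideal.span {(q : 𝓞 F)}) : Prime P := by
  have hpow : Ideal.absNorm P ^ Module.finrank ℚ F = q ^ Module.finrank ℚ F := by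
    rw [← map_pow, h, Ideal.absNorm_span_natCast, RingOfIntegers.rank]
  have hnorm : Ideal.absNorm P = q := Nat.pow_left_injective Module.finrank_pos.ne' hpow
  refine Ideal.prime_of_isPrime ?_ (Ideal.isPrime_of_irreducible_absNorm (hnorm ▸ hq))
  rintro rfl
  exact hq.ne_zero (hnorm ▸ Ideal.absNorm_bot)

variable {F M : Type*} [Field F] [NumberField F] [Field M] [NumberField M] [Algebra F M]
  [Algebra.IsQuadraticExtension F M]

/-- Here `θ - σθ = 2θ`, so only the primes above `2` and `θ` can ramify. -/
theorem ker_divConj_conjIdeal_le_sup_zpowers {θ : 𝓞 M} {t : Mˣ} (ht : (t : M) = θ)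
    (hθ : Prime (Ideal.span {θ})) (hconj : integerConj F M θ = -θ) {P : (Ideal (𝓞 M))⁰}
    (hP : Prime P.1) {n : ℕ} (hP2 : P.1 ^ n = Ideal.span {2}) :
    (divConj (quadraticIdealDatum F M).conjIdeal).ker ≤ (quadraticIdealDatum F M).extend.range ⊔
      Subgroup.zpowers (FractionalIdeal.mk0 M P) ⊔
        Subgroup.zpowers (toPrincipalIdeal (𝓞 M) M t) := by
  intro a ha
  obtain ⟨b, B, hB, hb⟩ := exists_extendIdeal_eq_mul_mk0 (mem_ker_divConj.1 ha)
  have hdvd : B.1 ∣ P.1 ^ n * Ideal.span {θ} := by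
    refine hB.trans ?_
    rw [hP2, Ideal.span_singleton_mul_span_singleton, Ideal.dvd_span_singleton]
    refine Ideal.subset_span ⟨θ, ?_⟩
    simp only [hconj]
    ring
  obtain ⟨B₁, B₂, hB₁, hB₂, hB₁₂⟩ := exists_dvd_and_dvd_of_dvd_mul hdvd
  obtain ⟨i, -, hi⟩ := (dvd_prime_pow hP n).1 hB₁
  obtain ⟨j, -, hj⟩ := (dvd_prime_pow hθ 1).1 (hB₂.trans (pow_one _).symm.dvd)
  let T : (Ideal (𝓞 M))⁰ := ⟨_, mem_nonZeroDivisors_of_ne_zero hθ.ne_zero⟩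
  have hBPT : B = P ^ i * T ^ j := Subtype.ext <| by
    rw [hB₁₂, associated_iff_eq.1 hi, associated_iff_eq.1 hj]
    rfl
  rw [hBPT, map_mul, map_pow, map_pow, mk0_eq_toPrincipalIdeal (I := T) rfl ht] at hb
  refine (Subgroup.mul_mem_cancel_right _ ?_).1 (hb.subst (motive := (· ∈ _)) ?_)
  · exact mul_mem (Subgroup.mem_sup_left (Subgroup.mem_sup_right (Subgroup.npow_mem_zpowers _ i)))
      (Subgroup.mem_sup_right (Subgroup.npow_mem_zpowers _ j))
  · exact Subgroup.mem_sup_left (Subgroup.mem_sup_left ⟨b, rfl⟩)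

/-- Here `-1` lies in the Selmer group of `F` but is not a norm from `M` up to squares. -/
theorem selmerIndex_dvd_sq {r : 𝓞 F} {θ : 𝓞 M} {p : ℕ} (hp : p.Prime)
    (hθ : θ ^ 2 = algebraMap (𝓞 F) (𝓞 M) r) (hθp : θ ^ Module.finrank ℚ M = p)
    {P : (Ideal (𝓞 M))⁰} (hP : P.1 ^ Module.finrank ℚ M = Ideal.span {2}) {τ : Fˣ}
    (hPτ : FractionalIdeal.mk0 M P ^ 2 =
      extendIdeal (algebraMap F M) (toPrincipalIdeal (𝓞 F) F τ))
    (hneg : ∀ u v c : F, c ≠ 0 → u ^ 2 - r * v ^ 2 ≠ -c ^ 2) :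
    selmerIndex M ∣ selmerIndex F ^ 2 := by
  have hθ' : (θ : M) ^ 2 = algebraMap F M r := congrArg (algebraMap (𝓞 M) M) hθ
  have hprime : Prime (Ideal.span {θ}) :=
    prime_of_pow_finrank_eq_span hp (by rw [Ideal.span_singleton_pow, hθp])
  have hprimeP : Prime P.1 := prime_of_pow_finrank_eq_span Nat.prime_two (by exact_mod_cast hP)
  have hθ0 : (θ : M) ≠ 0 := by simpa using hprime.ne_zero
  have hr0 : (r : F) ≠ 0 := fun h => by simp [h, hθ0] at hθ'
  have hconj : quadraticConj F M θ = -θ := quadraticConj_eq_neg_of_ne_neg_sq hθ' hθ0 hneg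
  refine (quadraticIdealDatum F M).relIndex_selmer_dvd_pow_two (θ := Units.mk0 _ hθ0)
    (r := Units.mk0 _ hr0) (u := -1)
    (ker_divConj_conjIdeal_le_sup_zpowers rfl hprime (RingOfIntegers.ext hconj) hprimeP hP) hPτ
    (Units.ext hθ') (mem_selmer.2 ⟨1, by rw [one_pow, toPrincipalIdeal_neg_one]⟩)
    fun y c hyc => ?_
  obtain ⟨u, v, huv⟩ := exists_norm_eq_sq_sub_mul_sq hθ' hconj hθ0 (y : M)
  refine hneg u v c c.ne_zero (huv.symm.trans ((congrArg Units.val hyc).trans ?_))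
  simp

end RamifiedQuadratic

section Arithmetic

theorem two_mem_span_four_of_sq_eq {A : Type*} [CommRing A] {R S : A} (hS : S ^ 2 = R)
    (h : (2 : A) ∈ Ideal.span {4, 1 - R}) : (2 : A) ∈ Ideal.span {4, 1 - S} := by
  obtain ⟨a, b, hab⟩ := Ideal.mem_span_pair.1 h
  exact Ideal.mem_span_pair.2 ⟨a, b * (1 + S), by linear_combination hab - b * hS⟩

theorem span_two_one_sub_sq {A : Type*} [CommRing A] {R S : A} (hS : S ^ 2 = R)
    (h : (2 : A) ∈ Ideal.span {4, 1 - R}) :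
    Ideal.span {2, 1 - S} ^ 2 = Ideal.span {2, 1 - R} := by
  have h2S : (2 : A) ∈ Ideal.span {2, 1 - S} := Ideal.mem_span_pair.2 ⟨1, 0, by ring⟩
  have h1S : 1 - S ∈ Ideal.span {2, 1 - S} := Ideal.mem_span_pair.2 ⟨0, 1, by ring⟩
  have h1R : 1 - R = 2 * (1 - S) - (1 - S) * (1 - S) := by linear_combination hS
  refine le_antisymm ?_ ?_
  · simp only [pow_two, Ideal.span_pair_mul_span_pair, Ideal.span_le, Set.insert_subset_iff,
      Set.singleton_subset_iff, SetLike.mem_coe, Ideal.mem_span_pair]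
    exact ⟨⟨2, 0, by ring⟩, ⟨1 - S, 0, by ring⟩, ⟨1 - S, 0, by ring⟩,
      ⟨1 - S, -1, by linear_combination -h1R⟩⟩
  · have h1R_mem : 1 - R ∈ Ideal.span {2, 1 - S} ^ 2 := by
      rw [h1R, pow_two]
      exact sub_mem (Ideal.mul_mem_mul h2S h1S) (Ideal.mul_mem_mul h1S h1S)
    have h4_mem : (4 : A) ∈ Ideal.span {2, 1 - S} ^ 2 := by
      rw [show (4 : A) = 2 * 2 by norm_num, pow_two]
      exact Ideal.mul_mem_mul h2S h2S
    have h2_mem : (2 : A) ∈ Ideal.span {2, 1 - S} ^ 2 :=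
      Ideal.span_le.2 (Set.insert_subset h4_mem (Set.singleton_subset_iff.2 h1R_mem)) h
    exact Ideal.span_le.2 (Set.insert_subset h2_mem (Set.singleton_subset_iff.2 h1R_mem))

theorem two_mem_span_four_one_sub_natCast (A : Type*) [CommRing A] {p : ℕ} (hp : p % 4 = 3) :
    (2 : A) ∈ Ideal.span {4, 1 - (p : A)} := by
  refine Ideal.mem_span_pair.2 ⟨(p / 4 + 1 : ℕ), 1, ?_⟩
  have h : (p : A) + 1 = ((p / 4 + 1 : ℕ) : A) * 4 := by
    exact_mod_cast congrArg (Nat.cast : ℕ → A) (show p + 1 = (p / 4 + 1) * 4 by lia)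
  linear_combination -h

theorem span_two_one_sub_natCast (A : Type*) [CommRing A] {p : ℕ} (hp : p % 2 = 1) :
    Ideal.span {2, 1 - (p : A)} = Ideal.span {2} := by
  refine Ideal.span_pair_eq_span_left_iff_dvd.2 ⟨-((p / 2 : ℕ) : A), ?_⟩
  have h : (p : A) = 2 * ((p / 2 : ℕ) : A) + 1 := by
    exact_mod_cast congrArg (Nat.cast : ℕ → A) (show p = 2 * (p / 2) + 1 by lia)
  linear_combination -h

theorem span_two_one_sub_pow_two {A : Type*} [CommRing A] {S : A} {p : ℕ} (hS : S ^ 2 = p)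
    (hp : p % 4 = 3) : Ideal.span {2, 1 - S} ^ 2 = Ideal.span {2} :=
  (span_two_one_sub_sq hS (two_mem_span_four_one_sub_natCast A hp)).trans
    (span_two_one_sub_natCast A (by lia))

theorem span_two_one_sub_pow_four {A : Type*} [CommRing A] {S : A} {p : ℕ} (hS : S ^ 4 = p)
    (hp : p % 4 = 3) : Ideal.span {2, 1 - S} ^ 4 = Ideal.span {2} := by
  have hS2 : (S ^ 2) ^ 2 = p := by rw [← pow_mul, hS]
  have hmem := two_mem_span_four_of_sq_eq hS2 (two_mem_span_four_one_sub_natCast A hp)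
  rw [pow_mul _ 2 2, span_two_one_sub_sq rfl hmem, span_two_one_sub_pow_two hS2 hp]

theorem int_sq_add_sq_ne_prime_mul_sq {p : ℕ} (hp : p.Prime) (hmod : p % 4 = 3) (u v : ℤ) {c : ℤ}
    (hc : c ≠ 0) : u ^ 2 + c ^ 2 ≠ p * v ^ 2 := by
  intro h
  have := Fact.mk hp
  have hv : v.natAbs ^ 2 ≠ 0 := pow_ne_zero 2 <| Int.natAbs_ne_zero.2 fun hv => by
    rw [hv] at h
    nlinarith [sq_nonneg u, sq_pos_of_ne_zero hc]
  have heven : Even (padicValNat p (p * v.natAbs ^ 2)) := by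
    refine (Nat.eq_sq_add_sq_iff (n := p * v.natAbs ^ 2)).1 ⟨u.natAbs, c.natAbs, ?_⟩ p ?_ hmod
    · zify
      simpa only [sq_abs] using h.symm
    · exact Nat.mem_primeFactors.2 ⟨hp, dvd_mul_right _ _, mul_ne_zero hp.ne_zero hv⟩
  rw [padicValNat.mul hp.ne_zero hv, padicValNat.self hp.one_lt, padicValNat.pow,
    Nat.even_iff] at heven
  lia

theorem rat_sq_sub_prime_mul_sq_ne_neg_sq {p : ℕ} (hp : p.Prime) (hmod : p % 4 = 3) (u v : ℚ)
    {c : ℚ} (hc : c ≠ 0) : u ^ 2 - p * v ^ 2 ≠ -c ^ 2 := by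
  intro h
  refine int_sq_add_sq_ne_prime_mul_sq hp hmod (u.num * v.den * c.den) (v.num * u.den * c.den)
    (c := c.num * u.den * v.den) (by simp [hc]) ?_
  have hq : ((u.num * v.den * c.den) ^ 2 + (c.num * u.den * v.den) ^ 2 : ℚ) =
      p * (v.num * u.den * c.den) ^ 2 := by
    rw [← Rat.mul_den_eq_num u, ← Rat.mul_den_eq_num v, ← Rat.mul_den_eq_num c]
    linear_combination (u.den * v.den * c.den : ℚ) ^ 2 * h
  exact_mod_cast hq

theorem not_isSquare_of_mod_four_eq_two {n : ℕ} (hn : n % 4 = 2) : ¬IsSquare n := by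
  rintro ⟨m, rfl⟩
  have := Nat.mul_mod m m 4
  have : m % 4 < 4 := Nat.mod_lt _ (by norm_num)
  interval_cases m % 4 <;> lia

end Arithmetic

section RealEmbeddings

open InfinitePlace

theorem finrank_le_two_mul_unitsRank_add_one {F : Type*} [Field F] [NumberField F] (φ : F →+* ℝ) :
    Module.finrank ℚ F ≤ 2 * Units.rank F + 1 := by
  classical
  have hreal : 0 < nrRealPlaces F := Fintype.card_pos_iff.2 ⟨⟨.mk (Complex.ofRealHom.comp φ), _,
    RingHom.ext fun x => Complex.conj_ofReal (φ x), rfl⟩⟩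
  have hrank := card_add_two_mul_card_eq_rank F
  have hcard := card_eq_nrRealPlaces_add_nrComplexPlaces F
  rw [Units.rank]
  lia

variable {F M : Type*} [Field F] [NumberField F] [Field M] [NumberField M] [Algebra F M]
  [Algebra.IsQuadraticExtension F M]

theorem isUnramifiedAtInfinitePlaces_of_sq_eq_natCast {w : M} {n : ℕ} (hw : w ^ 2 = n)
    (hw0 : w ≠ 0) (hconj : quadraticConj F M w = -w) : IsUnramifiedAtInfinitePlaces F M := by
  refine ⟨fun v => ?_⟩
  rw [← mk_embedding v, isUnramified_mk_iff_isUnmixed]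
  intro hreal
  have hF (x : F) : starRingEnd ℂ (v.embedding (algebraMap F M x)) =
      v.embedding (algebraMap F M x) := RingHom.congr_fun hreal x
  have hw' : starRingEnd ℂ (v.embedding w) = v.embedding w := by
    have hsq : v.embedding w ^ 2 = (√n : ℂ) ^ 2 := by
      rw [← map_pow, hw, map_natCast, ← Complex.ofReal_pow, Real.sq_sqrt n.cast_nonneg,
        Complex.ofReal_natCast]
    rcases sq_eq_sq_iff_eq_or_eq_neg.1 hsq with h | h <;>
      simp only [h, map_neg, Complex.conj_ofReal]
  refine RingHom.ext fun x => ?_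
  obtain ⟨a, b, rfl⟩ := exists_eq_add_mul_of_quadraticConj_eq_neg hconj hw0 x
  change starRingEnd ℂ (v.embedding _) = v.embedding _
  simp only [map_add, map_mul, hF, hw']

theorem unitsRank_eq_two_mul_add_one [IsUnramifiedAtInfinitePlaces F M] :
    Units.rank M = 2 * Units.rank F + 1 := by
  have hcard := IsUnramifiedAtInfinitePlaces.card_infinitePlace F M
  rw [Algebra.IsQuadraticExtension.finrank_eq_two] at hcard
  have hpos : 0 < Fintype.card (InfinitePlace F) := Fintype.card_pos
  rw [Units.rank, Units.rank, hcard]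
  lia

end RealEmbeddings

section Unramified

variable {F M : Type*} [Field F] [Field M] [Algebra F M] [Algebra.IsQuadraticExtension F M]
  [NumberField F] {p : ℕ} {θ : 𝓞 F} {w : 𝓞 M}

theorem exists_sq_eq_one_add_eight_mul_of_conj_eq_neg (hmod : p % 16 = 15) (hθ : θ ^ 4 = p)
    (hw : w ^ 2 = 2) (hconj : integerConj F M w = -w) :
    ∃ v : M, quadraticConj F M v = -v ∧
      v ^ 2 = 1 + 8 * (p / 16 + 1 : ℕ) * (algebraMap F M θ ^ 2 - 2) := by
  set m := p / 16 + 1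
  have : CharZero M := charZero_of_injective_algebraMap (algebraMap F M).injective
  have hp : (p : M) = 16 * m - 1 := by
    have h : p + 1 = 16 * m := by lia
    exact eq_sub_of_add_eq (by exact_mod_cast congrArg (Nat.cast : ℕ → M) h)
  set t : M := algebraMap F M θ
  have ht : t ^ 4 = p := by
    simpa using congrArg (fun x : 𝓞 F => algebraMap F M x) hθ
  have hw_sq : (w : M) ^ 2 = 2 := by
    simpa only [map_pow, map_ofNat] using congrArg (algebraMap (𝓞 M) M) hw
  have hw_conj : quadraticConj F M w = -w := congrArg (algebraMap (𝓞 M) M) hconj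
  refine ⟨(t - t ^ 3) / w, ?_, ?_⟩
  · rw [map_div₀, map_sub, map_pow, AlgEquiv.commutes, hw_conj, div_neg]
  · rw [div_pow, hw_sq, div_eq_iff two_ne_zero]
    linear_combination (t ^ 2 - 2) * (ht.trans hp)

/-- For `p = 16m - 1` the integer is `ω = (1 + (θ - θ³) / √2) / 2`, a root of
`X² - X - 2m(θ² - 2)`. -/
theorem exists_integer_sq_two_mul_sub_one_eq (hmod : p % 16 = 15) (hθ : θ ^ 4 = p)
    (hw : w ^ 2 = 2) (hconj : integerConj F M w = -w) :
    ∃ ω : 𝓞 M, integerConj F M ω = 1 - ω ∧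
      (2 * ω - 1) ^ 2 = 1 + 8 * ((p / 16 + 1 : ℕ) : 𝓞 M) * (algebraMap (𝓞 F) (𝓞 M) θ ^ 2 - 2) := by
  obtain ⟨v, hv_conj, hv⟩ := exists_sq_eq_one_add_eight_mul_of_conj_eq_neg hmod hθ hw hconj
  have : CharZero M := charZero_of_injective_algebraMap (algebraMap F M).injective
  set c : 𝓞 M := (p / 16 + 1 : ℕ) * (algebraMap (𝓞 F) (𝓞 M) θ ^ 2 - 2) with hc_def
  have hc : algebraMap (𝓞 M) M c = (p / 16 + 1 : ℕ) * (algebraMap F M θ ^ 2 - 2) := by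
    rw [hc_def, map_mul, map_sub, map_pow, map_natCast, map_ofNat]
    rfl
  have hω : IsIntegral (𝓞 M) ((1 + v) / 2) := by
    refine ⟨.X ^ 2 - .X - .C (2 * c), by monicity!, ?_⟩
    rw [Polynomial.eval₂_sub, Polynomial.eval₂_sub, Polynomial.eval₂_pow, Polynomial.eval₂_X,
      Polynomial.eval₂_C, map_mul, map_ofNat, hc]
    linear_combination hv / 4
  refine ⟨⟨(1 + v) / 2, isIntegral_trans _ hω⟩, RingOfIntegers.ext ?_, RingOfIntegers.ext ?_⟩
  · change quadraticConj F M ((1 + v) / 2) = 1 - (1 + v) / 2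
    rw [map_div₀, map_add, map_one, hv_conj, map_ofNat]
    ring
  · rw [mul_assoc, ← hc_def]
    change (2 * ((1 + v) / 2) - 1) ^ 2 = algebraMap (𝓞 M) M (1 + 8 * c)
    rw [map_add, map_mul, map_one, map_ofNat, hc]
    linear_combination hv

theorem span_sub_integerConj_eq_top (hmod : p % 16 = 15) (hθ : θ ^ 4 = p)
    (hw : w ^ 2 = 2) (hconj : integerConj F M w = -w) :
    Ideal.span (Set.range fun y => y - integerConj F M y) = ⊤ := by
  obtain ⟨ω, hω_conj, hω⟩ := exists_integer_sq_two_mul_sub_one_eq hmod hθ hw hconj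
  set c := ((p / 16 + 1 : ℕ) : 𝓞 M) * (algebraMap (𝓞 F) (𝓞 M) θ ^ 2 - 2)
  have hone : (1 : 𝓞 M) =
      (2 * ω - 1) * (ω - integerConj F M ω) - 2 * c * w * (w - integerConj F M w) := by
    rw [hω_conj, hconj]
    linear_combination 4 * c * hw - hω
  rw [Ideal.eq_top_iff_one, hone]
  exact sub_mem (Ideal.mul_mem_left _ _ (Ideal.subset_span ⟨ω, rfl⟩))
    (Ideal.mul_mem_left _ _ (Ideal.subset_span ⟨w, rfl⟩))

end Unramified

section ClassGroupTwoTorsion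

variable {F : Type*} [Field F] [NumberField F]

theorem card_two_torsion_dvd_of_selmerIndex_dvd {n d : ℕ} (hn : n ≤ Units.rank F + 1)
    (h : selmerIndex F ∣ 2 ^ n * d) :
    Nat.card (powMonoidHom (α := IdealClassGroup F) 2).ker ∣ d := by
  rw [selmerIndex_eq, ← Nat.add_sub_of_le hn, pow_add, mul_assoc] at h
  exact dvd_of_mul_left_dvd (Nat.dvd_of_mul_dvd_mul_left (by positivity) h)

theorem mem_range_toPrincipalIdeal_of_sq_mem
    (h : Nat.card (powMonoidHom (α := IdealClassGroup F) 2).ker = 1) {a : IdealGroup F}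
    (ha : a ^ 2 ∈ (toPrincipalIdeal (𝓞 F) F).range) : a ∈ (toPrincipalIdeal (𝓞 F) F).range := by
  have hmem : (a : IdealClassGroup F) ∈ (powMonoidHom (α := IdealClassGroup F) 2).ker :=
    (QuotientGroup.eq_one_iff (a ^ 2)).2 ha
  rw [Subgroup.card_eq_one.1 h, Subgroup.mem_bot] at hmem
  exact (QuotientGroup.eq_one_iff a).1 hmem

theorem selmerIndex_rat : selmerIndex ℚ = 2 := by
  have hcl : Nat.card (IdealClassGroup ℚ) = 1 := by
    rw [card_idealClassGroup, Rat.classNumber_eq]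
  have := Nat.card_eq_one_iff_unique.1 hcl |>.1
  have hrank : Units.rank ℚ = 0 := by
    rw [Units.rank, Fintype.card_eq_one_iff_nonempty_unique.2 ⟨inferInstance⟩]
  rw [selmerIndex_eq, hrank, Nat.card_unique]
  rfl

end ClassGroupTwoTorsion

section TwoIdeal

open scoped nonZeroDivisors

variable {F M : Type*} [Field F] [NumberField F] [Field M] [NumberField M]

/-- The ideal `(2, 1 - s)`, which in the tower of square roots below is the prime above `2`. -/
def twoIdeal (s : 𝓞 F) : (Ideal (𝓞 F))⁰ :=
  ⟨Ideal.span {2, 1 - s}, mem_nonZeroDivisors_of_ne_zero fun h =>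
    two_ne_zero (Ideal.span_eq_bot.1 h 2 (Set.mem_insert _ _))⟩

theorem mk0_twoIdeal_sq [Algebra F M] {r : 𝓞 F} {s : 𝓞 M}
    (hs : s ^ 2 = algebraMap (𝓞 F) (𝓞 M) r) (h : (2 : 𝓞 F) ∈ Ideal.span {4, 1 - r}) :
    FractionalIdeal.mk0 M (twoIdeal s) ^ 2 =
      extendIdeal (algebraMap F M) (FractionalIdeal.mk0 F (twoIdeal r)) := by
  have h' : (2 : 𝓞 M) ∈ Ideal.span {4, 1 - algebraMap (𝓞 F) (𝓞 M) r} := by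
    have := Ideal.mem_map_of_mem (algebraMap (𝓞 F) (𝓞 M)) h
    simpa only [Ideal.map_span, Set.image_pair, map_ofNat, map_sub, map_one] using this
  rw [extendIdeal_mk0 (J := twoIdeal s ^ 2), map_pow]
  change Ideal.map (algebraMap (𝓞 F) (𝓞 M)) (Ideal.span {2, 1 - r}) = Ideal.span {2, 1 - s} ^ 2
  rw [span_two_one_sub_sq hs h', Ideal.map_span, Set.image_pair, map_ofNat, map_sub, map_one]

end TwoIdeal

section Tower

variable {k : Type*} [Field k] [NumberField k] {p : ℕ} {ρ : 𝓞 k}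

theorem sq_sub_mul_sq_ne_neg_sq_of_ringHom_real_neg {F : Type*} [Field F] {r : F} (ψ : F →+* ℝ)
    (hψ : ψ r < 0) (u v : F) {c : F} (hc : c ≠ 0) : u ^ 2 - r * v ^ 2 ≠ -c ^ 2 := by
  intro h
  have hψc : 0 < ψ c ^ 2 := by have := (map_ne_zero ψ).2 hc; positivity
  have := congrArg ψ h
  simp only [map_sub, map_mul, map_pow, map_neg] at this
  nlinarith [sq_nonneg (ψ u), mul_nonneg (neg_nonneg.2 hψ.le) (sq_nonneg (ψ v))]

theorem mk0_twoIdeal_sq_eq_extendIdeal_two (hmod : p % 4 = 3) (hρ : ρ ^ 2 = p) :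
    FractionalIdeal.mk0 k (twoIdeal ρ) ^ 2 =
      extendIdeal (algebraMap ℚ k) (toPrincipalIdeal (𝓞 ℚ) ℚ (Units.mk0 2 two_ne_zero)) := by
  rw [mk0_twoIdeal_sq (F := ℚ) (r := (p : 𝓞 ℚ)) (by rw [hρ, map_natCast])
    (two_mem_span_four_one_sub_natCast _ hmod)]
  exact congrArg _ (mk0_eq_toPrincipalIdeal (span_two_one_sub_natCast _ (by lia)) rfl)

theorem coe_ne_zero_of_sq_eq_prime (hp : p.Prime) (hρ : ρ ^ 2 = p) : (ρ : k) ≠ 0 := by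
  intro h
  rw [RingOfIntegers.coe_eq_zero_iff.1 h, zero_pow two_ne_zero] at hρ
  exact hp.ne_zero (by exact_mod_cast hρ.symm)

theorem coe_sq_eq_algebraMap_natCast (hρ : ρ ^ 2 = p) : (ρ : k) ^ 2 = algebraMap ℚ k p := by
  simpa only [map_pow, map_natCast] using congrArg (algebraMap (𝓞 k) k) hρ

variable [Algebra.IsQuadraticExtension ℚ k]

theorem quadraticConj_eq_neg_of_sq_eq_prime (hp : p.Prime) (hmod : p % 4 = 3) (hρ : ρ ^ 2 = p) :
    quadraticConj ℚ k ρ = -ρ :=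
  quadraticConj_eq_neg_of_ne_neg_sq (coe_sq_eq_algebraMap_natCast hρ)
    (coe_ne_zero_of_sq_eq_prime hp hρ) fun u v _ => rat_sq_sub_prime_mul_sq_ne_neg_sq hp hmod u v

theorem exists_ringHom_real_neg (hp : p.Prime) (hmod : p % 4 = 3) (hρ : ρ ^ 2 = p)
    (φ : k →+* ℝ) : ∃ ψ : k →+* ℝ, ψ ρ < 0 := by
  rcases ((map_ne_zero φ).2 (coe_ne_zero_of_sq_eq_prime hp hρ)).lt_or_gt with h | h
  · exact ⟨φ, h⟩
  · refine ⟨φ.comp (quadraticConj ℚ k : k →+* k), ?_⟩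
    change φ (quadraticConj ℚ k ρ) < 0
    rwa [quadraticConj_eq_neg_of_sq_eq_prime hp hmod hρ, map_neg, neg_lt_zero]

theorem not_isSquare_two_of_sq_eq_prime (hp : p.Prime) (hmod : p % 4 = 3) (hρ : ρ ^ 2 = p) :
    ¬IsSquare (2 : k) := by
  intro h
  have h2 : IsSquare (algebraMap ℚ k 2) := by rwa [map_ofNat]
  rcases isSquare_or_isSquare_mul_of_isSquare_algebraMap (coe_sq_eq_algebraMap_natCast hρ)
    (quadraticConj_eq_neg_of_sq_eq_prime hp hmod hρ) h2 with h | h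
  · exact not_isSquare_of_mod_four_eq_two (n := 2) rfl (Rat.isSquare_natCast_iff.1 h)
  · exact not_isSquare_of_mod_four_eq_two (n := 2 * p) (by lia)
      (Rat.isSquare_natCast_iff.1 (by exact_mod_cast h))

theorem selmerIndex_dvd_four (hp : p.Prime) (hmod : p % 4 = 3) (hρ : ρ ^ 2 = p) :
    selmerIndex k ∣ 4 := by
  have hfinrank : Module.finrank ℚ k = 2 := Algebra.IsQuadraticExtension.finrank_eq_two ℚ k
  have h := selmerIndex_dvd_sq (F := ℚ) (r := (p : 𝓞 ℚ)) hp (by rw [hρ, map_natCast])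
    (by rw [hfinrank, hρ]) (by rw [hfinrank]; exact span_two_one_sub_pow_two hρ hmod)
    (mk0_twoIdeal_sq_eq_extendIdeal_two hmod hρ) fun u v c hc => by
      simpa only [map_natCast] using rat_sq_sub_prime_mul_sq_ne_neg_sq hp hmod u v hc
  rwa [selmerIndex_rat] at h

theorem exists_mk0_twoIdeal_eq_toPrincipalIdeal (hp : p.Prime) (hmod : p % 4 = 3)
    (hρ : ρ ^ 2 = p) (φ : k →+* ℝ) :
    ∃ τ, FractionalIdeal.mk0 k (twoIdeal ρ) = toPrincipalIdeal (𝓞 k) k τ := by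
  have hrank := finrank_le_two_mul_unitsRank_add_one φ
  rw [Algebra.IsQuadraticExtension.finrank_eq_two] at hrank
  have hcard := card_two_torsion_dvd_of_selmerIndex_dvd (n := 2) (d := 1) (by lia)
    (selmerIndex_dvd_four hp hmod hρ)
  obtain ⟨τ, hτ⟩ := mem_range_toPrincipalIdeal_of_sq_mem (Nat.dvd_one.1 hcard)
    (a := FractionalIdeal.mk0 k (twoIdeal ρ)) <| by
      rw [mk0_twoIdeal_sq_eq_extendIdeal_two hmod hρ, extendIdeal_toPrincipalIdeal]
      exact ⟨_, rfl⟩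
  exact ⟨τ, hτ.symm⟩

variable {K : Type*} [Field K] [Algebra k K] [Algebra.IsQuadraticExtension k K] {θ : 𝓞 K}

theorem not_isSquare_two (hp : p.Prime) (hmod : p % 4 = 3) (hρ : ρ ^ 2 = p)
    (hθ : θ ^ 2 = algebraMap (𝓞 k) (𝓞 K) ρ) (φ : k →+* ℝ) : ¬IsSquare (2 : K) := by
  intro h
  have h2 : IsSquare (algebraMap k K 2) := by rwa [map_ofNat]
  have hθ' : (θ : K) ^ 2 = algebraMap k K ρ := congrArg (algebraMap (𝓞 K) K) hθ
  have hθ0 : (θ : K) ≠ 0 := fun h => coe_ne_zero_of_sq_eq_prime hp hρ <|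
    (map_eq_zero (algebraMap k K)).1 (by rw [← hθ', h, zero_pow two_ne_zero])
  obtain ⟨ψ, hψ⟩ := exists_ringHom_real_neg hp hmod hρ φ
  have hconj := quadraticConj_eq_neg_of_ne_neg_sq hθ' hθ0 fun u v _ =>
    sq_sub_mul_sq_ne_neg_sq_of_ringHom_real_neg ψ hψ u v
  rcases isSquare_or_isSquare_mul_of_isSquare_algebraMap hθ' hconj h2 with h | h
  · exact not_isSquare_two_of_sq_eq_prime hp hmod hρ h
  · have := (h.map ψ).nonneg
    rw [map_mul, map_ofNat] at this
    linarith

variable [NumberField K]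

theorem card_two_torsion_dvd_two (hp : p.Prime) (hmod : p % 4 = 3) (hρ : ρ ^ 2 = p)
    (hθ : θ ^ 2 = algebraMap (𝓞 k) (𝓞 K) ρ) (φ : K →+* ℝ) :
    Nat.card (powMonoidHom (α := IdealClassGroup K) 2).ker ∣ 2 := by
  have hfinrank : Module.finrank ℚ K = 4 := by
    rw [← Module.finrank_mul_finrank ℚ k K, Algebra.IsQuadraticExtension.finrank_eq_two,
      Algebra.IsQuadraticExtension.finrank_eq_two]
  have hθp : θ ^ 4 = p := by
    rw [show θ ^ 4 = (θ ^ 2) ^ 2 by ring, hθ, ← map_pow, hρ, map_natCast]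
  have hmem := two_mem_span_four_of_sq_eq hρ (two_mem_span_four_one_sub_natCast _ hmod)
  obtain ⟨τ, hτ⟩ := exists_mk0_twoIdeal_eq_toPrincipalIdeal hp hmod hρ (φ.comp (algebraMap k K))
  obtain ⟨ψ, hψ⟩ := exists_ringHom_real_neg hp hmod hρ (φ.comp (algebraMap k K))
  have hP : (twoIdeal θ).1 ^ 4 = Ideal.span {2} := span_two_one_sub_pow_four hθp hmod
  have h := selmerIndex_dvd_sq hp hθ (by rw [hfinrank, hθp]) (by rw [hfinrank, hP])
    (τ := τ) (by rw [mk0_twoIdeal_sq hθ hmem, hτ])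
    fun u v _ => sq_sub_mul_sq_ne_neg_sq_of_ringHom_real_neg ψ hψ u v
  have hrank := finrank_le_two_mul_unitsRank_add_one φ
  refine card_two_torsion_dvd_of_selmerIndex_dvd (n := 3) (by lia) ?_
  exact h.trans (pow_dvd_pow_of_dvd (selmerIndex_dvd_four hp hmod hρ) 2)

variable {L : Type*} [Field L] [NumberField L] [Algebra K L] [Algebra.IsQuadraticExtension K L]
  {w : 𝓞 L}

theorem four_dvd_classNumber_iff_two_dvd_classNumber (hp : p.Prime) (hmod : p % 16 = 15)
    (hρ : ρ ^ 2 = p) (hθ : θ ^ 2 = algebraMap (𝓞 k) (𝓞 K) ρ) (hw : w ^ 2 = 2) (φ : K →+* ℝ) :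
    4 ∣ classNumber K ↔ 2 ∣ classNumber L := by
  have hθp : θ ^ 4 = p := by
    rw [show θ ^ 4 = (θ ^ 2) ^ 2 by ring, hθ, ← map_pow, hρ, map_natCast]
  have hw' : (w : L) ^ 2 = 2 := by
    simpa only [map_pow, map_ofNat] using congrArg (algebraMap (𝓞 L) L) hw
  have hw0 : (w : L) ≠ 0 := fun h => by simp [h] at hw'
  have hconj : quadraticConj K L w = -w :=
    quadraticConj_eq_neg (d := 2) (by rw [hw', map_ofNat]) fun y hy =>
      not_isSquare_two hp (by lia) hρ hθ (φ.comp (algebraMap k K)) ⟨y, by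
        refine (algebraMap K L).injective ?_
        rw [map_mul, hy, map_ofNat, ← pow_two, hw']⟩
  have := isUnramifiedAtInfinitePlaces_of_sq_eq_natCast (n := 2) hw' hw0 hconj
  rw [← card_idealClassGroup, ← card_idealClassGroup]
  constructor
  · intro hK
    by_contra hL
    exact (quadraticIdealDatum K L).not_four_dvd_card_quotient_range hL
      (card_two_torsion_dvd_two hp (by lia) hρ hθ φ) hK
  · refine (quadraticIdealDatum K L).four_dvd_card_quotient_range ?_ ?_
    · simp only [finrank_ker_toPrincipalIdeal, unitsRank_eq_two_mul_add_one (F := K)]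
    · exact ker_divConj_conjIdeal_le_range_extend
        (span_sub_integerConj_eq_top hmod hθp hw (RingOfIntegers.ext hconj))

end Tower

section RealTower

theorem classNumber_eq_of_ringEquiv {F M : Type*} [Field F] [NumberField F] [Field M]
    [NumberField M] (e : F ≃+* M) : classNumber F = classNumber M :=
  Fintype.card_congr (ClassGroup.mulEquiv (RingOfIntegers.mapRingEquiv e)).toEquiv

variable {F E : Type*} [Field F] [Field E] [Algebra F E]

theorem restrictScalars_adjoin_adjoin_simple_of_sq_eq {x y : E} {S : Set E} (hxy : x ^ 2 = y)
    (hxS : x ∈ S) : (adjoin F⟮y⟯ S).restrictScalars F = adjoin F S := by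
  have hy : y ∈ adjoin F S := hxy ▸ pow_mem (subset_adjoin F S hxS) 2
  rw [adjoin_adjoin_left, adjoin_union]
  exact sup_eq_right.2 (adjoin_simple_le_iff.2 hy)

theorem isQuadraticExtension_adjoin_simple {x : E} {d : F} (hx : x ^ 2 = algebraMap F E d)
    (hd : ¬IsSquare d) : Algebra.IsQuadraticExtension F F⟮x⟯ := by
  have hirr : Irreducible (.X ^ 2 - .C d : Polynomial F) :=
    X_pow_sub_C_irreducible_of_prime Nat.prime_two fun y hy => hd ⟨y, by rw [← hy, pow_two]⟩
  have hmonic : (.X ^ 2 - .C d : Polynomial F).Monic := Polynomial.monic_X_pow_sub_C d two_ne_zero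
  have hroot : Polynomial.aeval x (.X ^ 2 - .C d : Polynomial F) = 0 := by simp [hx]
  refine ⟨?_⟩
  rw [adjoin.finrank ⟨_, hmonic, hroot⟩, ← minpoly.eq_of_irreducible_of_monic hirr hroot hmonic,
    Polynomial.natDegree_X_pow_sub_C]

theorem exists_integer_adjoin_simple_sq_eq {x : E} {d : 𝓞 F} (hx : x ^ 2 = algebraMap F E d) :
    ∃ y : 𝓞 F⟮x⟯, algebraMap F⟮x⟯ E y = x ∧ y ^ 2 = algebraMap (𝓞 F) (𝓞 F⟮x⟯) d := by
  have hgen : AdjoinSimple.gen F x ^ 2 = algebraMap F F⟮x⟯ d := Subtype.ext hx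
  have hint : IsIntegral ℤ (AdjoinSimple.gen F x) := .of_pow two_pos <| by
    rw [hgen]
    exact (RingOfIntegers.isIntegral_coe d).map (algebraMap F F⟮x⟯).toIntAlgHom
  exact ⟨⟨_, hint⟩, rfl, RingOfIntegers.ext hgen⟩

theorem four_dvd_classNumber_iff_two_dvd_classNumber_of_real {p : ℕ} (hp : p.Prime)
    (hmod : p % 16 = 15) {r t s : ℝ} (hr : r ^ 2 = p) (ht : t ^ 2 = r) (hs : s ^ 2 = 2)
    [NumberField ℚ⟮r⟯⟮t⟯] [NumberField ℚ⟮r⟯⟮t⟯⟮s⟯] :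
    4 ∣ classNumber ℚ⟮r⟯⟮t⟯ ↔ 2 ∣ classNumber ℚ⟮r⟯⟮t⟯⟮s⟯ := by
  have hk : Algebra.IsQuadraticExtension ℚ ℚ⟮r⟯ :=
    isQuadraticExtension_adjoin_simple (d := (p : ℚ)) (by rw [hr, map_natCast])
      (Rat.isSquare_natCast_iff.not.2 hp.prime.not_isSquare)
  have : NumberField ℚ⟮r⟯ := .of_module_finite ℚ ℚ⟮r⟯
  let φ : ℚ⟮r⟯ →+* ℝ := algebraMap ℚ⟮r⟯ ℝ
  obtain ⟨ρ, hρr, hρ⟩ := exists_integer_adjoin_simple_sq_eq (F := ℚ) (d := (p : 𝓞 ℚ))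
    (by simpa using hr)
  rw [map_natCast] at hρ
  have htρ : t ^ 2 = algebraMap ℚ⟮r⟯ ℝ ρ := by rw [ht, hρr]
  obtain ⟨ψ, hψ⟩ := exists_ringHom_real_neg hp (by lia) hρ φ
  have hkK : Algebra.IsQuadraticExtension ℚ⟮r⟯ ℚ⟮r⟯⟮t⟯ :=
    isQuadraticExtension_adjoin_simple htρ fun h => (h.map ψ).nonneg.not_gt hψ
  obtain ⟨θ, -, hθ⟩ := exists_integer_adjoin_simple_sq_eq htρ
  have hKL : Algebra.IsQuadraticExtension ℚ⟮r⟯⟮t⟯ ℚ⟮r⟯⟮t⟯⟮s⟯ :=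
    isQuadraticExtension_adjoin_simple (d := 2) (by rw [hs, map_ofNat])
      (not_isSquare_two hp (by lia) hρ hθ φ)
  obtain ⟨w, -, hw⟩ := exists_integer_adjoin_simple_sq_eq (F := ℚ⟮r⟯⟮t⟯) (d := 2)
    (hs.trans (map_ofNat (algebraMap ℚ⟮r⟯⟮t⟯ ℝ) 2).symm)
  rw [map_ofNat] at hw
  exact four_dvd_classNumber_iff_two_dvd_classNumber hp hmod hρ hθ hw (algebraMap ℚ⟮r⟯⟮t⟯ ℝ)

end RealTower

/-- For a prime `p ≡ -1 (mod 16)`, with `K = ℚ(⁴√p) ⊂ ℝ` and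
`L = K(√2) = ℚ(⁴√p, √2) ⊂ ℝ`, one has `4 ∣ h_K` if and only if `2 ∣ h_L`. -/
theorem four_dvd_classNumber_iff_two_dvd_classNumber_adjoin_sqrt_two
    (p : ℕ) (hp : p.Prime) (hmod : p % 16 = 15)
    (K L : IntermediateField ℚ ℝ)
    (hK : K = ℚ⟮Real.sqrt (Real.sqrt p)⟯)
    (hL : L = IntermediateField.adjoin ℚ {Real.sqrt (Real.sqrt p), Real.sqrt 2})
    [NumberField K] [NumberField L] :
    4 ∣ classNumber K ↔ 2 ∣ classNumber L := by
  have hr : √(p : ℝ) ^ 2 = p := Real.sq_sqrt p.cast_nonneg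
  set r := √(p : ℝ)
  have ht : √r ^ 2 = r := Real.sq_sqrt (Real.sqrt_nonneg _)
  set t := √r
  have hK' := hK.trans
    (restrictScalars_adjoin_adjoin_simple_of_sq_eq ht (Set.mem_singleton t)).symm
  have hL' := hL.trans
    (restrictScalars_adjoin_adjoin_simple_of_sq_eq ht (Set.mem_insert t {√2})).symm
  rw [← adjoin_simple_adjoin_simple] at hL'
  let eK : K ≃+* ℚ⟮r⟯⟮t⟯ := (equivOfEq hK').toRingEquiv
  let eL : L ≃+* ℚ⟮r⟯⟮t⟯⟮√2⟯ := (equivOfEq hL').toRingEquiv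
  have : NumberField ℚ⟮r⟯⟮t⟯ := .of_ringEquiv _ _ eK
  have : NumberField ℚ⟮r⟯⟮t⟯⟮√2⟯ := .of_ringEquiv _ _ eL
  rw [classNumber_eq_of_ringEquiv eK, classNumber_eq_of_ringEquiv eL]
  exact four_dvd_classNumber_iff_two_dvd_classNumber_of_real hp hmod hr ht
    (Real.sq_sqrt zero_le_two)
end

section
/- Let p ≡ −1 (mod 16) be a prime. Then the class numbers of the quadratic fields ℚ(√p), ℚ(√2p), ℚ(√2) and of the biquadratic field F = ℚ(√2, √p) are all odd. -/
open NumberField IntermediateField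

/-!
Let `K/k` be a quadratic extension with `Gal(K/k) = ⟨σ⟩` and `k` of odd class number. If
`I ^ 2 = (x)`, then `I * σ I` is invariant under `σ`. An invariant ideal comes from `k` up to
ramified primes, so if these are principal, then `I * σ I = (y)` is principal and
`(x) * σ I = (y) * I`. The norm of `y / x` is a unit `u` of `k`; if `u` is also the norm of a unit
of `K`, Hilbert 90 replaces `I` by an invariant ideal of the same class. Hence `K` has odd class
number.

For `ℚ(√p)` and `ℚ(√2p)` over `ℚ` with `p ≡ 3 (mod 4)`, both conditions hold because `X² - pY²`
represents `2` or `-2`, the form `2X² - pY²` represents `1` or `-1`, and `-1` is a norm neither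
from `ℚ(√p)` nor from `ℚ(√2p)`. The two representations come from factoring `x² - 1` for the
fundamental solution `(x, y)` of a Pell equation.

For `F = ℚ(√2, √p)` over `k = ℚ(√p)` with `p ≡ 7 (mod 8)`, every unit `e` of `k` is, up to a
factor `±1` or `±2`, a square in `k`. So `±e` is a square in `F`, and the unit `1 + √2` of norm `-1`
adjusts the sign. Ramified primes divide `2`. From `x² - p y² = 2` and `2 u² - p v² = 1` one gets
units `η = (x + y √p) / √2` and `θ = u √2 + v √p` with
`((1 + η) (1 + θ))² = √2 ^ 3 (x + √2) (1 + u √2) η θ`; in `ℤ[√2]` the product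
`(x + √2) (1 + u √2)` is a square or `p` times a square up to units, hence it is a square up to
units in `F`. Therefore `√2` is a square up to units, so the prime of `F` above `2` is principal.
-/

section ClassNumberParity

open scoped Pointwise nonZeroDivisors

theorem classGroup_mk0_pow {R : Type*} [CommRing R] [IsDedekindDomain R] {I : Ideal R}
    (hI : I ∈ (Ideal R)⁰) (n : ℕ) :
    ClassGroup.mk0 ⟨I ^ n, pow_mem hI n⟩ = ClassGroup.mk0 ⟨I, hI⟩ ^ n := by
  rw [← map_pow]
  rfl

theorem isPrincipal_pow_classNumber {k : Type*} [Field k] [NumberField k] {I : Ideal (𝓞 k)}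
    (hI : I ≠ ⊥) : (I ^ classNumber k).IsPrincipal := by
  have hI₀ : I ∈ (Ideal (𝓞 k))⁰ := mem_nonZeroDivisors_of_ne_zero hI
  rw [← ClassGroup.mk0_eq_one_iff (pow_mem hI₀ _), classGroup_mk0_pow hI₀]
  exact pow_card_eq_one

theorem isPrincipal_of_span_singleton_mul {R : Type*} [CommRing R] [IsDedekindDomain R] {b : R}
    (hb : b ≠ 0) {I : Ideal R} (h : (Ideal.span {b} * I).IsPrincipal) : I.IsPrincipal := by
  obtain ⟨c, hc⟩ := h.principal
  obtain ⟨a, rfl⟩ : b ∣ c := by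
    rw [← Ideal.span_singleton_le_span_singleton, ← Ideal.submodule_span_eq, ← hc]
    exact Ideal.mul_le_left.trans le_rfl
  refine ⟨a, mul_left_cancel₀ (a := Ideal.span {b}) (by simpa using hb) ?_⟩
  rw [hc, Ideal.submodule_span_eq, Ideal.submodule_span_eq, Ideal.span_singleton_mul_span_singleton]

theorem isPrincipal_of_coprime_pow {R : Type*} [CommRing R] [IsDedekindDomain R] {I : Ideal R}
    (hI : I ≠ ⊥) {m n : ℕ} (hmn : m.Coprime n) (hm : (I ^ m).IsPrincipal)
    (hn : (I ^ n).IsPrincipal) : I.IsPrincipal := by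
  have hI₀ : I ∈ (Ideal R)⁰ := mem_nonZeroDivisors_of_ne_zero hI
  rw [← ClassGroup.mk0_eq_one_iff (pow_mem hI₀ _), classGroup_mk0_pow hI₀] at hm hn
  rw [← ClassGroup.mk0_eq_one_iff hI₀]
  simpa [hmn.gcd_eq_one] using pow_gcd_eq_one.2 ⟨hm, hn⟩

theorem smul_prod_primesOver {A B G : Type*} [CommRing A] [IsDomain A] [CommRing B]
    [IsDedekindDomain B] [Algebra A B] [Module.IsTorsionFree A B] [Algebra.IsIntegral A B] [Group G]
    [MulSemiringAction G B] [SMulCommClass G A B] (σ : G) (p : Ideal A) [p.IsMaximal] :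
    σ • ∏ P : p.primesOver B, (P : Ideal B) = ∏ P : p.primesOver B, (P : Ideal B) := by
  rw [Finset.smul_prod']
  exact Fintype.prod_equiv (MulAction.toPerm σ) _ _ fun P ↦ (Ideal.coe_smul_primesOver σ P).symm

theorem prod_primesOver_le {A B : Type*} [CommRing A] [IsDomain A] [CommRing B]
    [IsDedekindDomain B] [Algebra A B] [Module.IsTorsionFree A B] [Algebra.IsIntegral A B]
    {p : Ideal A} [p.IsMaximal] (P : p.primesOver B) : ∏ Q : p.primesOver B, (Q : Ideal B) ≤ P :=
  Ideal.le_of_dvd <| Finset.dvd_prod_of_mem (fun Q : p.primesOver B ↦ (Q : Ideal B))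
    (Finset.mem_univ P)

variable {k K : Type} [Field k] [NumberField k] [Field K] [NumberField K] [Algebra k K]

theorem isPrincipal_pow_prod_primesOver [IsGalois k K]
    (hram : ∀ P : Ideal (𝓞 K), P.IsPrime → P ≠ ⊥ → P.ramificationIdx (𝓞 k) ≠ 1 → P.IsPrincipal)
    {p : Ideal (𝓞 k)} [p.IsMaximal] (hp : p ≠ ⊥) :
    ((∏ P : p.primesOver (𝓞 K), (P : Ideal (𝓞 K))) ^ classNumber k).IsPrincipal := by
  have ramificationIdx_eq (P : p.primesOver (𝓞 K)) :
      P.1.ramificationIdx (𝓞 k) = p.ramificationIdxIn (𝓞 K) :=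
    (Ideal.ramificationIdxIn_eq_ramificationIdx p P.1 Gal(K/k)).symm
  by_cases he : p.ramificationIdxIn (𝓞 K) = 1
  · have hmap : ∏ P : p.primesOver (𝓞 K), (P : Ideal (𝓞 K)) = p.map (algebraMap (𝓞 k) (𝓞 K)) := by
      rw [Ideal.map_algebraMap_eq_finsetProd_pow hp, ← Finset.prod_set_coe]
      exact Fintype.prod_congr _ _ fun P ↦ by rw [ramificationIdx_eq, he, pow_one]
    rw [hmap, ← Ideal.map_pow]
    exact (isPrincipal_pow_classNumber hp).map_ringHom _
  · refine (Ideal.isPrincipalSubmonoid (𝓞 K)).pow_mem (prod_mem fun P _ ↦ ?_) _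
    exact hram P P.2.1 (Ideal.ne_bot_of_liesOver_of_ne_bot hp P.1) (by rwa [ramificationIdx_eq])

theorem prod_primesOver_dvd [IsGalois k K] {J P : Ideal (𝓞 K)} (hJ : J ≠ ⊥)
    (hinv : ∀ σ : Gal(K/k), σ • J = J) [P.IsMaximal] (hJP : J ≤ P) :
    ∏ Q : (P.under (𝓞 k)).primesOver (𝓞 K), (Q : Ideal (𝓞 K)) ∣ J := by
  have le_of_mem (Q : (P.under (𝓞 k)).primesOver (𝓞 K)) : J ≤ Q := by
    obtain ⟨σ, hσ⟩ := Ideal.exists_smul_eq_of_isGaloisGroup (P.under (𝓞 k)) P Q.1 Gal(K/k)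
    rw [← hσ, ← hinv σ]
    exact Ideal.pointwise_smul_le_pointwise_smul_iff.2 hJP
  rw [Finset.prod_set_coe (s := (P.under (𝓞 k)).primesOver (𝓞 K)) (f := fun Q ↦ Q)]
  refine Finset.prod_primes_dvd J (fun Q hQ ↦ ?_) fun Q hQ ↦ ?_ <;> rw [Set.mem_toFinset] at hQ
  · exact Ideal.prime_of_isPrime (ne_bot_of_le_ne_bot hJ (le_of_mem ⟨Q, hQ⟩)) hQ.1
  · exact Ideal.dvd_iff_le.2 (le_of_mem ⟨Q, hQ⟩)

theorem isPrincipal_pow_classNumber_of_forall_smul_eq [IsGalois k K]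
    (hram : ∀ P : Ideal (𝓞 K), P.IsPrime → P ≠ ⊥ → P.ramificationIdx (𝓞 k) ≠ 1 → P.IsPrincipal)
    {J : Ideal (𝓞 K)} (hJ : J ≠ ⊥) (hinv : ∀ σ : Gal(K/k), σ • J = J) :
    (J ^ classNumber k).IsPrincipal := by
  induction J using WellFoundedGT.induction with
  | ind J ih =>
    obtain rfl | hJt := eq_or_ne J ⊤
    · rw [Ideal.top_pow]
      exact top_isPrincipal
    obtain ⟨P, hP, hJP⟩ := Ideal.exists_le_maximal J hJt
    have hp : P.under (𝓞 k) ≠ ⊥ :=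
      fun h ↦ ne_bot_of_le_ne_bot hJ hJP (Ideal.eq_bot_of_comap_eq_bot h)
    obtain ⟨J', rfl⟩ := prod_primesOver_dvd hJ hinv hJP
    obtain ⟨hQ, hJ'⟩ := mul_ne_zero_iff.1 hJ
    have hlt : (∏ Q : (P.under (𝓞 k)).primesOver (𝓞 K), (Q : Ideal (𝓞 K))) * J' < J' := by
      refine Ideal.dvdNotUnit_iff_lt.1 ⟨hJ', _, fun hu ↦ hP.ne_top ?_, mul_comm _ J'⟩
      rw [← top_le_iff, ← Ideal.isUnit_iff.1 hu]
      exact prod_primesOver_le ⟨P, hP.isPrime, ⟨rfl⟩⟩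
    rw [mul_pow]
    refine (Ideal.isPrincipalSubmonoid (𝓞 K)).mul_mem (isPrincipal_pow_prod_primesOver hram hp)
      (ih J' hlt hJ' fun σ ↦ mul_left_cancel₀ hQ ?_)
    rw [← hinv σ, smul_mul', smul_prod_primesOver]

theorem exists_norm_eq_unit_of_span_mul_smul_eq [IsGalois k K] {x y : 𝓞 K}
    (hx : x ≠ 0) {I : Ideal (𝓞 K)} (hI : I ≠ ⊥) {σ : Gal(K/k)}
    (h : Ideal.span {x} * σ • I = Ideal.span {y} * I) :
    ∃ u : (𝓞 k)ˣ, Algebra.norm k (y / x : K) = (u : 𝓞 k) := by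
  have hspan : Ideal.span {Algebra.intNorm (𝓞 k) (𝓞 K) x} =
      Ideal.span {Algebra.intNorm (𝓞 k) (𝓞 K) y} := by
    have := congrArg (Ideal.relNorm (𝓞 k)) h
    rw [map_mul, map_mul, Ideal.relNorm_smul, Ideal.relNorm_singleton,
      Ideal.relNorm_singleton] at this
    exact mul_right_cancel₀ (Ideal.relNorm_eq_bot_iff.not.2 hI) this
  obtain ⟨u, hu⟩ := Ideal.span_singleton_eq_span_singleton.1 hspan
  have hnorm := congrArg (algebraMap (𝓞 k) k) hu
  rw [map_mul, Algebra.algebraMap_intNorm (L := K), Algebra.algebraMap_intNorm (L := K)] at hnorm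
  refine ⟨u, ?_⟩
  rw [div_eq_mul_inv, map_mul, Algebra.norm_inv, ← div_eq_mul_inv,
    div_eq_iff (Algebra.norm_ne_zero_iff.2 (by simpa using hx)), mul_comm, hnorm]

theorem exists_ringOfIntegers_div_smul_eq [IsGalois k K] {σ : Gal(K/k)}
    (hσ : ∀ τ, τ ∈ Subgroup.zpowers σ) {a : K} (ha : Algebra.norm k a = 1) :
    ∃ b : 𝓞 K, b ≠ 0 ∧ (b : K) = a * σ b := by
  have : IsCyclic Gal(K/k) := ⟨σ, hσ⟩
  obtain ⟨c, hc⟩ := groupCohomology.exists_div_of_norm_eq_one hσ ha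
  obtain ⟨n, hn, hint⟩ := (((IsFractionRing.isAlgebraic_iff ℤ ℚ K).2
    (Algebra.IsAlgebraic.isAlgebraic (c : K)))).exists_integral_multiple
  refine ⟨⟨n • (c : K), hint⟩, ?_, ?_⟩
  · exact fun h ↦ smul_ne_zero hn c.ne_zero (congrArg (algebraMap (𝓞 K) K) h)
  · simp [← hc, mul_left_comm]

theorem exists_smul_span_mul_eq [IsGalois k K] {σ : Gal(K/k)}
    (hσ : ∀ τ, τ ∈ Subgroup.zpowers σ)
    (hnorm : ∀ u : (𝓞 k)ˣ, (∃ a : K, Algebra.norm k a = (u : 𝓞 k)) →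
      ∃ v : 𝓞 K, RingOfIntegers.norm k v = u)
    {x y : 𝓞 K} (hx : x ≠ 0) (hy : y ≠ 0) {I : Ideal (𝓞 K)} (hI : I ≠ ⊥)
    (h : Ideal.span {x} * σ • I = Ideal.span {y} * I) :
    ∃ b : 𝓞 K, b ≠ 0 ∧ σ • (Ideal.span {b} * I) = Ideal.span {b} * I := by
  obtain ⟨u, hu⟩ := exists_norm_eq_unit_of_span_mul_smul_eq hx hI h
  obtain ⟨v, hv⟩ := hnorm u ⟨_, hu⟩
  have hvu : IsUnit v := (RingOfIntegers.isUnit_norm k).1 (hv ▸ u.isUnit)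
  have hv₀ : (v : K) ≠ 0 := by simpa using hvu.ne_zero
  obtain ⟨b, hb₀, hb⟩ := exists_ringOfIntegers_div_smul_eq hσ (a := (y : K) / x / v) (by
    rw [div_eq_mul_inv, map_mul, Algebra.norm_inv, hu, ← hv, RingOfIntegers.coe_norm,
      mul_inv_cancel₀ (Algebra.norm_ne_zero_iff.2 hv₀)])
  have hxb : v * (x * b) = y * σ • b := by
    ext
    have hx₀ : (x : K) ≠ 0 := by simpa using hx
    calc (v * (x * b) : K) = v * (x * (y / x / v * σ b)) := by rw [← hb]
      _ = y * σ b := by field_simp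
  have hspan : Ideal.span {x * b} = Ideal.span {y * σ • b} := by
    rw [← hxb, Ideal.span_singleton_mul_left_unit hvu]
  refine ⟨b, hb₀, mul_left_cancel₀ (a := Ideal.span {x * y}) (by simp [hx, hy]) ?_⟩
  simp only [← Ideal.span_singleton_mul_span_singleton] at hspan ⊢
  rw [smul_mul', Ideal.smul_closure, Set.smul_set_singleton]
  calc Ideal.span {x} * Ideal.span {y} * (Ideal.span {σ • b} * σ • I)
      = (Ideal.span {x} * σ • I) * (Ideal.span {y} * Ideal.span {σ • b}) := by ring
    _ = Ideal.span {x} * Ideal.span {y} * (Ideal.span {b} * I) := by rw [h, ← hspan]; ring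

theorem isPrincipal_pow_classNumber_of_span_mul_smul_eq [IsGalois k K]
    (hram : ∀ P : Ideal (𝓞 K), P.IsPrime → P ≠ ⊥ → P.ramificationIdx (𝓞 k) ≠ 1 → P.IsPrincipal)
    {σ : Gal(K/k)} (hσ : ∀ τ, τ ∈ Subgroup.zpowers σ)
    (hnorm : ∀ u : (𝓞 k)ˣ, (∃ a : K, Algebra.norm k a = (u : 𝓞 k)) →
      ∃ v : 𝓞 K, RingOfIntegers.norm k v = u)
    {x y : 𝓞 K} (hx : x ≠ 0) (hy : y ≠ 0) {I : Ideal (𝓞 K)} (hI : I ≠ ⊥)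
    (h : Ideal.span {x} * σ • I = Ideal.span {y} * I) : (I ^ classNumber k).IsPrincipal := by
  obtain ⟨b, hb, hbI⟩ := exists_smul_span_mul_eq hσ hnorm hx hy hI h
  have hinv (τ : Gal(K/k)) : τ • (Ideal.span {b} * I) = Ideal.span {b} * I :=
    smul_eq_self_of_mem_zpowers (hσ τ) hbI
  refine isPrincipal_of_span_singleton_mul (pow_ne_zero (classNumber k) hb) ?_
  rw [← Ideal.span_singleton_pow, ← mul_pow]
  exact isPrincipal_pow_classNumber_of_forall_smul_eq hram (mul_ne_zero (by simpa using hb) hI) hinv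

theorem isPrincipal_of_isPrincipal_sq [Algebra.IsQuadraticExtension k K]
    (hk : Odd (classNumber k))
    (hram : ∀ P : Ideal (𝓞 K), P.IsPrime → P ≠ ⊥ → P.ramificationIdx (𝓞 k) ≠ 1 → P.IsPrincipal)
    (hnorm : ∀ u : (𝓞 k)ˣ, (∃ a : K, Algebra.norm k a = (u : 𝓞 k)) →
      ∃ v : 𝓞 K, RingOfIntegers.norm k v = u)
    {I : Ideal (𝓞 K)} (hI : I ≠ ⊥) (hI2 : (I ^ 2).IsPrincipal) : I.IsPrincipal := by
  have hcard : Nat.card Gal(K/k) = 2 := by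
    rw [IsGalois.card_aut_eq_finrank, Algebra.IsQuadraticExtension.finrank_eq_two]
  obtain ⟨σ, hσ, -⟩ := (Nat.card_eq_two_iff' (1 : Gal(K/k))).1 hcard
  have hgen (τ : Gal(K/k)) : τ ∈ Subgroup.zpowers σ := mem_zpowers_of_prime_card hcard hσ
  have hσσ : σ * σ = 1 := by rw [← sq, ← hcard, pow_card_eq_one']
  have hσI : σ • I ≠ ⊥ := by rwa [Ne, ← Ideal.smul_bot σ, (MulAction.injective σ).eq_iff]
  have hinv (τ : Gal(K/k)) : τ • (I * σ • I) = I * σ • I := by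
    refine smul_eq_self_of_mem_zpowers (hgen τ) ?_
    rw [smul_mul', smul_smul, hσσ, one_smul, mul_comm]
  have hσI2 : ((σ • I) ^ 2).IsPrincipal := by
    rw [← smul_pow', Ideal.pointwise_smul_def]
    exact hI2.map_ringHom _
  have hnormI : (I * σ • I).IsPrincipal := by
    refine isPrincipal_of_coprime_pow (mul_ne_zero hI hσI) hk.coprime_two_left ?_
      (isPrincipal_pow_classNumber_of_forall_smul_eq hram (mul_ne_zero hI hσI) hinv)
    rw [mul_pow]
    exact (Ideal.isPrincipalSubmonoid (𝓞 K)).mul_mem hI2 hσI2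
  obtain ⟨x, hx⟩ := hI2.principal
  obtain ⟨y, hy⟩ := hnormI.principal
  rw [Ideal.submodule_span_eq] at hx hy
  refine isPrincipal_of_coprime_pow hI hk.coprime_two_left hI2 ?_
  refine isPrincipal_pow_classNumber_of_span_mul_smul_eq hram hgen hnorm (x := x) (y := y)
    ?_ ?_ hI ?_
  · rintro rfl
    exact pow_ne_zero 2 hI (by simpa using hx)
  · rintro rfl
    exact mul_ne_zero hI hσI (by simpa using hy)
  · rw [← hx, ← hy]
    ring

theorem odd_classNumber_of_isQuadraticExtension [Algebra.IsQuadraticExtension k K]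
    (hk : Odd (classNumber k))
    (hram : ∀ P : Ideal (𝓞 K), P.IsPrime → P ≠ ⊥ → P.ramificationIdx (𝓞 k) ≠ 1 → P.IsPrincipal)
    (hnorm : ∀ u : (𝓞 k)ˣ, (∃ a : K, Algebra.norm k a = (u : 𝓞 k)) →
      ∃ v : 𝓞 K, RingOfIntegers.norm k v = u) :
    Odd (classNumber K) := by
  rw [← Nat.not_even_iff_odd]
  intro heven
  obtain ⟨c, hc⟩ := exists_prime_orderOf_dvd_card (G := ClassGroup (𝓞 K)) 2 heven.two_dvd
  obtain ⟨⟨I, hI₀⟩, rfl⟩ := ClassGroup.mk0_surjective c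
  have hI2 : (I ^ 2).IsPrincipal := by
    rw [← ClassGroup.mk0_eq_one_iff (pow_mem hI₀ _), classGroup_mk0_pow hI₀, ← hc,
      pow_orderOf_eq_one]
  have hI := isPrincipal_of_isPrincipal_sq hk hram hnorm (nonZeroDivisors.ne_zero hI₀) hI2
  rw [(ClassGroup.mk0_eq_one_iff hI₀).2 hI, orderOf_one] at hc
  exact OfNat.one_ne_ofNat 2 hc

end ClassNumberParity

section QuadraticExtension

theorem isQuadraticExtension_of_eq_adjoin_simple {k M : Type*} [Field k] [Field M] [Algebra k M]
    {L : IntermediateField k M} {r : M} {d : k} (hL : L = k⟮r⟯) (hr : r ^ 2 = algebraMap k M d)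
    (hrk : r ∉ (algebraMap k M).range) : Algebra.IsQuadraticExtension k L := by
  have hroot : Polynomial.aeval r (Polynomial.X ^ 2 - Polynomial.C d) = 0 := by simp [hr]
  have hmonic : (Polynomial.X ^ 2 - Polynomial.C d).Monic :=
    Polynomial.monic_X_pow_sub_C d two_ne_zero
  have hint : IsIntegral k r := ⟨_, hmonic, hroot⟩
  refine ⟨?_⟩
  rw [hL, IntermediateField.adjoin.finrank hint]
  refine le_antisymm ?_ ((minpoly.two_le_natDegree_iff hint).2 hrk)
  simpa using Polynomial.natDegree_le_of_dvd (minpoly.dvd k r hroot) hmonic.ne_zero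

variable {k K : Type*} [Field k] [Field K] [Algebra k K] [Algebra.IsQuadraticExtension k K]

theorem exists_eq_algebraMap_add_algebraMap_mul {r : K} (hrk : r ∉ (algebraMap k K).range)
    (a : K) : ∃ x y : k, a = algebraMap k K x + algebraMap k K y * r := by
  have hli : LinearIndependent k ![1, r] := by
    refine LinearIndependent.pair_iff.2 fun s t hst ↦ ?_
    have ht : t = 0 := by
      by_contra ht
      refine hrk ⟨-s / t, ?_⟩
      rw [Algebra.smul_def, Algebra.smul_def, mul_one] at hst
      have : algebraMap k K t ≠ 0 := by simpa using ht
      rw [map_div₀, map_neg, div_eq_iff this]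
      linear_combination -hst
    subst ht
    simpa using hst
  have hspan : a ∈ Submodule.span k {1, r} := by
    have := hli.span_eq_top_of_card_eq_finrank' (by
      rw [Fintype.card_fin, Algebra.IsQuadraticExtension.finrank_eq_two])
    rw [Matrix.range_cons_cons_empty] at this
    simp [this]
  obtain ⟨x, y, rfl⟩ := Submodule.mem_span_pair.1 hspan
  exact ⟨x, y, by simp [Algebra.smul_def]⟩

section Sqrt

variable {r : K} {d : k} (hr : r ^ 2 = algebraMap k K d) (hrk : r ∉ (algebraMap k K).range)
include hr hrk

theorem gal_apply_eq_neg {σ : Gal(K/k)} (hσ : σ ≠ 1) : σ r = -r := by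
  have hsq : σ r ^ 2 = r ^ 2 := by rw [← map_pow, hr, σ.commutes]
  refine (sq_eq_sq_iff_eq_or_eq_neg.1 hsq).resolve_left fun hfix ↦ hσ ?_
  ext a
  obtain ⟨x, y, rfl⟩ := exists_eq_algebraMap_add_algebraMap_mul hrk a
  simp [hfix]

theorem norm_algebraMap_add_algebraMap_mul [IsGalois k K] (x y : k) :
    Algebra.norm k (algebraMap k K x + algebraMap k K y * r) = x ^ 2 - d * y ^ 2 := by
  classical
  have hcard : Nat.card Gal(K/k) = 2 := by
    rw [IsGalois.card_aut_eq_finrank, Algebra.IsQuadraticExtension.finrank_eq_two]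
  obtain ⟨σ, hσ, huniq⟩ := (Nat.card_eq_two_iff' (1 : Gal(K/k))).1 hcard
  have huniv : (Finset.univ : Finset Gal(K/k)) = {1, σ} := by
    ext τ
    simpa using or_iff_not_imp_left.2 (huniq τ)
  apply (algebraMap k K).injective
  rw [Algebra.norm_eq_prod_automorphisms, huniv, Finset.prod_pair hσ.symm]
  simp only [AlgEquiv.one_apply, map_add, map_mul, AlgEquiv.commutes, gal_apply_eq_neg hr hrk hσ,
    map_sub, map_pow, ← hr]
  ring

theorem exists_sq_eq_or_mul_sq_eq [NeZero (2 : k)] {a : K} {c : k}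
    (ha : a ^ 2 = algebraMap k K c) : ∃ x : k, x ^ 2 = c ∨ d * x ^ 2 = c := by
  obtain ⟨x, y, rfl⟩ := exists_eq_algebraMap_add_algebraMap_mul hrk a
  have hxy : algebraMap k K (2 * x * y) * r = algebraMap k K (c - x ^ 2 - d * y ^ 2) := by
    simp only [map_sub, map_mul, map_pow, ← ha, ← hr, map_ofNat]
    ring
  have hxy₀ : 2 * x * y = 0 := by
    by_contra h
    refine hrk ⟨(c - x ^ 2 - d * y ^ 2) / (2 * x * y), ?_⟩
    rw [map_div₀, ← hxy, mul_div_cancel_left₀ _ (by simpa using h)]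
  have hc : c = x ^ 2 + d * y ^ 2 := by
    apply (algebraMap k K).injective
    rw [hxy₀, map_zero, zero_mul, eq_comm, map_eq_zero] at hxy
    rw [← sub_eq_zero.1 (show c - (x ^ 2 + d * y ^ 2) = 0 by linear_combination hxy)]
  obtain hx | hy := mul_eq_zero.1 hxy₀
  · have hx₀ : x = 0 := (mul_eq_zero.1 hx).resolve_left two_ne_zero
    exact ⟨y, Or.inr (by simp [hc, hx₀])⟩
  · exact ⟨x, Or.inl (by simp [hc, hy])⟩

end Sqrt

end QuadraticExtension

section Ramification

theorem exists_ne_one_forall_smul_sub_mem {k K : Type*} [Field k] [NumberField k] [Field K]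
    [NumberField K] [Algebra k K] [IsGalois k K] {P : Ideal (𝓞 K)} [P.IsPrime] (hP : P ≠ ⊥)
    (hram : P.ramificationIdx (𝓞 k) ≠ 1) :
    ∃ σ : Gal(K/k), σ ≠ 1 ∧ ∀ x : 𝓞 K, σ • x - x ∈ P := by
  have hp : P.under (𝓞 k) ≠ ⊥ := fun h ↦ hP (Ideal.eq_bot_of_comap_eq_bot h)
  have : (P.under (𝓞 k)).IsMaximal := Ideal.IsPrime.isMaximal inferInstance hp
  have hcard : Nat.card (P.inertia Gal(K/k)) ≠ 1 := by
    rwa [Ideal.card_inertia_eq_ramificationIdxIn (P.under (𝓞 k)) P,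
      Ideal.ramificationIdxIn_eq_ramificationIdx (P.under (𝓞 k)) P Gal(K/k)]
  obtain ⟨σ, hσ, hσ1⟩ := (P.inertia Gal(K/k)).bot_or_exists_ne_one.resolve_left fun h ↦
    hcard (by rw [h, Subgroup.card_bot])
  exact ⟨σ, hσ1, hσ⟩

theorem two_mul_mem_of_ramificationIdx_ne_one {k K : Type*} [Field k] [NumberField k] [Field K]
    [NumberField K] [Algebra k K] [Algebra.IsQuadraticExtension k K] {δ : 𝓞 K} {d : k}
    (hδ : (δ : K) ^ 2 = algebraMap k K d) (hδk : (δ : K) ∉ (algebraMap k K).range)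
    {P : Ideal (𝓞 K)} [P.IsPrime] (hP : P ≠ ⊥) (hram : P.ramificationIdx (𝓞 k) ≠ 1) :
    2 * δ ∈ P := by
  obtain ⟨σ, hσ, hσP⟩ := exists_ne_one_forall_smul_sub_mem hP hram
  have hσδ : σ • δ = -δ := RingOfIntegers.ext (gal_apply_eq_neg hδ hδk hσ)
  rw [← neg_mem_iff]
  convert hσP δ using 1
  rw [hσδ]
  ring

theorem isPrincipal_of_mem_of_norm_prime {K : Type*} [Field K] [NumberField K] {P : Ideal (𝓞 K)}
    [P.IsPrime] {x : 𝓞 K} (hx : x ∈ P) (hprime : (Algebra.norm ℤ x).natAbs.Prime) :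
    P.IsPrincipal := by
  rw [← Ideal.absNorm_span_singleton] at hprime
  have hspan : (Ideal.span {x}).IsPrime := Ideal.isPrime_of_irreducible_absNorm hprime
  have hne : Ideal.span {x} ≠ ⊥ := by
    intro h
    rw [h, Ideal.absNorm_bot] at hprime
    exact Nat.not_prime_zero hprime
  refine ⟨x, ?_⟩
  rw [Ideal.submodule_span_eq]
  exact ((hspan.isMaximal hne).eq_of_le (Ideal.IsPrime.ne_top inferInstance)
    ((Ideal.span_singleton_le_iff_mem _).2 hx)).symm

theorem natAbs_norm_eq_of_pow_finrank_associated {K : Type*} [Field K] [NumberField K] {β : 𝓞 K}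
    {q : ℕ} (h : Associated (β ^ Module.finrank ℚ K) q) : (Algebra.norm ℤ β).natAbs = q := by
  refine Nat.pow_left_injective (n := Module.finrank ℚ K) Module.finrank_pos.ne' ?_
  have hN := Int.natAbs_eq_iff_associated.2 (h.map (Algebra.norm ℤ))
  have hq : Algebra.norm ℤ (q : 𝓞 K) = (q : ℤ) ^ Module.finrank ℚ K := by
    rw [← RingOfIntegers.rank, ← map_natCast (algebraMap ℤ (𝓞 K)), Algebra.norm_algebraMap]
  rw [map_pow, Int.natAbs_pow, hq, Int.natAbs_pow, Int.natAbs_natCast] at hN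
  exact hN

end Ramification

section QuadraticField

theorem natCast_natAbs_mem_iff {R : Type*} [Ring R] {I : Ideal R} {n : ℤ} :
    (n.natAbs : R) ∈ I ↔ (n : R) ∈ I := by
  obtain h | h := Int.natAbs_eq n
  · rw [← Int.cast_natCast, ← h]
  · rw [← Int.cast_natCast, ← neg_mem_iff, ← Int.cast_neg, ← h]

theorem exists_prime_dvd_natCast_mem {R : Type*} [CommRing R] (P : Ideal R) [P.IsPrime] {n : ℕ}
    (hn : n ≠ 0) (h : (n : R) ∈ P) : ∃ q : ℕ, q.Prime ∧ q ∣ n ∧ (q : R) ∈ P := by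
  rw [← Nat.prod_primeFactorsList hn, Nat.cast_list_prod, ← Multiset.prod_coe,
    Ideal.IsPrime.multiset_prod_mem_iff_exists_mem inferInstance] at h
  obtain ⟨_, hq, hqP⟩ := h
  obtain ⟨q, hqn, rfl⟩ := List.mem_map.1 (Multiset.mem_coe.1 hq)
  exact ⟨q, Nat.prime_of_mem_primeFactorsList hqn, Nat.dvd_of_mem_primeFactorsList hqn, hqP⟩

theorem notMem_range_algebraMap_of_sq_eq {K : Type*} [Field K] [CharZero K] {d : ℤ}
    (hd : ¬ IsSquare d) {r : K} (hr : r ^ 2 = d) : r ∉ (algebraMap ℚ K).range := by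
  rintro ⟨q, rfl⟩
  refine hd (Rat.isSquare_intCast_iff.1 ⟨q, ?_⟩)
  apply (algebraMap ℚ K).injective
  rw [map_intCast, ← hr, map_mul, sq]

theorem coe_unit_eq_one_or_neg_one (u : (𝓞 ℚ)ˣ) :
    ((u : 𝓞 ℚ) : ℚ) = 1 ∨ ((u : 𝓞 ℚ) : ℚ) = -1 := by
  have hu : IsUnit (Rat.ringOfIntegersEquiv (u : 𝓞 ℚ)) := u.isUnit.map _
  have hcoe : (Rat.ringOfIntegersEquiv (u : 𝓞 ℚ) : ℚ) = (u : 𝓞 ℚ) :=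
    Rat.ringOfIntegersEquiv_apply_coe _
  rw [← hcoe]
  exact_mod_cast Int.isUnit_iff.1 hu

section

variable {K : Type*} [Field K] [NumberField K] [Algebra.IsQuadraticExtension ℚ K] {d : ℤ}
  (hd : ¬ IsSquare d) {δ : 𝓞 K} (hδ : δ ^ 2 = d)
include hd hδ

theorem norm_intCast_add_intCast_mul (a b : ℤ) :
    Algebra.norm ℤ (a + b * δ) = a ^ 2 - d * b ^ 2 := by
  have hr : (δ : K) ^ 2 = (d : K) := by simpa using congrArg (algebraMap (𝓞 K) K) hδ
  have := norm_algebraMap_add_algebraMap_mul (d := (d : ℚ)) (by simpa using hr)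
    (notMem_range_algebraMap_of_sq_eq hd hr) a b
  apply Int.cast_injective (α := ℚ)
  simpa [Algebra.coe_norm_int] using this

theorem isPrincipal_of_ramificationIdx_ne_one
    (hnorm : ∀ q : ℕ, q.Prime → q ∣ (2 * d).natAbs → ∃ a b : ℤ, (a ^ 2 - d * b ^ 2).natAbs = q)
    {P : Ideal (𝓞 K)} [P.IsPrime] (hP : P ≠ ⊥) (hram : P.ramificationIdx (𝓞 ℚ) ≠ 1) :
    P.IsPrincipal := by
  have hr : (δ : K) ^ 2 = (d : K) := by simpa using congrArg (algebraMap (𝓞 K) K) hδ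
  have h2δ : 2 * δ ∈ P := two_mul_mem_of_ramificationIdx_ne_one (d := (d : ℚ))
    (by simpa using hr) (notMem_range_algebraMap_of_sq_eq hd hr) hP hram
  have h2d : ((2 * d).natAbs : 𝓞 K) ∈ P := by
    rw [natCast_natAbs_mem_iff]
    convert P.mul_mem_right δ h2δ using 1
    push_cast
    rw [← hδ]
    ring
  have hd₀ : d ≠ 0 := fun h ↦ hd ⟨0, h⟩
  obtain ⟨q, hq, hqd, hqP⟩ := exists_prime_dvd_natCast_mem P (by simpa using hd₀) h2d
  obtain ⟨a, b, hab⟩ := hnorm q hq hqd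
  refine isPrincipal_of_mem_of_norm_prime (x := a + b * δ) ?_
    (by rwa [norm_intCast_add_intCast_mul hd hδ, hab])
  have hmul : (a + b * δ) * (a - b * δ) ∈ P := by
    rw [← hab, natCast_natAbs_mem_iff] at hqP
    convert hqP using 1
    push_cast
    rw [← hδ]
    ring
  refine (Ideal.IsPrime.mem_or_mem inferInstance hmul).elim id fun hconj ↦ ?_
  convert P.add_mem hconj (P.mul_mem_left b h2δ) using 1
  ring

end

theorem odd_classNumber_of_sq_eq_intCast {K : Type} [Field K] [NumberField K]
    [Algebra.IsQuadraticExtension ℚ K] {d : ℤ} (hd : ¬ IsSquare d) {r : K} (hr : r ^ 2 = d)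
    (hprime : ∀ q : ℕ, q.Prime → q ∣ (2 * d).natAbs → ∃ a b : ℤ, (a ^ 2 - d * b ^ 2).natAbs = q)
    (hneg : (∃ x y : ℚ, x ^ 2 - d * y ^ 2 = -1) → ∃ a b : ℤ, a ^ 2 - d * b ^ 2 = -1) :
    Odd (classNumber K) := by
  have hint : IsIntegral ℤ r := IsIntegral.of_pow two_pos (by rw [hr]; exact isIntegral_algebraMap)
  have hrQ := notMem_range_algebraMap_of_sq_eq hd hr
  obtain ⟨δ, rfl⟩ : ∃ δ : 𝓞 K, (δ : K) = r := ⟨⟨r, hint⟩, rfl⟩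
  have hδ : δ ^ 2 = (d : 𝓞 K) := RingOfIntegers.ext (by simpa using hr)
  have hr' : (δ : K) ^ 2 = algebraMap ℚ K d := by simpa using hr
  refine odd_classNumber_of_isQuadraticExtension (k := ℚ) (by simp [Rat.classNumber_eq])
    (fun P _ hP hram ↦ isPrincipal_of_ramificationIdx_ne_one hd hδ hprime hP hram)
    fun u ⟨a, ha⟩ ↦ ?_
  obtain hu | hu := coe_unit_eq_one_or_neg_one u
  · exact ⟨1, RingOfIntegers.ext (by simp [hu])⟩
  · obtain ⟨x, y, rfl⟩ := exists_eq_algebraMap_add_algebraMap_mul hrQ a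
    rw [norm_algebraMap_add_algebraMap_mul hr' hrQ, hu] at ha
    obtain ⟨a, b, hab⟩ := hneg ⟨x, y, ha⟩
    refine ⟨a + b * δ, RingOfIntegers.ext ?_⟩
    have := norm_algebraMap_add_algebraMap_mul hr' hrQ a b
    rw [RingOfIntegers.coe_norm, hu]
    calc Algebra.norm ℚ ((a + b * δ : 𝓞 K) : K) = (a ^ 2 - d * b ^ 2 : ℤ) := by
          simpa using this
      _ = -1 := by rw [hab]; simp

end QuadraticField

section Pell

theorem exists_squarefree_mul_sq {D A B z : ℤ} (hD : Squarefree D) (hA : A ≠ 0)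
    (hAB : A * B = D * z ^ 2) :
    ∃ e s t : ℤ, Squarefree e ∧ e ∣ D * (A - B) ∧ A = e * s ^ 2 ∧ e * B = D * t ^ 2 := by
  obtain ⟨a, b, hab, ha⟩ := Nat.sq_mul_squarefree A.natAbs
  obtain ⟨e, he, hAe⟩ : ∃ e : ℤ, Squarefree e ∧ A = e * (b : ℤ) ^ 2 := by
    have habs : (b : ℤ) ^ 2 * a = A.natAbs := by exact_mod_cast hab
    obtain h | h := Int.natAbs_eq A
    · exact ⟨a, Int.squarefree_natCast.2 ha, by linear_combination h - habs⟩
    · exact ⟨-a, by rwa [← Int.squarefree_natAbs, Int.natAbs_neg, Int.natAbs_natCast],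
        by linear_combination h + habs⟩
  have hb : (b : ℤ) ^ 2 ≠ 0 := right_ne_zero_of_mul (hAe ▸ hA)
  obtain ⟨w, hw⟩ : (b : ℤ) ∣ D * z := by
    refine (Int.pow_dvd_pow_iff two_ne_zero).1 ⟨e * (D * B), ?_⟩
    linear_combination -D * hAB + D * B * hAe
  have hw2 : w ^ 2 = e * (D * B) := by
    refine mul_left_cancel₀ hb ?_
    linear_combination -(b * w + D * z) * hw - D * hAB + D * B * hAe
  obtain ⟨t, rfl⟩ : D ∣ w :=
    (hD.dvd_pow_iff_dvd two_ne_zero).1 ⟨e * B, by rw [hw2]; ring⟩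
  obtain ⟨v, hv⟩ : e ∣ D * t := (he.dvd_pow_iff_dvd two_ne_zero).1 ⟨_, hw2⟩
  have hDB : D * B = e * v ^ 2 := by
    refine mul_left_cancel₀ he.ne_zero ?_
    rw [← hw2, hv]
    ring
  refine ⟨e, b, t, he, ⟨D * b ^ 2 - v ^ 2, ?_⟩, hAe, mul_left_cancel₀ hD.ne_zero ?_⟩
  · linear_combination D * hAe - hDB
  · linear_combination -hw2

theorem isUnit_of_isSquare_of_squarefree {R : Type*} [Monoid R] {a : R} (ha : IsSquare a)
    (h : Squarefree a) : IsUnit a := by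
  obtain ⟨b, rfl⟩ := ha
  have := h b dvd_rfl
  exact this.mul this

theorem two_dvd_of_four_dvd_squarefree_mul_sq {D t : ℤ} (hD : Squarefree D)
    (h : 4 ∣ D * t ^ 2) : 2 ∣ t := by
  obtain ⟨c, hc⟩ := h
  obtain ⟨w, hw⟩ : 2 ∣ D * t :=
    (Int.pow_dvd_pow_iff two_ne_zero).1 ⟨D * c, by linear_combination D * hc⟩
  have hw2 : w ^ 2 = D * c :=
    mul_left_cancel₀ four_ne_zero (by linear_combination -(D * t + 2 * w) * hw + D * hc)
  obtain ⟨v, rfl⟩ : D ∣ w := (hD.dvd_pow_iff_dvd two_ne_zero).1 ⟨c, hw2⟩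
  exact ⟨v, mul_left_cancel₀ hD.ne_zero (by linear_combination hw)⟩

theorem x_add_one_ne_of_isFundamental {D : ℤ} {a : Pell.Solution₁ D} (ha : Pell.IsFundamental a)
    (b : Pell.Solution₁ D) : a.x + 1 ≠ 2 * b.x ^ 2 := by
  intro h
  have hx : 1 < a.x := ha.1
  wlog hb : 0 ≤ b.x generalizing b
  · exact this (-b) (by simpa using h) (by simpa using le_of_not_ge hb)
  have hb₁ : 1 < b.x := by nlinarith
  nlinarith [ha.x_le_x hb₁]

/-- With `x + 1 = e s²` and `e (x - 1) = D t²` for the fundamental solution `(x, y)`, the case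
`e = 2` would give the smaller solution `(s, t / 2)`. -/
theorem exists_sq_mul_sq_sub_mul_sq_eq {D : ℤ} (hD₁ : 1 < D) (hD : Squarefree D) :
    ∃ e s t : ℤ, 0 < e ∧ e ≠ 2 ∧ Squarefree e ∧ e ∣ 2 * D ∧ e ^ 2 * s ^ 2 - D * t ^ 2 = 2 * e := by
  have hsq : ¬ IsSquare D := fun h ↦ by
    have := Int.isUnit_iff.1 (isUnit_of_isSquare_of_squarefree h hD)
    lia
  obtain ⟨a, ha⟩ := Pell.IsFundamental.exists_of_not_isSquare (by lia) hsq
  have hx : 1 < a.x := ha.1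
  obtain ⟨e, s, t, he, hdvd, hs, ht⟩ := exists_squarefree_mul_sq (A := a.x + 1) (B := a.x - 1)
    (z := a.y) hD (by lia) (by linear_combination a.prop)
  refine ⟨e, s, t, ?_, ?_, he, ?_, by linear_combination ht - e * hs⟩
  · exact pos_of_mul_pos_left (hs ▸ by lia) (sq_nonneg s)
  · rintro rfl
    obtain ⟨t, rfl⟩ : 2 ∣ t :=
      two_dvd_of_four_dvd_squarefree_mul_sq hD ⟨s ^ 2 - 1, by linear_combination 2 * hs - ht⟩
    exact x_add_one_ne_of_isFundamental ha (Pell.Solution₁.mk s t (by linarith)) hs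
  · rwa [mul_comm, show (2 : ℤ) = a.x + 1 - (a.x - 1) by ring]

end Pell

section ThreeModFour

theorem sq_sub_mul_sq_ne_neg_one {p D : ℕ} (hp : p.Prime) (hp4 : p % 4 = 3)
    (hD : Odd (padicValNat p D)) (x y : ℚ) : x ^ 2 - D * y ^ 2 ≠ -1 := by
  intro h
  have := Fact.mk hp
  have hD₀ : D ≠ 0 := by
    rintro rfl
    simp at hD
  have hy : y ≠ 0 := by
    rintro rfl
    nlinarith [sq_nonneg x]
  have hN : y.num.natAbs * x.den ≠ 0 := by simpa using hy
  have hsum : (x.num.natAbs * y.den) ^ 2 + (x.den * y.den) ^ 2 =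
      D * (y.num.natAbs * x.den) ^ 2 := by
    zify
    rw [mul_pow, mul_pow _ (x.den : ℤ), sq_abs, sq_abs]
    rw [← Rat.num_div_den x, ← Rat.num_div_den y] at h
    field_simp at h
    exact_mod_cast (by linear_combination h :
      (x.num ^ 2 * y.den ^ 2 + (x.den * y.den) ^ 2 : ℚ) = D * (y.num ^ 2 * x.den ^ 2))
  have heven : Even (padicValNat p (D * (y.num.natAbs * x.den) ^ 2)) := by
    by_cases hpN : p ∣ D * (y.num.natAbs * x.den) ^ 2
    · exact Nat.eq_sq_add_sq_iff.1 ⟨_, _, hsum.symm⟩ p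
        (hp.mem_primeFactors hpN (mul_ne_zero hD₀ (pow_ne_zero 2 hN))) hp4
    · simp [padicValNat.eq_zero_of_not_dvd hpN]
  rw [padicValNat.mul hD₀ (pow_ne_zero 2 hN), padicValNat.pow, Nat.even_add] at heven
  exact Nat.not_even_iff_odd.2 hD (heven.2 (even_two_mul _))

variable {p : ℕ} (hp : p.Prime) (hp4 : p % 4 = 3)
include hp hp4

theorem sq_sub_prime_mul_sq_ne_neg_one (x y : ℚ) : x ^ 2 - p * y ^ 2 ≠ -1 := by
  have := Fact.mk hp
  exact sq_sub_mul_sq_ne_neg_one hp hp4 (by simp) x y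

theorem sq_sub_two_mul_prime_mul_sq_ne_neg_one (x y : ℚ) : x ^ 2 - 2 * p * y ^ 2 ≠ -1 := by
  have := Fact.mk hp
  have hval : padicValNat p (2 * p) = 1 := by
    rw [padicValNat.mul two_ne_zero hp.ne_zero, padicValNat_self,
      padicValNat.eq_zero_of_not_dvd fun h ↦ ?_]
    have := Nat.le_of_dvd two_pos h
    lia
  exact_mod_cast sq_sub_mul_sq_ne_neg_one hp hp4 (hval ▸ odd_one) x y

end ThreeModFour

section SevenModEight

theorem eq_of_dvd_two_mul_prime {p : ℕ} (hp : p.Prime) {e : ℤ} (he₀ : 0 ≤ e) (he : e ∣ 2 * p) :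
    e = 1 ∨ e = 2 ∨ e = p ∨ e = 2 * p := by
  lift e to ℕ using he₀
  obtain ⟨a, b, ha, hb, rfl⟩ := (Nat.dvd_mul (k := e) (m := 2) (n := p)).1 (by exact_mod_cast he)
  obtain rfl | rfl := (Nat.dvd_prime Nat.prime_two).1 ha <;>
    obtain rfl | rfl := (Nat.dvd_prime hp).1 hb <;> simp

theorem dvd_two_mul_of_squarefree_of_dvd_four_mul {e c : ℤ} (he : Squarefree e)
    (h : e ∣ 4 * c) : e ∣ 2 * c :=
  (he.dvd_pow_iff_dvd two_ne_zero).1 (h.trans ⟨c, by ring⟩)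

theorem not_isSquare_of_emod_four {d : ℤ} (hd : d % 4 = 2 ∨ d % 4 = 3) : ¬ IsSquare d := by
  rintro ⟨a, rfl⟩
  obtain ⟨b, rfl | rfl⟩ := a.even_or_odd'
  · lia
  · have : (2 * b + 1) * (2 * b + 1) = 4 * (b ^ 2 + b) + 1 := by ring
    lia

theorem squarefree_two_mul_prime {p : ℕ} (hp : p.Prime) (hp2 : p ≠ 2) :
    Squarefree (2 * p : ℤ) := by
  have := (Nat.squarefree_mul ((Nat.coprime_primes Nat.prime_two hp).2 hp2.symm)).2
    ⟨Nat.prime_two.squarefree, hp.squarefree⟩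
  exact_mod_cast Int.squarefree_natCast.2 this

variable {p : ℕ} (hp : p.Prime)
include hp

theorem exists_natAbs_sq_sub_prime_mul_sq_eq_two (hp4 : p % 4 = 3) :
    ∃ x y : ℤ, (x ^ 2 - p * y ^ 2).natAbs = 2 := by
  obtain ⟨e, s, t, he₀, he2, -, he, h⟩ := exists_sq_mul_sq_sub_mul_sq_eq (D := p)
    (by exact_mod_cast hp.one_lt) (Int.squarefree_natCast.2 hp.squarefree)
  have hp₀ : (p : ℤ) ≠ 0 := by exact_mod_cast hp.ne_zero
  obtain rfl | rfl | rfl | rfl := eq_of_dvd_two_mul_prime hp he₀.le he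
  · exact ⟨s, t, by lia⟩
  · exact absurd rfl he2
  · have : t ^ 2 - p * s ^ 2 = -2 := mul_left_cancel₀ hp₀ (by linear_combination -h)
    exact ⟨t, s, by lia⟩
  · have : t ^ 2 - 4 * p * s ^ 2 = -4 := mul_left_cancel₀ hp₀ (by linear_combination -h)
    have hQ : (t ^ 2 - 4 * p * s ^ 2 : ℚ) = -4 := by exact_mod_cast this
    exact absurd (by linear_combination hQ / 4) (sq_sub_prime_mul_sq_ne_neg_one hp hp4 (t / 2) s)

theorem exists_natAbs_two_mul_sq_sub_prime_mul_sq_eq_one (hp4 : p % 4 = 3) :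
    ∃ u v : ℤ, (2 * u ^ 2 - p * v ^ 2).natAbs = 1 := by
  have hp2 : p ≠ 2 := by lia
  obtain ⟨e, s, t, he₀, he2, hsq, he, h⟩ := exists_sq_mul_sq_sub_mul_sq_eq (D := 2 * p)
    (by have := hp.one_lt; lia) (squarefree_two_mul_prime hp hp2)
  have hp₀ : (p : ℤ) ≠ 0 := by exact_mod_cast hp.ne_zero
  obtain rfl | rfl | rfl | rfl := eq_of_dvd_two_mul_prime hp he₀.le
    (dvd_two_mul_of_squarefree_of_dvd_four_mul hsq (he.trans ⟨1, by ring⟩))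
  · obtain ⟨s, rfl⟩ : 2 ∣ s := Int.prime_two.dvd_of_dvd_pow (n := 2) ⟨1 + p * t ^ 2, by lia⟩
    exact ⟨s, t, by lia⟩
  · exact absurd rfl he2
  · have : 2 * t ^ 2 - p * s ^ 2 = -2 := mul_left_cancel₀ hp₀ (by linear_combination -h)
    have hQ : (2 * t ^ 2 - p * s ^ 2 : ℚ) = -2 := by exact_mod_cast this
    exact absurd (by linear_combination hQ / 2)
      (sq_sub_two_mul_prime_mul_sq_ne_neg_one hp hp4 t (s / 2))
  · have : t ^ 2 - 2 * p * s ^ 2 = -2 :=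
      mul_left_cancel₀ (mul_ne_zero two_ne_zero hp₀) (by linear_combination -h)
    obtain ⟨t, rfl⟩ : 2 ∣ t := Int.prime_two.dvd_of_dvd_pow (n := 2) ⟨p * s ^ 2 - 1, by lia⟩
    exact ⟨t, s, by lia⟩

theorem exists_sq_sub_prime_mul_sq_eq_two (hp8 : p % 8 = 7) :
    ∃ x y : ℤ, x ^ 2 - p * y ^ 2 = 2 := by
  obtain ⟨x, y, h⟩ := exists_natAbs_sq_sub_prime_mul_sq_eq_two hp (by lia)
  have hpZ : (p : ZMod 8) = 7 := (ZMod.natCast_eq_natCast_iff' p 7 8).2 hp8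
  refine ⟨x, y, (Int.natAbs_eq_iff.1 h).resolve_right fun h ↦ ?_⟩
  have h8 := congrArg (Int.cast : ℤ → ZMod 8) h
  push_cast [hpZ] at h8
  exact (by decide : ∀ x y : ZMod 8, x ^ 2 - 7 * y ^ 2 ≠ -2) x y h8

theorem exists_two_mul_sq_sub_prime_mul_sq_eq_one (hp8 : p % 8 = 7) :
    ∃ u v : ℤ, 2 * u ^ 2 - p * v ^ 2 = 1 := by
  obtain ⟨u, v, h⟩ := exists_natAbs_two_mul_sq_sub_prime_mul_sq_eq_one hp (by lia)
  have hpZ : (p : ZMod 8) = 7 := (ZMod.natCast_eq_natCast_iff' p 7 8).2 hp8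
  refine ⟨u, v, (Int.natAbs_eq_iff.1 h).resolve_right fun h ↦ ?_⟩
  have h8 := congrArg (Int.cast : ℤ → ZMod 8) h
  push_cast [hpZ] at h8
  exact (by decide : ∀ u v : ZMod 8, 2 * u ^ 2 - 7 * v ^ 2 ≠ -1) u v h8

end SevenModEight

section OddQuadraticFields

theorem odd_classNumber_of_sq_eq_two {K : Type} [Field K] [NumberField K]
    [Algebra.IsQuadraticExtension ℚ K] {r : K} (hr : r ^ 2 = 2) : Odd (classNumber K) := by
  refine odd_classNumber_of_sq_eq_intCast (d := 2) (not_isSquare_of_emod_four (by lia))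
    (by exact_mod_cast hr) (fun q hq hq2 ↦ ⟨0, 1, ?_⟩) fun _ ↦ ⟨1, 1, by norm_num⟩
  exact ((Nat.prime_dvd_prime_iff_eq hq Nat.prime_two).1
    (hq.dvd_of_dvd_pow (m := 2) (n := 2) hq2)).symm

variable {p : ℕ} (hp : p.Prime) (hp4 : p % 4 = 3) {K : Type} [Field K] [NumberField K]
  [Algebra.IsQuadraticExtension ℚ K] {r : K}
include hp hp4

theorem odd_classNumber_of_sq_eq_prime (hr : r ^ 2 = p) : Odd (classNumber K) := by
  refine odd_classNumber_of_sq_eq_intCast (d := p) (not_isSquare_of_emod_four (by lia))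
    (by exact_mod_cast hr) (fun q hq hqp ↦ ?_) fun ⟨x, y, h⟩ ↦ ?_
  · rw [Int.natAbs_mul, hq.dvd_mul] at hqp
    obtain h | h := hqp
    · obtain rfl := (Nat.prime_dvd_prime_iff_eq hq Nat.prime_two).1 h
      exact exists_natAbs_sq_sub_prime_mul_sq_eq_two hp hp4
    · obtain rfl := (Nat.prime_dvd_prime_iff_eq hq hp).1 h
      exact ⟨0, 1, by simp⟩
  · exact absurd (by exact_mod_cast h) (sq_sub_prime_mul_sq_ne_neg_one hp hp4 x y)

theorem odd_classNumber_of_sq_eq_two_mul_prime (hr : r ^ 2 = 2 * p) : Odd (classNumber K) := by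
  refine odd_classNumber_of_sq_eq_intCast (d := 2 * p) (not_isSquare_of_emod_four (by lia))
    (by exact_mod_cast hr) (fun q hq hqp ↦ ?_) fun ⟨x, y, h⟩ ↦ ?_
  · obtain ⟨u, v, huv⟩ := exists_natAbs_two_mul_sq_sub_prime_mul_sq_eq_one hp hp4
    have hqp : q ∣ 2 ∨ q ∣ p := by
      rw [Int.natAbs_mul, Int.natAbs_mul, hq.dvd_mul, hq.dvd_mul] at hqp
      tauto
    obtain h | h := hqp
    · obtain rfl := (Nat.prime_dvd_prime_iff_eq hq Nat.prime_two).1 h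
      refine ⟨2 * u, v, ?_⟩
      rw [show (2 * u) ^ 2 - 2 * p * v ^ 2 = 2 * (2 * u ^ 2 - p * v ^ 2) by ring, Int.natAbs_mul,
        huv]
      simp
    · obtain rfl := (Nat.prime_dvd_prime_iff_eq hq hp).1 h
      refine ⟨q * v, u, ?_⟩
      rw [show (q * v) ^ 2 - 2 * q * u ^ 2 = -q * (2 * u ^ 2 - q * v ^ 2) by ring, Int.natAbs_mul,
        huv]
      simp
  · exact absurd (by exact_mod_cast h) (sq_sub_two_mul_prime_mul_sq_ne_neg_one hp hp4 x y)

end OddQuadraticFields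

section QuadraticOrder

open Zsqrtd

variable {d : ℤ}

theorem irreducible_of_prime_natAbs_norm {a : ℤ√d} (ha : a.norm.natAbs.Prime) :
    Irreducible a := by
  refine ⟨fun h ↦ ha.ne_one (norm_eq_one_iff.2 h), fun b c hbc ↦ ?_⟩
  rw [hbc, norm_mul, Int.natAbs_mul, Nat.prime_mul_iff] at ha
  rw [← norm_eq_one_iff, ← norm_eq_one_iff]
  tauto

theorem exists_natAbs_norm_eq_of_not_irreducible {p : ℕ} (hp : p.Prime)
    (h : ¬ Irreducible (p : ℤ√d)) : ∃ a : ℤ√d, a.norm.natAbs = p := by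
  have hnorm : (p : ℤ√d).norm.natAbs = p ^ 2 := by simp [Int.natAbs_mul, sq]
  have hunit : ¬ IsUnit (p : ℤ√d) := by
    rw [← norm_eq_one_iff, hnorm]
    simpa using hp.ne_one
  obtain ⟨a, b, hab, ha, hb⟩ : ∃ a b : ℤ√d, (p : ℤ√d) = a * b ∧ ¬ IsUnit a ∧ ¬ IsUnit b := by
    simpa [irreducible_iff, hunit] using h
  rw [← norm_eq_one_iff] at ha hb
  rw [hab, norm_mul, Int.natAbs_mul] at hnorm
  exact ⟨a, ((Nat.Prime.mul_eq_prime_sq_iff hp ha hb).1 hnorm).1⟩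

variable (hd : ¬ IsSquare d)
include hd

theorem norm_eq_zero_iff_of_not_isSquare (a : ℤ√d) : a.norm = 0 ↔ a = 0 :=
  norm_eq_zero (fun n hn ↦ hd ⟨n, hn⟩) a

theorem isDomain_zsqrtd : IsDomain (ℤ√d) := by
  have : NoZeroDivisors (ℤ√d) := ⟨fun {a b} h ↦ by
    simpa [norm_mul, norm_eq_zero_iff_of_not_isSquare hd] using congrArg Zsqrtd.norm h⟩
  exact NoZeroDivisors.to_isDomain _

variable (hd₁ : -2 ≤ d) (hd₂ : d ≤ 3)
include hd₁ hd₂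

theorem exists_natAbs_norm_sub_mul_lt (a : ℤ√d) {b : ℤ√d} (hb : b ≠ 0) :
    ∃ q : ℤ√d, (a - b * q).norm.natAbs < b.norm.natAbs := by
  have hn : (b.norm : ℚ) ≠ 0 := by
    exact_mod_cast mt (norm_eq_zero_iff_of_not_isSquare hd b).1 hb
  obtain ⟨c, hc⟩ : ∃ c, c = a * star b := ⟨_, rfl⟩
  obtain ⟨X, hX⟩ : ∃ X : ℤ, |(c.re : ℚ) / b.norm - X| ≤ 1 / 2 := ⟨_, abs_sub_round _⟩
  obtain ⟨Y, hY⟩ : ∃ Y : ℤ, |(c.im : ℚ) / b.norm - Y| ≤ 1 / 2 := ⟨_, abs_sub_round _⟩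
  refine ⟨⟨X, Y⟩, ?_⟩
  have hmul : (a - b * ⟨X, Y⟩) * star b = ⟨c.re - b.norm * X, c.im - b.norm * Y⟩ := by
    rw [sub_mul, ← hc, mul_right_comm, ← norm_eq_mul_conj]
    ext <;> simp
  have hnorm : ((a - b * ⟨X, Y⟩).norm : ℚ) =
      b.norm * ((c.re / b.norm - X) ^ 2 - d * (c.im / b.norm - Y) ^ 2) := by
    have hprod : (a - b * ⟨X, Y⟩).norm * b.norm =
        (c.re - b.norm * X) ^ 2 - d * (c.im - b.norm * Y) ^ 2 := by
      rw [← norm_conj b, ← norm_mul, hmul, norm_def ⟨_, _⟩, norm_conj]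
      ring
    field_simp
    exact_mod_cast hprod
  have hlt : |(c.re / b.norm - X : ℚ) ^ 2 - d * (c.im / b.norm - Y) ^ 2| < 1 := by
    have hX2 := sq_le_sq' (abs_le.1 hX).1 (abs_le.1 hX).2
    have hY2 := sq_le_sq' (abs_le.1 hY).1 (abs_le.1 hY).2
    have hd₁' : (-2 : ℚ) ≤ d := by exact_mod_cast hd₁
    have hd₂' : (d : ℚ) ≤ 3 := by exact_mod_cast hd₂
    rw [abs_lt]
    constructor <;> nlinarith [sq_nonneg (c.re / b.norm - X : ℚ), sq_nonneg (c.im / b.norm - Y : ℚ)]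
  have : |((a - b * ⟨X, Y⟩).norm : ℚ)| < |(b.norm : ℚ)| := by
    rw [hnorm, abs_mul]
    exact mul_lt_of_lt_one_right (abs_pos.2 hn) hlt
  rw [← Nat.cast_lt (α := ℤ), Int.natCast_natAbs, Int.natCast_natAbs]
  exact_mod_cast this

theorem isPrincipalIdealRing_zsqrtd : IsPrincipalIdealRing (ℤ√d) := by
  refine ⟨fun I ↦ ?_⟩
  obtain rfl | hI := eq_or_ne I ⊥
  · infer_instance
  obtain ⟨b, ⟨hbI, hb⟩, hmin⟩ := exists_minimalFor_of_wellFoundedLT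
    (fun b : ℤ√d ↦ b ∈ I ∧ b ≠ 0) (fun b ↦ b.norm.natAbs) (I.exists_mem_ne_zero_of_ne_bot hI)
  refine ⟨b, le_antisymm (fun a ha ↦ ?_) ((I.span_singleton_le_iff_mem).2 hbI)⟩
  obtain ⟨q, hq⟩ := exists_natAbs_norm_sub_mul_lt hd hd₁ hd₂ a hb
  refine Ideal.mem_span_singleton'.2 ⟨q, ?_⟩
  by_contra hne
  have hr : a - b * q ≠ 0 := fun h ↦ hne (by linear_combination -h)
  exact hq.not_ge (hmin ⟨I.sub_mem ha (I.mul_mem_right q hbI), hr⟩ hq.le)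

end QuadraticOrder

section StarRing

variable {R : Type*} [CommRing R] [StarRing R]

theorem isCoprime_star_of_isCoprime {z : R} (h : IsCoprime (z * star z) (z + star z)) :
    IsCoprime z (star z) := by
  simpa using h.of_mul_left_left.add_mul_left_right (-1)

variable [IsDomain R] [IsPrincipalIdealRing R] {π C y : R}

theorem exists_associated_mul_sq_of_dvd (hπ₀ : π ≠ 0) (hC : IsCoprime C (star C))
    (hCy : Associated (π * star π * y ^ 2) (C * star C)) (hdvd : π ∣ C) :
    ∃ m, Associated (π * m ^ 2) C := by
  obtain ⟨D, rfl⟩ := hdvd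
  have hnorm : π * D * star (π * D) = π * star π * (D * star D) := by
    rw [star_mul']
    ring
  have hD : Associated (y ^ 2) (D * star D) :=
    (hnorm ▸ hCy).of_mul_left (.refl (π * star π)) (mul_ne_zero hπ₀ (star_ne_zero.2 hπ₀))
  rw [star_mul'] at hC
  obtain ⟨m, hm⟩ := exists_associated_pow_of_associated_pow_mul
    hC.of_mul_left_right.of_mul_right_right hD
  exact ⟨m, hm.mul_left π⟩

theorem exists_associated_mul_sq (hπ : Prime π) (hC : IsCoprime C (star C))
    (hCy : Associated (π * star π * y ^ 2) (C * star C)) :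
    ∃ m, Associated (π * m ^ 2) C ∨ Associated (star π * m ^ 2) C := by
  have hdvd : π ∣ C * star C := by
    rw [← hCy.dvd_iff_dvd_right, mul_assoc]
    exact dvd_mul_right _ _
  obtain h | h := hπ.dvd_or_dvd hdvd
  · exact (exists_associated_mul_sq_of_dvd hπ.ne_zero hC hCy h).imp fun _ ↦ Or.inl
  · have h' : star π ∣ C := by simpa [starRingEnd_apply] using map_dvd (starRingEnd R) h
    exact (exists_associated_mul_sq_of_dvd (star_ne_zero.2 hπ.ne_zero) hC
      (by rwa [star_star, mul_comm (star π)]) h').imp fun _ ↦ Or.inr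

theorem exists_associated_sq_or_mul_sq {A B x : R} (hπ : Prime π)
    (hA : IsCoprime A (star A)) (hAx : Associated (π * star π * x ^ 2) (A * star A))
    (hB : IsCoprime B (star B)) (hBy : Associated (π * star π * y ^ 2) (B * star B)) :
    ∃ m, Associated (m ^ 2) (A * B) ∨ Associated (π * star π * m ^ 2) (A * B) := by
  obtain ⟨a, ha | ha⟩ := exists_associated_mul_sq hπ hA hAx <;>
    obtain ⟨b, hb | hb⟩ := exists_associated_mul_sq hπ hB hBy
  · exact ⟨π * a * b, .inl ((Associated.of_eq (by ring)).trans (ha.mul_mul hb))⟩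
  · exact ⟨a * b, .inr ((Associated.of_eq (by ring)).trans (ha.mul_mul hb))⟩
  · exact ⟨a * b, .inr ((Associated.of_eq (by ring)).trans (ha.mul_mul hb))⟩
  · exact ⟨star π * a * b, .inl ((Associated.of_eq (by ring)).trans (ha.mul_mul hb))⟩

end StarRing

section ZsqrtdTwo

theorem not_isSquare_two_s9 : ¬ IsSquare (2 : ℤ) :=
  Int.prime_two.irreducible.not_isSquare

theorem not_prime_natCast_zsqrtd_two {p : ℕ} (hp : p.Prime) {x y : ℤ}
    (hxy : x ^ 2 - p * y ^ 2 = 2) : ¬ Prime (p : ℤ√2) := by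
  intro h
  have hdvd : ((p : ℤ) : ℤ√2) ∣ ⟨x, 1⟩ * ⟨x, -1⟩ := by
    refine ⟨((y * y : ℤ) : ℤ√2), ?_⟩
    rw [← Int.cast_mul]
    ext
    · simp only [Zsqrtd.re_mul, Zsqrtd.re_intCast]
      linear_combination hxy
    · simp
  have hunit : ¬ IsUnit (p : ℤ) := (Nat.prime_iff_prime_int.1 hp).not_isUnit
  rw [Int.cast_natCast] at hdvd
  obtain h | h := h.dvd_or_dvd hdvd <;> rw [← Int.cast_natCast, Zsqrtd.intCast_dvd] at h
  · exact hunit (isUnit_of_dvd_one h.2)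
  · exact hunit (isUnit_of_dvd_one (by simpa using h.2))

theorem exists_prime_associated_mul_star {p : ℕ} (hp : p.Prime) {x y : ℤ}
    (hxy : x ^ 2 - p * y ^ 2 = 2) :
    ∃ π : ℤ√2, Prime π ∧ Associated (π * star π) p := by
  have := isDomain_zsqrtd not_isSquare_two_s9
  have := isPrincipalIdealRing_zsqrtd not_isSquare_two_s9 (by lia) (by lia)
  obtain ⟨π, hπ⟩ := exists_natAbs_norm_eq_of_not_irreducible hp
    fun h ↦ not_prime_natCast_zsqrtd_two hp hxy h.prime
  refine ⟨π, (irreducible_of_prime_natAbs_norm (hπ ▸ hp)).prime, ?_⟩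
  have := (Int.associated_natAbs π.norm).map (Int.castRingHom (ℤ√2))
  simpa [← Zsqrtd.norm_eq_mul_conj, hπ] using this

theorem isCoprime_star_of_isCoprime_norm {d : ℤ} {z : ℤ√d} (h : IsCoprime z.norm (2 * z.re)) :
    IsCoprime z (star z) := by
  have hnorm : z * star z = Int.castRingHom (ℤ√d) z.norm := z.norm_eq_mul_conj.symm
  have htrace : z + star z = Int.castRingHom (ℤ√d) (2 * z.re) := by ext <;> simp [two_mul]
  exact isCoprime_star_of_isCoprime (hnorm ▸ htrace ▸ h.map _)

theorem odd_of_sq_sub_mul_sq_eq_two {p x y : ℤ} (hp : Odd p) (hxy : x ^ 2 - p * y ^ 2 = 2) :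
    Odd x := by
  by_contra hx
  obtain ⟨x, rfl⟩ := even_iff_two_dvd.1 (Int.not_odd_iff_even.1 hx)
  have hy : Even (p * y ^ 2) := ⟨2 * x ^ 2 - 1, by linear_combination -hxy⟩
  obtain ⟨y, rfl⟩ := even_iff_two_dvd.1 <| (Int.even_pow.1 <|
    (Int.even_mul.1 hy).resolve_left (Int.not_even_iff_odd.2 hp)).1
  have : 2 * (x ^ 2 - p * y ^ 2) = 1 := by linarith
  lia

theorem exists_associated_sq_or_natCast_mul_sq {p : ℕ} (hp : p.Prime) (hp2 : p ≠ 2) {x y u v : ℤ}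
    (hxy : x ^ 2 - p * y ^ 2 = 2) (huv : 2 * u ^ 2 - p * v ^ 2 = 1) :
    ∃ m : ℤ√2, Associated (m ^ 2) (⟨x, 1⟩ * ⟨1, u⟩) ∨
      Associated (p * m ^ 2) (⟨x, 1⟩ * ⟨1, u⟩) := by
  have := isDomain_zsqrtd not_isSquare_two_s9
  have := isPrincipalIdealRing_zsqrtd not_isSquare_two_s9 (by lia) (by lia)
  obtain ⟨π, hπ, hπp⟩ := exists_prime_associated_mul_star hp hxy
  obtain ⟨i, hi⟩ := odd_of_sq_sub_mul_sq_eq_two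
    (by exact_mod_cast hp.odd_of_ne_two hp2) hxy
  have hA : (⟨x, 1⟩ : ℤ√2).norm = p * y ^ 2 := by
    rw [Zsqrtd.norm_def]
    linear_combination hxy
  have hB : (⟨1, u⟩ : ℤ√2).norm = -(p * v ^ 2) := by
    rw [Zsqrtd.norm_def]
    linear_combination -huv
  obtain ⟨m, hm⟩ := exists_associated_sq_or_mul_sq (x := (y : ℤ√2)) (y := (v : ℤ√2)) hπ
    (isCoprime_star_of_isCoprime_norm (z := ⟨x, 1⟩)
      ⟨-(2 * (i ^ 2 + i) + 1), (i ^ 2 + i) * x, by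
        rw [Zsqrtd.norm_def]
        linear_combination -(x + 2 * i + 1) * hi⟩)
    (by
      rw [← Zsqrtd.norm_eq_mul_conj ⟨x, 1⟩, hA]
      simpa using hπp.mul_right _)
    (isCoprime_star_of_isCoprime_norm (z := ⟨1, u⟩)
      ⟨1, u ^ 2, by
        rw [Zsqrtd.norm_def]
        ring⟩)
    (by
      rw [← Zsqrtd.norm_eq_mul_conj ⟨1, u⟩, hB]
      simpa using hπp.mul_right _)
  exact ⟨m, hm.imp id fun h ↦ (hπp.symm.mul_right _).trans h⟩

end ZsqrtdTwo

section FourthRootOfTwo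

variable {R : Type*} [CommRing R]

theorem exists_associated_sq_of_associated_pow_three_mul_sq [IsDomain R] [IsIntegrallyClosed R]
    {δ c z : R} (hδ₀ : δ ≠ 0) (hc₀ : c ≠ 0) (h : Associated (δ ^ 3 * c ^ 2) (z ^ 2)) :
    ∃ β, Associated (β ^ 2) δ := by
  obtain ⟨β, rfl⟩ : δ * c ∣ z := (IsIntegrallyClosed.pow_dvd_pow_iff two_ne_zero).1 <|
    h.dvd_iff_dvd_right.1 ⟨δ, by ring⟩
  refine ⟨β, (Associated.of_mul_left (a := (δ * c) ^ 2) (c := (δ * c) ^ 2) ?_ (.refl _)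
    (pow_ne_zero 2 (mul_ne_zero hδ₀ hc₀))).symm⟩
  exact (Associated.of_eq (by ring)).trans (h.trans (Associated.of_eq (by ring)))

variable {δ : R} (hδ : δ ^ 2 = 2)
include hδ

theorem exists_isUnit_one_add_sq_eq_two_mul {u w : R} (h : 2 * u ^ 2 - w ^ 2 = 1) :
    ∃ θ, IsUnit θ ∧ (1 + θ) ^ 2 = 2 * (1 + u * δ) * θ := by
  refine ⟨u * δ + w, .of_mul_eq_one (u * δ - w) ?_, ?_⟩
  · linear_combination u ^ 2 * hδ + h
  · linear_combination -u ^ 2 * hδ - h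

variable [IsDomain R]

theorem exists_isUnit_one_add_sq_eq_mul [IsIntegrallyClosed R] {x w : R} (h2 : (2 : R) ≠ 0)
    (h : x ^ 2 - w ^ 2 = 2) :
    ∃ η, IsUnit η ∧ (1 + η) ^ 2 = δ * (x + δ) * η := by
  have hδ₀ : δ ≠ 0 := by rintro rfl; exact h2 (by simp [← hδ])
  obtain ⟨η, hη⟩ : δ ∣ x + w := (IsIntegrallyClosed.pow_dvd_pow_iff two_ne_zero).1
    ⟨1 + w ^ 2 + x * w, by linear_combination h - (1 + w ^ 2 + x * w) * hδ⟩
  obtain ⟨η', hη'⟩ : δ ∣ x - w := (IsIntegrallyClosed.pow_dvd_pow_iff two_ne_zero).1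
    ⟨1 + w ^ 2 - x * w, by linear_combination h - (1 + w ^ 2 - x * w) * hδ⟩
  have hmul : η * η' = 1 := mul_left_cancel₀ h2 <| by
    linear_combination -η * η' * hδ + h - (x - w) * hη - δ * η * hη'
  have hadd : η + η' = δ * x := mul_left_cancel₀ hδ₀ <| by
    linear_combination -hη - hη' - x * hδ
  exact ⟨η, .of_mul_eq_one η' hmul, by linear_combination η * hadd - hmul - η * hδ⟩

variable [CharZero R] {ρ : R} {p : ℕ} (hp : p.Prime) (hρ : ρ ^ 2 = p)
include hp hρ

theorem exists_associated_sq_add_mul_one_add_mul (hp2 : p ≠ 2) {x y u v : ℤ}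
    (hxy : x ^ 2 - p * y ^ 2 = 2) (huv : 2 * u ^ 2 - p * v ^ 2 = 1) :
    ∃ c : R, c ≠ 0 ∧ Associated (c ^ 2) ((x + δ) * (1 + u * δ)) := by
  let φ : ℤ√2 →+* R := Zsqrtd.lift ⟨δ, by simpa [sq] using hδ⟩
  have hφ : Function.Injective φ := Zsqrtd.lift_injective _ fun n hn ↦ not_isSquare_two_s9 ⟨n, hn⟩
  have hx : φ ⟨x, 1⟩ = x + δ := by simp [φ]
  have hu : φ ⟨1, u⟩ = 1 + u * δ := by simp [φ]
  have hne : φ ⟨x, 1⟩ * φ ⟨1, u⟩ ≠ 0 :=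
    mul_ne_zero ((map_ne_zero_iff φ hφ).2 (by simp [Zsqrtd.ext_iff]))
      ((map_ne_zero_iff φ hφ).2 (by simp [Zsqrtd.ext_iff]))
  rw [← hx, ← hu]
  obtain ⟨c, hc⟩ : ∃ c : R, Associated (c ^ 2) (φ ⟨x, 1⟩ * φ ⟨1, u⟩) := by
    rw [← map_mul]
    obtain ⟨m, hm | hm⟩ := exists_associated_sq_or_natCast_mul_sq hp hp2 hxy huv
    · exact ⟨φ m, by simpa only [map_pow] using hm.map φ⟩
    · exact ⟨ρ * φ m, by simpa only [mul_pow, hρ, map_mul, map_pow, map_natCast] using hm.map φ⟩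
  exact ⟨c, (pow_ne_zero_iff two_ne_zero).1 (hc.ne_zero_iff.2 hne), hc⟩

theorem exists_pow_four_associated_two [IsIntegrallyClosed R] (hp8 : p % 8 = 7) :
    ∃ β : R, Associated (β ^ 4) 2 := by
  obtain ⟨x, y, hxy⟩ := exists_sq_sub_prime_mul_sq_eq_two hp hp8
  obtain ⟨u, v, huv⟩ := exists_two_mul_sq_sub_prime_mul_sq_eq_one hp hp8
  obtain ⟨c, hc₀, hc⟩ := exists_associated_sq_add_mul_one_add_mul hδ hp hρ (by lia) hxy huv
  obtain ⟨η, hη, hηx⟩ := exists_isUnit_one_add_sq_eq_mul hδ two_ne_zero (x := x) (w := y * ρ)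
    (by rw [mul_pow, hρ, mul_comm]; exact_mod_cast hxy)
  obtain ⟨θ, hθ, hθu⟩ := exists_isUnit_one_add_sq_eq_two_mul hδ (u := u) (w := v * ρ)
    (by rw [mul_pow, hρ, mul_comm (_ ^ 2) (p : R)]; exact_mod_cast huv)
  have hδ₀ : δ ≠ 0 := by rintro rfl; simp at hδ
  have hz : Associated (δ ^ 3 * c ^ 2) (((1 + η) * (1 + θ)) ^ 2) := by
    have hprod : ((1 + η) * (1 + θ)) ^ 2 = δ ^ 3 * ((x + δ) * (1 + u * δ)) * (η * θ) := by
      rw [mul_pow, hηx, hθu, ← hδ]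
      ring
    rw [hprod]
    exact (hc.mul_left _).trans (associated_mul_unit_right _ _ (hη.mul hθ))
  obtain ⟨β, hβ⟩ := exists_associated_sq_of_associated_pow_three_mul_sq hδ₀ hc₀ hz
  exact ⟨β, by simpa only [← pow_mul, hδ] using hβ.pow_pow (n := 2)⟩

end FourthRootOfTwo

section UnitsOfQuadraticField

theorem exists_eq_intCast_of_coe_eq_algebraMap {k : Type*} [Field k] [CharZero k] {a : 𝓞 k}
    {q : ℚ} (h : (a : k) = algebraMap ℚ k q) : ∃ n : ℤ, q = n := by
  have hq : IsIntegral ℤ q :=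
    (isIntegral_algebraMap_iff (algebraMap ℚ k).injective).1 (h ▸ a.isIntegral_coe)
  obtain ⟨n, hn⟩ := IsIntegrallyClosed.isIntegral_iff.1 hq
  exact ⟨n, by simpa using hn.symm⟩

theorem exists_eq_or_eq_mul_of_dvd_two_mul_prime {p : ℕ} (hp : p.Prime) {ε : ℤ} (h : ε ∣ 2 * p) :
    ∃ c : ℤ, (c.natAbs = 1 ∨ c.natAbs = 2) ∧ (ε = c ∨ ε = c * p) := by
  have hsign := Int.natAbs_eq ε
  obtain h | h | h | h :=
    eq_of_dvd_two_mul_prime hp (Int.natCast_nonneg ε.natAbs) (Int.natAbs_dvd.2 h)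
  · exact ⟨ε, by lia, .inl rfl⟩
  · exact ⟨ε, by lia, .inl rfl⟩
  · rw [h] at hsign
    exact hsign.elim (fun h ↦ ⟨1, by simp [h]⟩) fun h ↦ ⟨-1, by simp [h]⟩
  · rw [h] at hsign
    exact hsign.elim (fun h ↦ ⟨2, by simp [h]⟩) fun h ↦ ⟨-2, by simp [h]⟩

variable {k : Type*} [Field k] [NumberField k] [Algebra.IsQuadraticExtension ℚ k] {r : k}
  (e : (𝓞 k)ˣ)

theorem sq_sub_mul_sq_eq_one_of_unit {d : ℤ} (hd : ¬ IsSquare d) (hr : r ^ 2 = d)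
    (hneg : ∀ x y : ℚ, x ^ 2 - d * y ^ 2 ≠ -1) {x y : ℚ}
    (he : ((e : 𝓞 k) : k) = algebraMap ℚ k x + algebraMap ℚ k y * r) :
    x ^ 2 - d * y ^ 2 = 1 := by
  have hnorm := norm_algebraMap_add_algebraMap_mul (d := (d : ℚ)) (by simpa using hr)
    (notMem_range_algebraMap_of_sq_eq hd hr) x y
  rw [← he, ← Algebra.coe_norm_int] at hnorm
  obtain h | h := Int.isUnit_iff.1 (e.isUnit.map (Algebra.norm ℤ))
  · simpa [h] using hnorm.symm
  · exact absurd (by simpa [h] using hnorm.symm) (hneg x y)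

theorem exists_one_add_unit_sq_eq {d : ℤ} (hd : ¬ IsSquare d) (hdsq : Squarefree d)
    (hr : r ^ 2 = d) (hneg : ∀ x y : ℚ, x ^ 2 - d * y ^ 2 ≠ -1) :
    ∃ t z : ℤ, (1 + (e : k)) ^ 2 = (t + 2) * (e : k) ∧ (t + 2) * (t - 2) = d * z ^ 2 := by
  obtain ⟨x, y, hxy⟩ := exists_eq_algebraMap_add_algebraMap_mul
    (notMem_range_algebraMap_of_sq_eq hd hr) (e : k)
  have hone := sq_sub_mul_sq_eq_one_of_unit e hd hr hneg hxy
  have hquad : (e : k) ^ 2 + 1 = algebraMap ℚ k (2 * x) * (e : k) := by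
    have hone' := congrArg (algebraMap ℚ k) hone
    simp only [map_sub, map_mul, map_pow, map_intCast, map_one] at hone'
    rw [hxy, map_mul, map_ofNat]
    linear_combination (algebraMap ℚ k y) ^ 2 * hr - hone'
  have htrace : ((e + (e⁻¹ : (𝓞 k)ˣ) : 𝓞 k) : k) = algebraMap ℚ k (2 * x) := by
    have hinv : (e : k) * ((e⁻¹ : (𝓞 k)ˣ) : k) = 1 := by rw [← map_mul, Units.mul_inv, map_one]
    refine mul_left_cancel₀ (left_ne_zero_of_mul_eq_one hinv) ?_
    rw [RingOfIntegers.coe_eq_algebraMap, map_add]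
    linear_combination hquad + hinv
  obtain ⟨t, ht⟩ := exists_eq_intCast_of_coe_eq_algebraMap htrace
  obtain ⟨z, hz⟩ : IsSquare (d * (t ^ 2 - 4)) := Rat.isSquare_intCast_iff.1
    ⟨d * (2 * y), by push_cast; rw [← ht]; linear_combination 4 * (d : ℚ) * hone⟩
  obtain ⟨z, rfl⟩ : d ∣ z := (hdsq.dvd_pow_iff_dvd two_ne_zero).1 ⟨t ^ 2 - 4, by rw [hz, sq]⟩
  have hd₀ : d ≠ 0 := fun h ↦ hd ⟨0, h⟩
  refine ⟨t, z, ?_, mul_left_cancel₀ hd₀ (by linear_combination hz)⟩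
  rw [ht, map_intCast] at hquad
  linear_combination hquad

theorem exists_sq_eq_intCast_mul_unit {p : ℕ} (hp : p.Prime) (hp4 : p % 4 = 3)
    (hr : r ^ 2 = p) :
    ∃ c : ℤ, (c.natAbs = 1 ∨ c.natAbs = 2) ∧ ∃ f : k, f ^ 2 = c * (e : k) := by
  obtain ⟨t, z, he, htz⟩ := exists_one_add_unit_sq_eq e (d := p)
    (not_isSquare_of_emod_four (by lia)) (Int.squarefree_natCast.2 hp.squarefree)
    (by exact_mod_cast hr) (by exact_mod_cast sq_sub_prime_mul_sq_ne_neg_one hp hp4)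
  by_cases ht : t + 2 = 0
  · have ht' : (t + 2 : k) = 0 := by exact_mod_cast ht
    rw [ht', zero_mul, sq_eq_zero_iff] at he
    exact ⟨-1, .inl rfl, 1, by push_cast; linear_combination he⟩
  obtain ⟨ε, s, -, hε, hεp, hs, -⟩ :=
    exists_squarefree_mul_sq (Int.squarefree_natCast.2 hp.squarefree) ht htz
  have hs' : (t + 2 : k) = ε * s ^ 2 := by exact_mod_cast hs
  have hs₀ : (s : k) ≠ 0 := fun h ↦ ht (by rw [hs, Int.cast_eq_zero.1 h]; ring)
  have hεe : ((1 + (e : k)) / s) ^ 2 = ε * (e : k) := by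
    rw [div_pow, he, hs']
    field_simp
  obtain ⟨c, hc, rfl | rfl⟩ := exists_eq_or_eq_mul_of_dvd_two_mul_prime hp <|
    dvd_two_mul_of_squarefree_of_dvd_four_mul hε (hεp.trans ⟨1, by ring⟩)
  · exact ⟨ε, hc, _, hεe⟩
  · refine ⟨c, hc, (1 + (e : k)) / s / r, ?_⟩
    rw [div_pow _ r, hεe, hr]
    push_cast
    have : (p : k) ≠ 0 := by exact_mod_cast hp.ne_zero
    field_simp

end UnitsOfQuadraticField

section SqrtTwo

variable {k F : Type*} [Field k] [CharZero k] [Field F] [Algebra k F]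
  [Algebra.IsQuadraticExtension k F] {s : F} (hs : s ^ 2 = 2) (hsk : s ∉ (algebraMap k F).range)
include hs hsk

theorem norm_algebraMap_add_algebraMap_mul_of_sq_eq_two (x y : k) :
    Algebra.norm k (algebraMap k F x + algebraMap k F y * s) = x ^ 2 - 2 * y ^ 2 :=
  norm_algebraMap_add_algebraMap_mul (by rw [hs, map_ofNat]) hsk x y

theorem exists_norm_eq_or_eq_neg {c : ℤ} (hc : c.natAbs = 1 ∨ c.natAbs = 2) {e f : k}
    (hf : f ^ 2 = c * e) :
    ∃ a : F, (a ^ 2 = algebraMap k F e ∨ a ^ 2 = -algebraMap k F e) ∧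
      (Algebra.norm k a = e ∨ Algebra.norm k a = -e) := by
  have := charZero_of_injective_algebraMap (algebraMap k F).injective
  have hnorm := norm_algebraMap_add_algebraMap_mul_of_sq_eq_two hs hsk
  have hfF := congrArg (algebraMap k F) hf
  rw [map_pow, map_mul, map_intCast] at hfF
  obtain hc | hc := hc <;> obtain rfl | rfl := Int.natAbs_eq_iff.1 hc
  · exact ⟨_, .inl (by simpa using hfF), .inl (by simpa [hf] using hnorm f 0)⟩
  · exact ⟨_, .inr (by simpa using hfF), .inr (by simpa [hf] using hnorm f 0)⟩
  all_goals
    push_cast at hf hfF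
    have hnorm' := hnorm 0 (f / 2)
    simp only [map_zero, zero_add, map_div₀, map_ofNat] at hnorm'
  · refine ⟨_, .inl ?_, .inr (hnorm'.trans ?_)⟩
    · linear_combination hfF / 2 + (algebraMap k F f) ^ 2 / 4 * hs
    · linear_combination -hf / 2
  · refine ⟨_, .inr ?_, .inl (hnorm'.trans ?_)⟩
    · linear_combination hfF / 2 + (algebraMap k F f) ^ 2 / 4 * hs
    · linear_combination -hf / 2

end SqrtTwo

theorem exists_ringOfIntegers_norm_eq_unit {k F : Type*} [Field k] [NumberField k] [Field F]
    [Algebra k F] [Algebra.IsQuadraticExtension k F] {s : F} (hs : s ^ 2 = 2)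
    (hsk : s ∉ (algebraMap k F).range) {c : ℤ} (hc : c.natAbs = 1 ∨ c.natAbs = 2)
    {e : (𝓞 k)ˣ} {f : k} (hf : f ^ 2 = c * (e : k)) : ∃ v : 𝓞 F, RingOfIntegers.norm k v = e := by
  obtain ⟨a, ha, hnorm⟩ := exists_norm_eq_or_eq_neg hs hsk hc hf
  have hint : IsIntegral ℤ a := .of_pow two_pos <| by
    have he : IsIntegral ℤ (algebraMap k F (e : k)) := (e : 𝓞 k).isIntegral_coe.algebraMap
    obtain ha | ha := ha <;> rw [ha]
    exacts [he, he.neg]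
  have hsint : IsIntegral ℤ s := .of_pow two_pos (by rw [hs]; exact isIntegral_natCast 2)
  obtain ⟨a, rfl⟩ : ∃ a' : 𝓞 F, (a' : F) = a := ⟨⟨a, hint⟩, rfl⟩
  obtain ⟨δ, rfl⟩ : ∃ δ : 𝓞 F, (δ : F) = s := ⟨⟨s, hsint⟩, rfl⟩
  obtain h | h := hnorm
  · exact ⟨a, RingOfIntegers.ext (by rw [RingOfIntegers.coe_norm, h])⟩
  · refine ⟨a * (1 + δ), RingOfIntegers.ext ?_⟩
    have hδ := norm_algebraMap_add_algebraMap_mul_of_sq_eq_two hs hsk 1 1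
    rw [map_one, one_mul] at hδ
    rw [RingOfIntegers.coe_norm, RingOfIntegers.coe_eq_algebraMap, map_mul, map_mul, h, map_add,
      map_one, hδ]
    ring

theorem notMem_range_algebraMap_of_sq_eq_two {k F : Type*} [Field k] [CharZero k]
    [Algebra.IsQuadraticExtension ℚ k] {r : k} {p : ℕ} (hp : p.Prime) (hr : r ^ 2 = p)
    (hp2 : p ≠ 2) [Field F] [Algebra k F] {s : F} (hs : s ^ 2 = 2) :
    s ∉ (algebraMap k F).range := by
  rintro ⟨a, rfl⟩
  have ha : a ^ 2 = algebraMap ℚ k 2 := by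
    apply (algebraMap k F).injective
    rw [map_pow, hs, map_ofNat, map_ofNat]
  have hrQ := notMem_range_algebraMap_of_sq_eq (d := p)
    (Nat.prime_iff_prime_int.1 hp).irreducible.not_isSquare (r := r) (by simpa using hr)
  obtain ⟨x, hx | hx⟩ := exists_sq_eq_or_mul_sq_eq (d := (p : ℚ)) (by simpa using hr) hrQ ha
  · exact not_isSquare_two_s9 (Rat.isSquare_intCast_iff.1 ⟨x, by simp [← hx, sq]⟩)
  · have hodd := hp.eq_two_or_odd.resolve_left hp2
    exact not_isSquare_of_emod_four (d := 2 * p) (.inl (by lia))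
      (Rat.isSquare_intCast_iff.1 ⟨p * x, by push_cast; linear_combination -(p : ℚ) * hx⟩)

section Biquadratic

variable {k F : Type} [Field k] [NumberField k] [Algebra.IsQuadraticExtension ℚ k] [Field F]
  [NumberField F] [Algebra k F] [Algebra.IsQuadraticExtension k F] {p : ℕ} (hp : p.Prime)
  (hp8 : p % 8 = 7) {r : k} (hr : r ^ 2 = p) {s : F} (hs : s ^ 2 = 2)
include hp hp8 hr hs

theorem isPrincipal_of_ramificationIdx_ne_one_of_biquadratic {P : Ideal (𝓞 F)} [P.IsPrime]
    (hP : P ≠ ⊥) (hram : P.ramificationIdx (𝓞 k) ≠ 1) : P.IsPrincipal := by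
  have hsk := notMem_range_algebraMap_of_sq_eq_two (F := F) hp hr (by lia) hs
  have hsint : IsIntegral ℤ s := .of_pow two_pos (by rw [hs]; exact isIntegral_natCast 2)
  have hrint : IsIntegral ℤ r := .of_pow two_pos (by rw [hr]; exact isIntegral_natCast p)
  obtain ⟨δ, rfl⟩ : ∃ δ : 𝓞 F, (δ : F) = s := ⟨⟨s, hsint⟩, rfl⟩
  obtain ⟨ρ, rfl⟩ : ∃ ρ : 𝓞 k, (ρ : k) = r := ⟨⟨r, hrint⟩, rfl⟩
  have hδ : δ ^ 2 = 2 := RingOfIntegers.ext hs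
  have hρ : ρ ^ 2 = p := RingOfIntegers.ext (by simpa using hr)
  have h2 : (2 : 𝓞 F) ∈ P := by
    have h2δ : 2 * δ ∈ P :=
      two_mul_mem_of_ramificationIdx_ne_one (d := (2 : k)) (by rw [hs, map_ofNat]) hsk hP hram
    refine Ideal.IsPrime.mem_of_pow_mem inferInstance 2 ?_
    convert P.mul_mem_right δ h2δ using 1
    linear_combination -2 * hδ
  obtain ⟨β, hβ⟩ := exists_pow_four_associated_two (ρ := algebraMap (𝓞 k) (𝓞 F) ρ) hδ hp
    (by rw [← map_pow, hρ, map_natCast]) hp8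
  have hβP : β ∈ P :=
    Ideal.IsPrime.mem_of_pow_mem inferInstance 4 (P.mem_of_dvd hβ.symm.dvd h2)
  have hrank : Module.finrank ℚ F = 4 := by
    rw [← Module.finrank_mul_finrank ℚ k F, Algebra.IsQuadraticExtension.finrank_eq_two,
      Algebra.IsQuadraticExtension.finrank_eq_two]
  refine isPrincipal_of_mem_of_norm_prime hβP ?_
  rw [natAbs_norm_eq_of_pow_finrank_associated (q := 2) (by simpa [hrank] using hβ)]
  exact Nat.prime_two

theorem odd_classNumber_of_biquadratic : Odd (classNumber F) := by
  refine odd_classNumber_of_isQuadraticExtension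
    (odd_classNumber_of_sq_eq_prime hp (by lia) hr)
    (fun P _ ↦ isPrincipal_of_ramificationIdx_ne_one_of_biquadratic hp hp8 hr hs) fun u _ ↦ ?_
  obtain ⟨c, hc, f, hf⟩ := exists_sq_eq_intCast_mul_unit u hp (by lia) hr
  exact exists_ringOfIntegers_norm_eq_unit hs
    (notMem_range_algebraMap_of_sq_eq_two hp hr (by lia) hs) hc hf

end Biquadratic

theorem isQuadraticExtension_and_exists_sq_eq {M : Type*} [Field M] [CharZero M]
    {L : IntermediateField ℚ M} {x : M} (hL : L = ℚ⟮x⟯) {d : ℤ} (hd : ¬ IsSquare d)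
    (hx : x ^ 2 = d) : Algebra.IsQuadraticExtension ℚ L ∧ ∃ r : L, r ^ 2 = d :=
  ⟨isQuadraticExtension_of_eq_adjoin_simple (d := (d : ℚ)) hL (by simpa using hx)
    (notMem_range_algebraMap_of_sq_eq hd hx),
    ⟨x, hL ▸ mem_adjoin_simple_self ℚ x⟩, Subtype.ext (by simpa using hx)⟩

theorem odd_classNumber_of_eq_adjoin_pair {M : Type} [Field M] [CharZero M]
    {F : IntermediateField ℚ M} [NumberField F] {s r : M} (hF : F = adjoin ℚ {s, r}) {p : ℕ}
    (hp : p.Prime) (hp8 : p % 8 = 7) (hs : s ^ 2 = 2) (hr : r ^ 2 = p) :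
    Odd (classNumber F) := by
  have hp' : ¬ IsSquare (p : ℤ) := (Nat.prime_iff_prime_int.1 hp).irreducible.not_isSquare
  obtain ⟨hk, x, hx⟩ := isQuadraticExtension_and_exists_sq_eq (L := ℚ⟮r⟯) rfl hp'
    (by exact_mod_cast hr)
  have hsub : ℚ⟮r⟯ ≤ F := by
    rw [hF]
    exact adjoin.mono ℚ _ _ (by simp)
  have hE : extendScalars hsub = adjoin ℚ⟮r⟯ {s} := by
    apply restrictScalars_injective ℚ
    exact hF.trans ((adjoin_simple_adjoin_simple ℚ r s).trans (by rw [Set.pair_comm])).symm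
  have hxp : x ^ 2 = p := by exact_mod_cast hx
  have : NumberField ℚ⟮r⟯ := {}
  have : NumberField (extendScalars hsub) := inferInstanceAs (NumberField F)
  have := isQuadraticExtension_of_eq_adjoin_simple (d := 2) hE (by rw [hs, map_ofNat])
    (notMem_range_algebraMap_of_sq_eq_two hp hxp (by lia) hs)
  exact odd_classNumber_of_biquadratic (F := extendScalars hsub) hp hp8 hxp
    (s := ⟨s, by rw [hE]; exact mem_adjoin_simple_self _ s⟩) (Subtype.ext hs)

theorem classNumbers_of_quadratic_subfields_odd_general
    (p : ℕ) (hp : p.Prime) (hmod : p % 8 = 7)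
    (k k' k₀ F : IntermediateField ℚ ℝ)
    (hk : k = ℚ⟮Real.sqrt p⟯)
    (hk' : k' = ℚ⟮Real.sqrt (2 * p)⟯)
    (hk₀ : k₀ = ℚ⟮Real.sqrt 2⟯)
    (hF : F = IntermediateField.adjoin ℚ {Real.sqrt 2, Real.sqrt p})
    [NumberField k] [NumberField k'] [NumberField k₀] [NumberField F] :
    Odd (classNumber k) ∧ Odd (classNumber k') ∧ Odd (classNumber k₀) ∧
      Odd (classNumber F) := by
  have hp4 : p % 4 = 3 := by lia
  have hsqrt2 : Real.sqrt 2 ^ 2 = 2 := Real.sq_sqrt (by positivity)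
  have hsqrtp : Real.sqrt p ^ 2 = p := Real.sq_sqrt (by positivity)
  have hsqrt2p : Real.sqrt (2 * p) ^ 2 = 2 * p := Real.sq_sqrt (by positivity)
  obtain ⟨_, x, hx⟩ := isQuadraticExtension_and_exists_sq_eq (d := p) hk
    (not_isSquare_of_emod_four (by lia)) (by simp)
  obtain ⟨_, y, hy⟩ := isQuadraticExtension_and_exists_sq_eq (d := 2 * p) hk'
    (not_isSquare_of_emod_four (by lia)) (by simpa using hsqrt2p)
  obtain ⟨_, z, hz⟩ := isQuadraticExtension_and_exists_sq_eq (d := 2) hk₀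
    (not_isSquare_of_emod_four (by lia)) (by simp)
  exact ⟨odd_classNumber_of_sq_eq_prime hp hp4 (by exact_mod_cast hx),
    odd_classNumber_of_sq_eq_two_mul_prime hp hp4 (by exact_mod_cast hy),
    odd_classNumber_of_sq_eq_two (by exact_mod_cast hz),
    odd_classNumber_of_eq_adjoin_pair hF hp hmod hsqrt2 hsqrtp⟩

/-- For a prime `p ≡ -1 (mod 16)`, the class numbers of the quadratic
fields `ℚ(√p)`, `ℚ(√(2p))`, `ℚ(√2)` and of the biquadratic field `F = ℚ(√2, √p)`
(all realized inside `ℝ`) are all odd. -/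
theorem classNumbers_of_quadratic_subfields_odd
    (p : ℕ) (hp : p.Prime) (hmod : p % 16 = 15)
    (k k' k₀ F : IntermediateField ℚ ℝ)
    (hk : k = ℚ⟮Real.sqrt p⟯)
    (hk' : k' = ℚ⟮Real.sqrt (2 * p)⟯)
    (hk₀ : k₀ = ℚ⟮Real.sqrt 2⟯)
    (hF : F = IntermediateField.adjoin ℚ {Real.sqrt 2, Real.sqrt p})
    [NumberField k] [NumberField k'] [NumberField k₀] [NumberField F] :
    Odd (classNumber k) ∧ Odd (classNumber k') ∧ Odd (classNumber k₀) ∧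
      Odd (classNumber F) := by
  exact classNumbers_of_quadratic_subfields_odd_general p hp (by lia) k k' k₀ F hk hk' hk₀ hF
end
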